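/- arXiv:2310.00292 — 2 statements merged into one kernel-verified Lean document; each statement's English description precedes it below -/
import Mathlib

section
/- Let n ≥ 2 and let μ = f·Lⁿ ∈ 𝒲(ℝⁿ) be a PS measure. Then either f = 0 Lⁿ-a.e., or for every orthonormal basis {e_1, …, e_n} of ℝⁿ there exist functions f_1, …, f_n ∈ L¹(ℝ) ∩ W^{1,1}_loc(ℝ) with f_i > 0 on ℝ such that f(Σ_{i=1}^n x_i e_i) = Π_{i=1}^n f_i(x_i) for Lⁿ-a.e. (x_1, …, x_n); in particular, in the latter case the precise representative of f is continuous and strictly positive on ℝⁿ. -/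
/-!
The proof shows more: a nonzero PS density is a Gaussian
`f(x) = C exp (κ |x|² / 2 + ⟨b, x⟩)` with `κ < 0`, which splits in every orthonormal basis.

*First variation.* Let `v, w` be orthogonal unit vectors and `π` the projection along `v`. The
superlevel sets of `x ↦ ⟨x, w⟩ + ε θ(πx) g(⟨x, v⟩)` are small perturbations of half-spaces, and
half-spaces in direction `w` are unchanged by symmetrization along `v` (up to a set of measure zero
for `f`). The PS inequality for these sets is integrated over all levels; the perimeters on the
right are bounded by the coarea-type estimate `coarea_bound`. As
`|w + εp| = 1 + ε ⟨p, w⟩ + O(ε²)`, the term of order `ε` has a sign (`variation_ineq`), and replacing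
`w` by `-w` turns it into an equality. Since `θ` is arbitrary, on almost every `v`-line `∂_w f` is
orthogonal to the difference `dlt` between the symmetrized profile and `g` (`fibre_variation`).

*Transport on a line.* Let `φ = f` and `ψ = ∂_w f` on such a line. Letting `g` tend to the indicator
of `(a, b) ∪ (d, ∞)` shows that replacing `(a, b)` by an interval `(c, d)` of equal `φ`-mass does not
change the integral of `ψ` (`transport`). Differentiating at Lebesgue points shows that `ψ` is
proportional to `φ` (`fibre_proportional`).

*Gaussian form.* Consequently, for almost all `x, y`, the vector `f(x) f'(y) - f(y) f'(x)` is parallel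
to `y - x` (`two_point`). Comparing `y` with two fixed points, which generically do not lie on a
common line with `y` as `n ≥ 2`, forces `f' = f (κ x + b)` (`log_grad_affine`). Hence
`f exp (-κ |x|² / 2 - ⟨b, x⟩)` has zero weak gradient and is constant (`eq_exp_quad`), and
integrability gives `κ < 0` (`kappa_neg`).
-/

open MeasureTheory Set Filter
open scoped ENNReal RealInnerProductSpace Topology

noncomputable section

/-- Euclidean space ℝⁿ. -/
abbrev En (n : ℕ) := EuclideanSpace ℝ (Fin n)

/-- Divergence of a vector field on ℝⁿ. -/
noncomputable def dvg {n : ℕ} (φ : En n → En n) (x : En n) : ℝ :=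
  ∑ i : Fin n, fderiv ℝ φ x (EuclideanSpace.single i 1) i

/-- `f'` is the (weak) gradient of `f`, and both are locally integrable;
this encodes `f ∈ W^{1,1}_loc(ℝⁿ)` with weak gradient `∇f = f'`. -/
def HasWeakGrad {n : ℕ} (f : En n → ℝ) (f' : En n → En n) : Prop :=
  LocallyIntegrable f volume ∧ LocallyIntegrable f' volume ∧
    ∀ φ : En n → En n, ContDiff ℝ 1 φ → HasCompactSupport φ →
      (∫ x, f x * dvg φ x) = - ∫ x, ⟪φ x, f' x⟫

/-- Membership of `μ = f·Lⁿ` in the class `𝒲(ℝⁿ)`: the density `f` is non-negative,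
integrable and lies in `W^{1,1}_loc(ℝⁿ)` with weak gradient `f'`. -/
def MemW {n : ℕ} (f : En n → ℝ) (f' : En n → En n) : Prop :=
  (∀ x, 0 ≤ f x) ∧ Integrable f volume ∧ HasWeakGrad f f'

/-- Admissible test vector fields: `C¹`, compactly supported in `U`, sup-norm at most 1. -/
def IsTestField {n : ℕ} (U : Set (En n)) (φ : En n → En n) : Prop :=
  ContDiff ℝ 1 φ ∧ HasCompactSupport φ ∧ tsupport φ ⊆ U ∧ ∀ x, ‖φ x‖ ≤ 1

/-- The weighted variation `‖g‖_{BV_μ(U)}` (valued in `ℝ≥0∞`;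
membership in `BV_μ(U)` means that this quantity is finite). -/
noncomputable def bvVar {n : ℕ} (f : En n → ℝ) (f' : En n → En n) (U : Set (En n))
    (g : En n → ℝ) : ℝ≥0∞ :=
  ⨆ (φ : En n → En n) (_ : IsTestField U φ),
    ENNReal.ofReal (∫ x in U, g x * (f x * dvg φ x + ⟪φ x, f' x⟫))

/-- The weighted perimeter `Per_μ(E; U)`. -/
noncomputable def perim {n : ℕ} (f : En n → ℝ) (f' : En n → En n) (U : Set (En n))
    (E : Set (En n)) : ℝ≥0∞ :=
  bvVar f f' U (E.indicator fun _ => (1 : ℝ))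

/-- The measure `μ = f·Lⁿ`. -/
noncomputable def muM {n : ℕ} (f : En n → ℝ) : Measure (En n) :=
  volume.withDensity fun x => ENNReal.ofReal (f x)

/-- One-dimensional generalized Ehrhard symmetrization of `A ⊆ ℝ` in direction `v ∈ {−1,+1}`
with respect to a measure `ν` on `ℝ`: the largest half-line `{t : v·t ≥ c}` of `ν`-measure
`ν A` (with the conventions `∅`, `ℝ` when `c = ±∞`). -/
def ehrhard1D (ν : Measure ℝ) (v : ℝ) (A : Set ℝ) : Set ℝ :=
  {t | ∀ b : ℝ, (∀ c : ℝ, ν {y | c ≤ v * y} ≤ ν A → b ≤ c) → b ≤ v * t}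

/-- The weighted measure `f·H¹` on the fiber `{x + t·v : t ∈ ℝ}`, identified with `ℝ`. -/
noncomputable def fiberMeasure {n : ℕ} (f : En n → ℝ) (x v : En n) : Measure ℝ :=
  (volume : Measure ℝ).withDensity fun t => ENNReal.ofReal (f (x + t • v))

/-- Generalized `v`-Ehrhard symmetrization of `E ⊆ ℝⁿ` with respect to `μ = f·Lⁿ`:
on each fiber over `v^⊥` one replaces `E` by the largest half-line in direction `v`
of the same weighted measure. -/
def ehrhardSymm {n : ℕ} (f : En n → ℝ) (v : En n) (E : Set (En n)) : Set (En n) :=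
  {z | ⟪z, v⟫ ∈
      ehrhard1D (fiberMeasure f (z - ⟪z, v⟫ • v) v) 1
        {t | (z - ⟪z, v⟫ • v) + t • v ∈ E}}

/-- `μ = f·Lⁿ` is a perimeter symmetrization (PS) measure: generalized Ehrhard
symmetrization does not increase the weighted perimeter of sets of finite `μ`-perimeter. -/
def IsPSMeasure {n : ℕ} (f : En n → ℝ) (f' : En n → En n) : Prop :=
  ∀ v : En n, ‖v‖ = 1 → ∀ E : Set (En n), NullMeasurableSet E volume →
    perim f f' univ E < ⊤ →
      perim f f' univ (ehrhardSymm f v E) ≤ perim f f' univ E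

/-- The half-space `H(v, r) = {x : x·v ≥ r}`. -/
def halfSpace {n : ℕ} (v : En n) (r : ℝ) : Set (En n) := {x | r ≤ ⟪x, v⟫}

/-- `H_μ(E, v)`: the largest half-space in direction `v` with `μ`-measure `μ(E)`. -/
def halfSpaceOf {n : ℕ} (f : En n → ℝ) (E : Set (En n)) (v : En n) : Set (En n) :=
  {x | ∀ b : ℝ, (∀ c : ℝ, muM f (halfSpace v c) ≤ muM f E → b ≤ c) → b ≤ ⟪x, v⟫}

/-- `g'` is the weak derivative of `g : ℝ → ℝ` (so `g ∈ W^{1,1}_loc(ℝ)`). -/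
def HasWeakDeriv (g g' : ℝ → ℝ) : Prop :=
  LocallyIntegrable g volume ∧ LocallyIntegrable g' volume ∧
    ∀ φ : ℝ → ℝ, ContDiff ℝ 1 φ → HasCompactSupport φ →
      (∫ t, g t * deriv φ t) = - ∫ t, φ t * g' t

/-! ### Lines in a fixed direction -/

lemma ae_prod_add_smul {n : ℕ} (v : En n) {P : En n → Prop} (h : ∀ᵐ x, P x) :
    ∀ᵐ q : En n × ℝ, P (q.1 + q.2 • v) := by
  have hq : Measure.QuasiMeasurePreserving (fun q : En n × ℝ => q.1 + q.2 • v) := by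
    refine ⟨by fun_prop, ?_⟩
    refine Measure.AbsolutelyContinuous.mk fun N hN h0 => ?_
    rw [Measure.map_apply (by fun_prop) hN, Measure.volume_eq_prod,
      Measure.prod_apply_symm ((by fun_prop : Measurable (fun q : En n × ℝ => q.1 + q.2 • v)) hN)]
    simp only [preimage_preimage]
    rw [lintegral_eq_zero_of_ae_eq_zero]
    refine Eventually.of_forall fun s => ?_
    have := measure_preimage_add_right (volume : Measure (En n)) (s • v) N
    simp only [Pi.zero_apply]
    rw [← h0, ← this]
  exact hq.ae h

/-- A property holding almost everywhere holds almost everywhere on almost every `v`-line. -/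
lemma ae_line {n : ℕ} (v : En n) {P : En n → Prop} (h : ∀ᵐ x, P x) :
    ∀ᵐ z : En n, ∀ᵐ s : ℝ, P (z + s • v) :=
  Measure.ae_ae_of_ae_prod (ae_prod_add_smul v h)

/-- Converse of `ae_line` for measurable properties. -/
lemma ae_of_line {n : ℕ} (v : En n) {P : En n → Prop} (hP : MeasurableSet {x | P x})
    (h : ∀ᵐ z : En n, ∀ᵐ s : ℝ, P (z + s • v)) : ∀ᵐ x, P x := by
  have hm : Measurable (fun q : En n × ℝ => q.1 + q.2 • v) := by fun_prop
  have h2 := (Measure.ae_ae_comm (μ := (volume : Measure (En n))) (ν := (volume : Measure ℝ))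
    (p := fun z s => P (z + s • v)) (hm hP)).1 h
  obtain ⟨s, hs⟩ := h2.exists
  have := (measurePreserving_add_right (volume : Measure (En n)) (-(s • v))).quasiMeasurePreserving.ae hs
  filter_upwards [this] with x hx
  simpa using hx

lemma shear_mp {n : ℕ} (v : En n) :
    MeasurePreserving (fun q : En n × ℝ => (q.1 + q.2 • v, q.2)) := by
  have h := MeasurePreserving.skew_product (MeasurePreserving.id (volume : Measure ℝ))
    (g := fun s (z : En n) => z + s • v) (μc := volume) (μd := volume) (by fun_prop)
    (Eventually.of_forall fun s => (measurePreserving_add_right volume (s • v)).map_eq)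
  exact (Measure.measurePreserving_swap.comp h).comp Measure.measurePreserving_swap

/-- Product integrability along `v`-lines, by invariance under the shear `(z, s) ↦ (z + s v, s)`. -/
lemma integrable_line {n : ℕ} (v : En n) {g : En n → ℝ} (hg : Integrable g) {χ : ℝ → ℝ}
    (hχ : Integrable χ) :
    Integrable (fun q : En n × ℝ => χ q.2 * g (q.1 + q.2 • v)) := by
  have h := (shear_mp v).integrable_comp_of_integrable (hg.mul_prod hχ)
  refine h.congr (Eventually.of_forall fun q => ?_)
  simp [mul_comm]

/-- On almost every line, a locally integrable function is locally integrable. -/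
lemma locallyIntegrable_line {n : ℕ} (v : En n) {g : En n → ℝ} (hg : LocallyIntegrable g) :
    ∀ᵐ z : En n, LocallyIntegrable (fun s : ℝ => g (z + s • v)) := by
  have key : ∀ N : ℕ, ∀ᵐ z : En n, ‖z‖ ≤ N →
      IntegrableOn (fun s : ℝ => g (z + s • v)) (Icc (-(N : ℝ)) N) := by
    intro N
    set K := Metric.closedBall (0 : En n) (N + N * ‖v‖)
    have h1 : Integrable (K.indicator g) :=
      (integrable_indicator_iff Metric.isClosed_closedBall.measurableSet).2
        (hg.integrableOn_isCompact (isCompact_closedBall _ _))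
    have h2 : Integrable ((Icc (-(N : ℝ)) N).indicator (fun _ => (1 : ℝ))) := by
      rw [integrable_indicator_iff measurableSet_Icc]
      exact integrableOn_const (by simp)
    have h3 := (integrable_line v h1 h2)
    rw [Measure.volume_eq_prod] at h3
    filter_upwards [h3.prod_right_ae] with z hz hzN
    rw [← integrable_indicator_iff measurableSet_Icc]
    refine hz.congr (Eventually.of_forall fun s => ?_)
    by_cases hs : s ∈ Icc (-(N : ℝ)) N
    · have : z + s • v ∈ K := by
        simp only [K, mem_closedBall_zero_iff]
        refine (norm_add_le _ _).trans ?_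
        rw [norm_smul, Real.norm_eq_abs]
        have : |s| ≤ N := abs_le.2 hs
        gcongr
      simp [hs, this]
    · simp [hs]
  filter_upwards [ae_all_iff.2 key] with z hz
  rw [locallyIntegrable_iff]
  intro k hk
  obtain ⟨C, hC⟩ := hk.isBounded.exists_norm_le
  obtain ⟨N, hN⟩ := exists_nat_ge (max C ‖z‖)
  refine (hz N ((le_max_right _ _).trans hN)).mono_set fun s hs => ?_
  exact abs_le.1 ((hC s hs).trans ((le_max_left _ _).trans hN))

/-- An integrable function is integrable on almost every line in direction `v`. -/
lemma integrable_line' {n : ℕ} {v : En n} (hv : ‖v‖ = 1) {g : En n → ℝ} (hg : Integrable g) :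
    ∀ᵐ z : En n, Integrable (fun s : ℝ => g (z + s • v)) := by
  -- multiply by a cutoff in the coordinate `⟪z, v⟫` of the base point, which is
  -- the coordinate of `z + s • v` minus `s`
  have key : ∀ N : ℕ, ∀ᵐ z : En n, |⟪z, v⟫| ≤ N → Integrable (fun s : ℝ => g (z + s • v)) := by
    intro N
    set χ := (Icc (-(N : ℝ)) N).indicator (fun _ => (1 : ℝ))
    have h2 : Integrable χ := by
      rw [integrable_indicator_iff measurableSet_Icc]
      exact integrableOn_const (by simp)
    have hmp : MeasurePreserving (fun q : En n × ℝ => (q.1, ⟪q.1, v⟫ - q.2)) := by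
      refine MeasurePreserving.skew_product (MeasurePreserving.id (volume : Measure (En n)))
        (g := fun (z : En n) (s : ℝ) => ⟪z, v⟫ - s) (μc := volume) (μd := volume) ?_
        (Eventually.of_forall fun z => (Measure.measurePreserving_sub_left volume _).map_eq)
      show Measurable fun q : En n × ℝ => ⟪q.1, v⟫ - q.2
      fun_prop
    have h3 := (shear_mp v).integrable_comp_of_integrable
      (hmp.integrable_comp_of_integrable (hg.mul_prod h2))
    rw [Measure.volume_eq_prod] at h3
    filter_upwards [h3.prod_right_ae] with z hz hzN
    refine hz.congr (Eventually.of_forall fun s => ?_)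
    have : ⟪z + s • v, v⟫ - s = ⟪z, v⟫ := by
      rw [inner_add_left, inner_smul_left, real_inner_self_eq_norm_sq, hv]; simp
    simp only [Function.comp, this]
    simp [χ, abs_le.1 hzN]
  filter_upwards [ae_all_iff.2 key] with z hz
  obtain ⟨N, hN⟩ := exists_nat_ge |⟪z, v⟫|
  exact hz N hN

/-! ### Integration by parts and translations -/

lemma dvg_smul {n : ℕ} {P : En n → ℝ} {φ : En n → En n} {x : En n}
    (hP : DifferentiableAt ℝ P x) (hφ : DifferentiableAt ℝ φ x) :
    dvg (fun x => P x • φ x) x = P x * dvg φ x + fderiv ℝ P x (φ x) := by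
  have h : fderiv ℝ P x (φ x) = ∑ i, fderiv ℝ P x (EuclideanSpace.single i 1) * φ x i := by
    conv_lhs => rw [← (EuclideanSpace.basisFun (Fin n) ℝ).sum_repr (φ x)]
    simp [mul_comm]
  simp only [dvg, fderiv_fun_smul hP hφ, h, Finset.mul_sum, ← Finset.sum_add_distrib]
  simp

lemma dvg_const {n : ℕ} (w x : En n) : dvg (fun _ => w) x = 0 := by
  simp [dvg]

lemma continuous_dvg {n : ℕ} {φ : En n → En n} (hφ : ContDiff ℝ 1 φ) : Continuous (dvg φ) := by
  unfold dvg
  have := hφ.continuous_fderiv (by simp)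
  fun_prop

lemma hasCompactSupport_dvg {n : ℕ} {φ : En n → En n} (hc : HasCompactSupport φ) :
    HasCompactSupport (dvg φ) := by
  refine hc.mono' (fun x hx => ?_)
  by_contra hx'
  apply hx
  have : fderiv ℝ φ x = 0 := by
    by_contra h0
    exact hx' (support_fderiv_subset ℝ h0)
  simp [dvg, this]

lemma integrable_mul_dvg {n : ℕ} {f : En n → ℝ} (hf : LocallyIntegrable f)
    {φ : En n → En n} (hφ : ContDiff ℝ 1 φ) (hc : HasCompactSupport φ) :
    Integrable (fun x => f x * dvg φ x) := by
  simpa using hf.integrable_smul_right_of_hasCompactSupport (continuous_dvg hφ)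
    (hasCompactSupport_dvg hc)

lemma integrable_inner_field {n : ℕ} {f' : En n → En n} (hf : LocallyIntegrable f')
    {φ : En n → En n} (hφ : Continuous φ) (hc : HasCompactSupport φ) :
    Integrable (fun x => ⟪φ x, f' x⟫) := by
  obtain ⟨C, hC⟩ := hφ.norm.bddAbove_range_of_hasCompactSupport hc.norm
  have hk : IsCompact (tsupport φ) := hc
  have := (hf.integrableOn_isCompact hk).norm.const_mul C
  have h2 : IntegrableOn (fun x => ⟪φ x, f' x⟫) (tsupport φ) := by
    refine this.mono' ?_ (Eventually.of_forall fun x => ?_)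
    · exact (hφ.aestronglyMeasurable).inner hf.aestronglyMeasurable.restrict
    · refine (norm_inner_le_norm _ _).trans ?_
      gcongr
      exact hC ⟨x, rfl⟩
  rw [← integrableOn_iff_integrable_of_support_subset (s := tsupport φ)]
  · exact h2
  · intro x hx
    apply subset_tsupport
    intro h0
    apply hx
    simp [h0]

/-- Integration by parts against a `C¹` function `P`. -/
lemma ibp_field {n : ℕ} {f : En n → ℝ} {f' : En n → En n} (hf : HasWeakGrad f f')
    {P : En n → ℝ} {φ : En n → En n} (hP : ContDiff ℝ 1 P) (hφ : ContDiff ℝ 1 φ)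
    (hc : HasCompactSupport φ) :
    ∫ x, P x * (f x * dvg φ x + ⟪φ x, f' x⟫) = - ∫ x, f x * fderiv ℝ P x (φ x) := by
  have hPφ : ContDiff ℝ 1 (fun x => P x • φ x) := hP.smul hφ
  have hPc : HasCompactSupport (fun x => P x • φ x) :=
    hc.mono fun x hx hx' => hx (by simp [hx'])
  have h := hf.2.2 _ hPφ hPc
  have hg : Continuous (fun x => fderiv ℝ P x (φ x)) :=
    (hP.continuous_fderiv (by simp)).clm_apply hφ.continuous
  have hgc : HasCompactSupport (fun x => fderiv ℝ P x (φ x)) := by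
    refine hc.mono (fun x hx hx' => hx ?_)
    simp [hx']
  have i1 : Integrable (fun x => f x * (P x * dvg φ x)) := by
    simpa using hf.1.integrable_smul_right_of_hasCompactSupport
      (hP.continuous.mul (continuous_dvg hφ)) (hasCompactSupport_dvg hc).mul_left
  have i2 : Integrable (fun x => f x * fderiv ℝ P x (φ x)) := by
    simpa using hf.1.integrable_smul_right_of_hasCompactSupport hg hgc
  have i3 := integrable_inner_field hf.2.1 hPφ.continuous hPc
  have e : ∀ x, f x * dvg (fun x => P x • φ x) x
      = f x * (P x * dvg φ x) + f x * fderiv ℝ P x (φ x) := fun x => by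
    rw [dvg_smul (hP.differentiable (by simp) x) (hφ.differentiable (by simp) x)]; ring
  simp only [e] at h
  rw [integral_add i1 i2] at h
  have e2 : ∀ x, P x * (f x * dvg φ x + ⟪φ x, f' x⟫)
      = f x * (P x * dvg φ x) + ⟪P x • φ x, f' x⟫ := fun x => by
    rw [real_inner_smul_left]; ring
  simp only [e2]
  rw [integral_add i1 i3]
  linarith

lemma ibp_dir {n : ℕ} {f : En n → ℝ} {f' : En n → En n} (hf : HasWeakGrad f f') (w : En n)
    {ψ : En n → ℝ} (hψ : ContDiff ℝ 1 ψ) (hc : HasCompactSupport ψ) :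
    ∫ x, f x * fderiv ℝ ψ x w = - ∫ x, ψ x * ⟪w, f' x⟫ := by
  have h := hf.2.2 (fun x => ψ x • w) (hψ.smul contDiff_const) (hc.smul_right)
  have e : ∀ x, dvg (fun x => ψ x • w) x = fderiv ℝ ψ x w := fun x => by
    rw [dvg_smul (hψ.differentiable (by simp) x) (differentiableAt_const _), dvg_const]; simp
  simpa only [e, real_inner_smul_left] using h

lemma integrable_line_loc {n : ℕ} (v : En n) {g : En n → ℝ} (hg : LocallyIntegrable g)
    {k : Set (En n)} (hk : IsCompact k) (h : ℝ) :
    Integrable (fun q : En n × ℝ => g (q.1 + q.2 • v))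
      ((volume.restrict k).prod (volume.restrict (Ioc 0 h))) := by
  obtain ⟨C, hC⟩ := hk.isBounded.exists_norm_le
  set K := Metric.closedBall (0 : En n) (C + h * ‖v‖)
  have h1 : Integrable (K.indicator g) :=
      (integrable_indicator_iff Metric.isClosed_closedBall.measurableSet).2
        (hg.integrableOn_isCompact (isCompact_closedBall _ _))
  have h2 : Integrable ((Ioc 0 h).indicator (fun _ => (1 : ℝ))) := by
    rw [integrable_indicator_iff measurableSet_Ioc]
    exact integrableOn_const (by simp)
  have h3 := (integrable_line v h1 h2)
  rw [Measure.prod_restrict]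
  have hm := hk.measurableSet.prod (measurableSet_Ioc (a := (0 : ℝ)) (b := h))
  refine (h3.integrableOn (s := k ×ˢ Ioc 0 h)).congr ?_
  filter_upwards [ae_restrict_mem hm] with q hq
  have : q.1 + q.2 • v ∈ K := by
    simp only [K, mem_closedBall_zero_iff]
    refine (norm_add_le _ _).trans ?_
    rw [norm_smul, Real.norm_eq_abs, abs_of_pos hq.2.1]
    have := hC _ hq.1
    have := hq.2.2
    gcongr
  simp [hq.2, this]

/-- Fundamental theorem of calculus along a direction for a function with a
weak directional derivative. -/
lemma weak_translation {n : ℕ} (w : En n) {g gw : En n → ℝ} (hg : LocallyIntegrable g)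
    (hgw : LocallyIntegrable gw)
    (hweak : ∀ ψ : En n → ℝ, ContDiff ℝ 1 ψ → HasCompactSupport ψ →
      ∫ x, g x * fderiv ℝ ψ x w = - ∫ x, ψ x * gw x) {h : ℝ} (hh : 0 ≤ h) :
    ∀ᵐ x, g (x + h • w) - g x = ∫ s in Ioc 0 h, gw (x + s • w) := by
  have hgh : LocallyIntegrable (fun x => g (x + h • w)) := by
    rw [locallyIntegrable_iff]
    intro k hk
    have h1 := (hg.integrableOn_isCompact (hk.image (continuous_add_const (h • w))))
    have := (measurePreserving_add_right (volume : Measure (En n)) (h • w)).integrableOn_comp_preimage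
      (Homeomorph.addRight (h • w)).measurableEmbedding (f := g) (s := (fun x => x + h • w) '' k)
    refine (this.2 h1).mono_set ?_
    exact subset_preimage_image _ _
  have hI : LocallyIntegrable (fun x => ∫ s in Ioc 0 h, gw (x + s • w)) := by
    rw [locallyIntegrable_iff]
    intro k hk
    exact (integrable_line_loc w hgw hk h).integral_prod_left
  refine ae_eq_of_integral_contDiff_smul_eq (hgh.sub hg) hI fun φ hφ hc => ?_
  have hφ1 : ContDiff ℝ 1 φ := hφ.of_le (by simp)
  simp only [smul_eq_mul]
  have hφc := hφ1.continuous
  have a1 : Integrable (fun x => φ x * g (x + h • w)) := by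
    simpa using hgh.integrable_smul_left_of_hasCompactSupport hφc hc
  have a2 : Integrable (fun x => φ x * g x) := by
    simpa using hg.integrable_smul_left_of_hasCompactSupport hφc hc
  have shift : ∀ (s : ℝ) (u : En n → ℝ), ∫ x, φ x * u (x + s • w) = ∫ x, φ (x - s • w) * u x := by
    intro s u
    rw [← integral_add_right_eq_self (fun x => φ (x - s • w) * u x) (s • w)]
    simp
  have R : ∫ x, φ x * ∫ s in Ioc 0 h, gw (x + s • w)
      = ∫ s in Ioc 0 h, ∫ x, φ x * gw (x + s • w) := by
    have hk : IsCompact (tsupport φ) := hc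
    have i1 := integrable_line_loc w hgw hk h
    obtain ⟨C, hC⟩ := hφc.norm.bddAbove_range_of_hasCompactSupport hc.norm
    have i2 : Integrable (fun q : En n × ℝ => φ q.1 * gw (q.1 + q.2 • w))
        ((volume.restrict (tsupport φ)).prod (volume.restrict (Ioc 0 h))) := by
      refine i1.bdd_mul (c := C) (by fun_prop) (Eventually.of_forall fun q => hC ⟨q.1, rfl⟩)
    have := integral_integral_swap (f := fun x s => φ x * gw (x + s • w)) i2
    have z : ∀ u : En n → ℝ, ∫ x in tsupport φ, φ x * u x = ∫ x, φ x * u x := fun u => by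
      refine setIntegral_eq_integral_of_forall_compl_eq_zero fun x hx => ?_
      rw [image_eq_zero_of_notMem_tsupport hx, zero_mul]
    simp only [integral_const_mul] at this
    rw [z (fun x => ∫ s in Ioc 0 h, gw (x + s • w))] at this
    rw [this]
    refine integral_congr_ae (Eventually.of_forall fun s => ?_)
    exact z (fun x => gw (x + s • w))
  have hD : Continuous (fun x => fderiv ℝ φ x w) :=
    (hφ1.continuous_fderiv (by simp)).clm_apply continuous_const
  have hDc : HasCompactSupport (fun x => fderiv ℝ φ x w) :=
    (hc.fderiv (𝕜 := ℝ)).comp_left (g := fun L : En n →L[ℝ] ℝ => L w) (by simp)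
  have W : ∀ s : ℝ, ∫ x, φ x * gw (x + s • w) = - ∫ x, g x * fderiv ℝ φ (x - s • w) w := by
    intro s
    rw [shift]
    have := hweak (fun x => φ (x - s • w)) (hφ1.comp (contDiff_id.sub contDiff_const))
      (hc.comp_homeomorph (Homeomorph.subRight (s • w)))
    simp only [fderiv_comp_sub] at this
    linarith
  have FT : ∀ x, φ (x - h • w) - φ x = - ∫ s in Ioc 0 h, fderiv ℝ φ (x - s • w) w := by
    intro x
    rw [← intervalIntegral.integral_of_le hh]
    have : ∀ s ∈ uIcc 0 h, HasDerivAt (fun s : ℝ => φ (x - s • w))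
        (-(fderiv ℝ φ (x - s • w) w)) s := by
      intro s _
      have d := (hφ1.differentiable (by simp) (x - s • w)).hasFDerivAt
      have d2 : HasDerivAt (fun s : ℝ => x - s • w) (-w) s := by
        simpa using ((hasDerivAt_id s).smul_const w).const_sub x
      have d3 := d.comp_hasDerivAt s d2
      rw [map_neg] at d3
      exact d3
    have := intervalIntegral.integral_eq_sub_of_hasDerivAt this
      (Continuous.intervalIntegrable (by fun_prop) _ _)
    rw [intervalIntegral.integral_neg] at this
    simp at this
    linarith
  have Fub : ∫ x, g x * ∫ s in Ioc 0 h, fderiv ℝ φ (x - s • w) w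
      = ∫ s in Ioc 0 h, ∫ x, g x * fderiv ℝ φ (x - s • w) w := by
    obtain ⟨C, hC⟩ := hD.norm.bddAbove_range_of_hasCompactSupport hDc.norm
    obtain ⟨A, hA⟩ := (show IsCompact (tsupport φ) from hc).isBounded.exists_norm_le
    set K := Metric.closedBall (0 : En n) (A + h * ‖w‖)
    have hzero : ∀ s ∈ Ioc 0 h, ∀ x ∉ K, fderiv ℝ φ (x - s • w) w = 0 := by
      intro s hs x hx
      have : x - s • w ∉ tsupport φ := by
        intro hmem
        apply hx
        have e1 := hA _ hmem
        have : x = (x - s • w) + s • w := by simp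
        rw [mem_closedBall_zero_iff, this]
        refine (norm_add_le _ _).trans ?_
        rw [norm_smul, Real.norm_eq_abs, abs_of_pos hs.1]
        have := hs.2
        gcongr
      have h0 : fderiv ℝ φ (x - s • w) = 0 := by
        by_contra h0
        exact this (support_fderiv_subset ℝ h0)
      simp [h0]
    have i1 : Integrable (fun q : En n × ℝ => g q.1 * fderiv ℝ φ (q.1 - q.2 • w) w)
        ((volume.restrict K).prod (volume.restrict (Ioc 0 h))) := by
      have := (hg.integrableOn_isCompact (isCompact_closedBall (0 : En n) (A + h * ‖w‖))).mul_prod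
        (integrableOn_const (by simp) : IntegrableOn (fun _ => (1 : ℝ)) (Ioc 0 h))
      simp only [mul_one] at this
      exact this.mul_bdd (c := C) (by fun_prop) (Eventually.of_forall fun q => hC ⟨_, rfl⟩)
    have := integral_integral_swap (f := fun x s => g x * fderiv ℝ φ (x - s • w) w) i1
    simp only [integral_const_mul] at this
    rw [setIntegral_eq_integral_of_forall_compl_eq_zero (s := K)] at this
    · rw [this]
      refine setIntegral_congr_fun measurableSet_Ioc fun s hs => ?_
      refine setIntegral_eq_integral_of_forall_compl_eq_zero fun x hx => ?_
      rw [hzero s hs x hx, mul_zero]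
    · intro x hx
      rw [setIntegral_congr_fun measurableSet_Ioc (g := fun _ => (0 : ℝ))
        (fun s hs => hzero s hs x hx)]
      simp
  have hsh := hc.comp_homeomorph (Homeomorph.subRight (h • w))
  have a3 : Integrable (fun x => φ (x - h • w) * g x) := by
    simpa using hg.integrable_smul_left_of_hasCompactSupport
      (g := fun x => φ (x - h • w)) (by fun_prop) hsh
  calc ∫ x, φ x * (g (x + h • w) - g x)
      = ∫ x, g x * (φ (x - h • w) - φ x) := by
        simp only [mul_sub]
        rw [integral_sub a1 a2, shift h g, ← integral_sub a3 a2]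
        simp only [mul_comm]
    _ = _ := by
        simp only [FT, mul_neg]
        rw [integral_neg, Fub, R]
        simp only [W]
        rw [integral_neg]

/-! ### Tails and the symmetral -/

/-- The upper tail `∫_s^∞ φ` of a function on the line. -/
def tail (φ : ℝ → ℝ) (s : ℝ) : ℝ := ∫ u in Ioi s, φ u

lemma tail_sub {φ : ℝ → ℝ} (hφ : Integrable φ) (a b : ℝ) :
    tail φ a - tail φ b = ∫ u in a..b, φ u := by
  have := intervalIntegral.integral_interval_add_Ioi (μ := volume) (f := φ) (a := a) (b := b)
    hφ.integrableOn hφ.integrableOn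
  unfold tail
  linarith

lemma tail_antitone {φ : ℝ → ℝ} (hφ : Integrable φ) (h0 : ∀ s, 0 ≤ φ s) : Antitone (tail φ) := by
  intro a b hab
  have := tail_sub hφ a b
  have := intervalIntegral.integral_nonneg (μ := volume) (f := φ) hab (fun u _ => h0 u)
  linarith

lemma tail_continuous {φ : ℝ → ℝ} (hφ : Integrable φ) : Continuous (tail φ) := by
  have : tail φ = fun s => tail φ 0 - ∫ u in (0:ℝ)..s, φ u := by
    ext s; have := tail_sub hφ 0 s; linarith
  rw [this]
  exact continuous_const.sub
    (intervalIntegral.continuous_primitive (fun a b => hφ.intervalIntegrable) 0)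

/-- At almost every point of positivity the tail is strictly decreasing to the right. -/
lemma tail_good {φ : ℝ → ℝ} (hφ : Integrable φ) (h0 : ∀ s, 0 ≤ φ s) :
    ∀ᵐ s, φ s ≠ 0 → ∀ h : ℝ, 0 < h → tail φ (s + h) < tail φ s := by
  filter_upwards [LocallyIntegrable.ae_hasDerivAt_integral hφ.locallyIntegrable] with s hs hne h hh
  by_contra hcon
  push Not at hcon
  have hd := (hs 0)
  -- the primitive is constant on `[s, s + h]`
  have hconst : ∀ u ∈ Icc s (s + h), ∫ t in (0:ℝ)..u, φ t = ∫ t in (0:ℝ)..s, φ t := by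
    intro u hu
    have e1 := tail_sub hφ 0 u
    have e2 := tail_sub hφ 0 s
    have a1 := tail_antitone hφ h0 hu.1
    have a2 := tail_antitone hφ h0 hu.2
    linarith
  have hd2 : HasDerivWithinAt (fun x => ∫ t in (0:ℝ)..x, φ t) 0 (Icc s (s + h)) s :=
    (hasDerivWithinAt_const s _ (∫ t in (0:ℝ)..s, φ t)).congr hconst rfl
  have hu := (uniqueDiffOn_Icc (show s < s + h by linarith)) s ⟨le_rfl, by linarith⟩
  exact hne (hu.eq_deriv _ hd.hasDerivWithinAt hd2)

/-- The one-dimensional symmetral in terms of the tail function. -/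
lemma mem_ehrhard1D {φ : ℝ → ℝ} (hφ : Integrable φ) (h0 : ∀ s, 0 ≤ φ s) {A : Set ℝ}
    (hA : MeasurableSet A) (y : ℝ) :
    y ∈ ehrhard1D (volume.withDensity fun t => ENNReal.ofReal (φ t)) 1 A ↔
      tail φ y ≤ ∫ u in A, φ u := by
  have hmeas : ∀ B : Set ℝ, MeasurableSet B →
      (volume.withDensity fun t => ENNReal.ofReal (φ t)) B = ENNReal.ofReal (∫ u in B, φ u) := by
    intro B hB
    rw [withDensity_apply _ hB, ofReal_integral_eq_lintegral_ofReal hφ.integrableOn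
      (Eventually.of_forall h0)]
  have key : ∀ c : ℝ, (volume.withDensity fun t => ENNReal.ofReal (φ t)) {y | c ≤ 1 * y}
      ≤ (volume.withDensity fun t => ENNReal.ofReal (φ t)) A ↔ tail φ c ≤ ∫ u in A, φ u := by
    intro c
    have e : {y : ℝ | c ≤ 1 * y} = Ici c := by ext; simp
    rw [e, hmeas _ measurableSet_Ici, hmeas _ hA, integral_Ici_eq_integral_Ioi,
      ENNReal.ofReal_le_ofReal_iff (integral_nonneg h0)]
    rfl
  simp only [ehrhard1D, mem_ofPred_eq, key]
  rw [one_mul]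
  constructor
  · intro h
    by_contra hcon
    push Not at hcon
    have : ∀ᶠ y' in 𝓝[>] y, ∫ u in A, φ u < tail φ y' :=
      ((tail_continuous hφ).continuousAt.eventually (lt_mem_nhds hcon)).filter_mono
        nhdsWithin_le_nhds
    obtain ⟨y', h1, h2⟩ := (this.and self_mem_nhdsWithin).exists
    have := h y' (fun c hc => by
      by_contra hlt
      push Not at hlt
      have := tail_antitone hφ h0 hlt.le
      linarith)
    exact absurd h2 (not_lt.2 this)
  · intro h b hb
    exact hb y h

/-- `∫_0^∞ f(x + u v) du`. -/
def tailF {n : ℕ} (f : En n → ℝ) (v x : En n) : ℝ := ∫ u in Ioi (0 : ℝ), f (x + u • v)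

/-- The `f`-mass of the set `E` on the line through `x` in direction `v`. -/
def massF {n : ℕ} (f : En n → ℝ) (v : En n) (E : Set (En n)) (x : En n) : ℝ :=
  ∫ u : ℝ, E.indicator f (x + u • v)

lemma tailF_line {n : ℕ} (f : En n → ℝ) (v z : En n) (s : ℝ) :
    tailF f v (z + s • v) = tail (fun u => f (z + u • v)) s := by
  unfold tailF tail
  rw [← integral_indicator measurableSet_Ioi, ← integral_indicator measurableSet_Ioi,
    ← integral_add_left_eq_self ((Ioi s).indicator _) s]
  congr 1
  ext u
  simp only [indicator, mem_Ioi, lt_add_iff_pos_right, add_smul, add_assoc]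

lemma massF_line {n : ℕ} (f : En n → ℝ) (v z : En n) (E : Set (En n)) (s : ℝ) :
    massF f v E (z + s • v) = massF f v E z := by
  unfold massF
  rw [← integral_add_left_eq_self (fun u : ℝ => E.indicator f (z + u • v)) s]
  simp only [add_smul, add_assoc]

/-- Up to null sets, a point lies in the symmetral of `E` iff the mass of its fibre above it is at
most the mass of the fibre of `E`. -/
lemma symm_ae {n : ℕ} {f : En n → ℝ} (hfi : Integrable f) (h0 : ∀ x, 0 ≤ f x)
    {v : En n} (hv : ‖v‖ = 1) {E : Set (En n)} (hE : MeasurableSet E) :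
    ehrhardSymm f v E =ᵐ[volume] {x | tailF f v x ≤ massF f v E x} := by
  filter_upwards [integrable_line' hv hfi] with x hx
  refine propext ?_
  set z := x - ⟪x, v⟫ • v with hz
  have hxz : x = z + ⟪x, v⟫ • v := by simp [hz]
  have hφ : Integrable (fun s : ℝ => f (z + s • v)) := by
    have := hx.comp_sub_right ⟪x, v⟫
    refine this.congr (Eventually.of_forall fun s => ?_)
    simp only [hz, sub_smul]
    congr 1
    abel
  show ⟪x, v⟫ ∈ ehrhard1D (fiberMeasure f z v) 1 {t | z + t • v ∈ E} ↔ tailF f v x ≤ massF f v E x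
  have hA : MeasurableSet {t : ℝ | z + t • v ∈ E} :=
    (by fun_prop : Measurable fun t : ℝ => z + t • v) hE
  unfold fiberMeasure
  rw [mem_ehrhard1D hφ (fun s => h0 _) hA]
  rw [← tailF_line, ← hxz]
  have : massF f v E x = ∫ u in {t : ℝ | z + t • v ∈ E}, f (z + u • v) := by
    conv_lhs => rw [hxz, massF_line]
    unfold massF
    rw [← integral_indicator hA]
    rfl
  rw [this]

lemma tailF_measurable {n : ℕ} {f : En n → ℝ} (hm : Measurable f) (v : En n) :
    Measurable (tailF f v) := by
  have : StronglyMeasurable (fun q : En n × ℝ => f (q.1 + q.2 • v)) :=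
    (hm.comp (by fun_prop)).stronglyMeasurable
  exact (this.integral_prod_right).measurable

/-- At almost every point where `f ≠ 0`, the tail is strictly decreasing to the right. -/
lemma tailF_good {n : ℕ} {f : En n → ℝ} (hm : Measurable f) (hfi : Integrable f)
    (h0 : ∀ x, 0 ≤ f x) {v : En n} (hv : ‖v‖ = 1) :
    ∀ᵐ x, f x ≠ 0 → ∀ h : ℝ, 0 < h → tailF f v (x + h • v) < tailF f v x := by
  have hT := tailF_measurable hm v
  have key : ∀ k : ℕ, ∀ᵐ x, f x ≠ 0 → tailF f v (x + (1 / ((k : ℝ) + 1)) • v) < tailF f v x := by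
    intro k
    refine ae_of_line v ?_ ?_
    · apply MeasurableSet.imp
      · exact (measurableSet_eq_fun hm measurable_const).compl
      · exact measurableSet_lt (hT.comp (by fun_prop)) hT
    · filter_upwards [integrable_line' hv hfi] with z hz
      filter_upwards [tail_good hz (fun s => h0 _)] with s hs hne
      have := hs hne _ (Nat.one_div_pos_of_nat (n := k))
      rw [add_assoc, ← add_smul, tailF_line, tailF_line]
      exact this
  filter_upwards [ae_all_iff.2 key, integrable_line' hv hfi] with x hx hi hne h hh
  obtain ⟨k, hk⟩ := exists_nat_one_div_lt (K := ℝ) hh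
  refine lt_of_le_of_lt ?_ (hx k hne)
  rw [tailF_line, tailF_line]
  exact tail_antitone hi (fun s => h0 _) hk.le

/-- A nonnegative `f` is minimal on `{f = 0}`, so its directional derivatives are nonnegative
almost everywhere there. -/
lemma grad_nonneg_of_zero {n : ℕ} {f : En n → ℝ} {f' : En n → En n} (hm : Measurable f)
    (hm' : Measurable f') (hW : MemW f f') (w : En n) :
    ∀ᵐ x, f x = 0 → 0 ≤ ⟪w, f' x⟫ := by
  have hgw : LocallyIntegrable (fun x => ⟪w, f' x⟫) := by
    intro x
    obtain ⟨u, hu, hi⟩ := hW.2.2.2.1 x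
    exact ⟨u, hu, hi.const_inner w⟩
  have htr : ∀ k : ℕ, ∀ᵐ x, f (x + (1 / ((k : ℝ) + 1)) • w) - f x
      = ∫ s in Ioc 0 (1 / ((k : ℝ) + 1)), ⟪w, f' (x + s • w)⟫ := fun k =>
    weak_translation w hW.2.2.1 hgw (fun ψ h1 h2 => ibp_dir hW.2.2 w h1 h2) (by positivity)
  refine ae_of_line w ?_ ?_
  · apply MeasurableSet.imp
    · exact measurableSet_eq_fun hm measurable_const
    · exact measurableSet_le measurable_const (by fun_prop)
  filter_upwards [ae_line w (ae_all_iff.2 htr), locallyIntegrable_line w hgw] with z hz hl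
  filter_upwards [hz, LocallyIntegrable.ae_hasDerivAt_integral hl] with s hs hd hzero
  have hd0 := hd s
  have hslope := hd0.tendsto_slope
  have hseq : Tendsto (fun k : ℕ => s + 1 / ((k : ℝ) + 1)) atTop (𝓝[≠] s) := by
    rw [tendsto_nhdsWithin_iff]
    refine ⟨?_, Eventually.of_forall fun k => ?_⟩
    · simpa using (tendsto_one_div_add_atTop_nhds_zero_nat (𝕜 := ℝ)).const_add s
    · have := Nat.one_div_pos_of_nat (α := ℝ) (n := k)
      simp only [mem_compl_iff, mem_singleton_iff]
      linarith
  refine ge_of_tendsto (hslope.comp hseq) (Eventually.of_forall fun k => ?_)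
  have hp := Nat.one_div_pos_of_nat (α := ℝ) (n := k)
  have e : ∫ t in s..(s + 1 / ((k : ℝ) + 1)), ⟪w, f' (z + t • w)⟫
      = f (z + s • w + (1 / ((k : ℝ) + 1)) • w) := by
    have := hs k
    rw [hzero, sub_zero] at this
    rw [this, ← intervalIntegral.integral_of_le hp.le]
    have := intervalIntegral.integral_comp_add_left (a := 0) (b := 1 / ((k : ℝ) + 1))
      (fun t => ⟪w, f' (z + t • w)⟫) s
    rw [add_zero] at this
    rw [← this]
    simp only [add_smul, add_assoc]
  simp only [Function.comp, slope_def_field, intervalIntegral.integral_same, e]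
  have := hW.1 (z + s • w + (1 / ((k : ℝ) + 1)) • w)
  rw [sub_zero, add_sub_cancel_left]
  positivity

/-- On `{f = 0}` the weak gradient vanishes. -/
lemma grad_zero_of_zero {n : ℕ} {f : En n → ℝ} {f' : En n → En n} (hm : Measurable f)
    (hm' : Measurable f') (hW : MemW f f') (w : En n) :
    ∀ᵐ x, f x = 0 → ⟪w, f' x⟫ = 0 := by
  filter_upwards [grad_nonneg_of_zero hm hm' hW w, grad_nonneg_of_zero hm hm' hW (-w)]
    with x h1 h2 hx
  have a := h1 hx
  have b := h2 hx
  rw [inner_neg_left] at b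
  linarith

/-! ### Perimeter of superlevel sets and a coarea bound -/

/-- The derivative of the smooth step `x ↦ T ((k + 1) x)`, where `T` is the smooth transition. -/
def stepD (k : ℕ) (s : ℝ) : ℝ := ((k : ℝ) + 1) * deriv Real.smoothTransition (((k : ℝ) + 1) * s)

lemma smoothTransition_hasDerivAt (s : ℝ) :
    HasDerivAt Real.smoothTransition (deriv Real.smoothTransition s) s :=
  ((Real.smoothTransition.contDiff (n := 1)).differentiable (by simp) s).hasDerivAt

lemma step_hasDerivAt (k : ℕ) (s : ℝ) :
    HasDerivAt (fun s => Real.smoothTransition (((k : ℝ) + 1) * s)) (stepD k s) s := by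
  have h := (smoothTransition_hasDerivAt (((k : ℝ) + 1) * s)).comp s
    ((hasDerivAt_id s).const_mul ((k : ℝ) + 1))
  rw [mul_one, mul_comm] at h
  exact h

lemma stepD_nonneg (k : ℕ) (s : ℝ) : 0 ≤ stepD k s :=
  mul_nonneg (by positivity) Real.smoothTransition.monotone.deriv_nonneg

lemma stepD_continuous (k : ℕ) : Continuous (stepD k) := by
  have := (Real.smoothTransition.contDiff (n := 1)).continuous_deriv (by simp)
  unfold stepD
  fun_prop

lemma deriv_smoothTransition_zero {s : ℝ} (hs : s ∉ Icc (0 : ℝ) 1) :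
    deriv Real.smoothTransition s = 0 := by
  rw [mem_Icc, not_and_or, not_le, not_le] at hs
  rcases hs with hs | hs
  · have : Real.smoothTransition =ᶠ[𝓝 s] fun _ => 0 := by
      filter_upwards [Iio_mem_nhds hs] with u hu
      exact Real.smoothTransition.zero_of_nonpos (le_of_lt hu)
    rw [this.deriv_eq]; simp
  · have : Real.smoothTransition =ᶠ[𝓝 s] fun _ => 1 := by
      filter_upwards [Ioi_mem_nhds hs] with u hu
      exact Real.smoothTransition.one_of_one_le (le_of_lt hu)
    rw [this.deriv_eq]; simp

lemma lintegral_stepD (k : ℕ) (c : ℝ) : ∫⁻ r, ENNReal.ofReal (stepD k (c - r)) = 1 := by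
  rw [lintegral_sub_left_eq_self (fun r => ENNReal.ofReal (stepD k r)) c]
  have hc : HasCompactSupport (stepD k) := by
    refine HasCompactSupport.intro (K := Icc 0 1) isCompact_Icc fun s hs => ?_
    have : ((k : ℝ) + 1) * s ∉ Icc (0 : ℝ) 1 := by
      intro h
      apply hs
      have hk : (0 : ℝ) ≤ k := by positivity
      have h0 : 0 ≤ s := by
        by_contra hneg
        push Not at hneg
        nlinarith [h.1]
      exact ⟨h0, by nlinarith [h.2]⟩
    rw [stepD, deriv_smoothTransition_zero this, mul_zero]
  have hi := (stepD_continuous k).integrable_of_hasCompactSupport (μ := volume) hc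
  rw [← ofReal_integral_eq_lintegral_ofReal hi (Eventually.of_forall (stepD_nonneg k)),
    integral_of_hasDerivAt_of_tendsto (m := 0) (n := 1) (step_hasDerivAt k) hi]
  · simp
  · refine tendsto_const_nhds.congr' ?_
    filter_upwards [eventually_le_atBot 0] with s hs
    exact (Real.smoothTransition.zero_of_nonpos
      (mul_nonpos_of_nonneg_of_nonpos (by positivity) hs)).symm
  · refine tendsto_const_nhds.congr' ?_
    filter_upwards [eventually_ge_atTop 1] with s hs
    refine (Real.smoothTransition.one_of_one_le ?_).symm
    have hk : (0 : ℝ) ≤ k := by positivity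
    nlinarith

lemma step_tendsto (s : ℝ) :
    Tendsto (fun k : ℕ => Real.smoothTransition (((k : ℝ) + 1) * s)) atTop
      (𝓝 (if 0 < s then 1 else 0)) := by
  split_ifs with hs
  · refine tendsto_const_nhds.congr' ?_
    have : Tendsto (fun k : ℕ => ((k : ℝ) + 1) * s) atTop atTop :=
      (tendsto_atTop_add_const_right _ _ tendsto_natCast_atTop_atTop).atTop_mul_const hs
    filter_upwards [this.eventually_ge_atTop 1] with k hk
    exact (Real.smoothTransition.one_of_one_le hk).symm
  · refine tendsto_const_nhds.congr' (Eventually.of_forall fun k => ?_)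
    exact (Real.smoothTransition.zero_of_nonpos
      (mul_nonpos_of_nonneg_of_nonpos (by positivity) (not_lt.1 hs))).symm

/-- Upper bound for the weighted perimeter of a superlevel set of a `C¹` function. -/
lemma perim_superlevel_le {n : ℕ} {f : En n → ℝ} {f' : En n → En n} (hW : MemW f f')
    {U Bd : En n → ℝ} (hU : ContDiff ℝ 1 U)
    (hB : ∀ x u, ‖u‖ ≤ 1 → |fderiv ℝ U x u| ≤ Bd x) (r : ℝ) :
    perim f f' univ {x | r < U x} ≤
      liminf (fun k : ℕ => ∫⁻ x, ENNReal.ofReal (f x * Bd x) * ENNReal.ofReal (stepD k (U x - r)))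
        atTop := by
  refine iSup₂_le fun φ hφ => ?_
  rw [setIntegral_univ]
  have hG : Integrable (fun x => f x * dvg φ x + ⟪φ x, f' x⟫) :=
    (integrable_mul_dvg hW.2.2.1 hφ.1 hφ.2.1).add
      (integrable_inner_field hW.2.2.2.1 hφ.1.continuous hφ.2.1)
  set P : ℕ → En n → ℝ := fun k x => Real.smoothTransition (((k : ℝ) + 1) * (U x - r)) with hP
  have hPd : ∀ k, ContDiff ℝ 1 (P k) := fun k =>
    Real.smoothTransition.contDiff.comp (contDiff_const.mul (hU.sub contDiff_const))
  have hlim : Tendsto (fun k => ∫ x, P k x * (f x * dvg φ x + ⟪φ x, f' x⟫)) atTop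
      (𝓝 (∫ x, ({x | r < U x} : Set (En n)).indicator (fun _ => (1 : ℝ)) x
        * (f x * dvg φ x + ⟪φ x, f' x⟫))) := by
    refine tendsto_integral_of_dominated_convergence
      (fun x => ‖f x * dvg φ x + ⟪φ x, f' x⟫‖) (fun k => ?_) hG.norm (fun k => ?_) ?_
    · exact (hPd k).continuous.aestronglyMeasurable.mul hG.aestronglyMeasurable
    · refine Eventually.of_forall fun x => ?_
      rw [norm_mul]
      refine mul_le_of_le_one_left (norm_nonneg _) ?_
      rw [Real.norm_eq_abs, abs_of_nonneg (Real.smoothTransition.nonneg _)]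
      exact Real.smoothTransition.le_one _
    · refine Eventually.of_forall fun x => Tendsto.mul_const _ ?_
      convert step_tendsto (U x - r) using 2
      simp [indicator]
  have h2 := (ENNReal.continuous_ofReal.tendsto _).comp hlim
  rw [← h2.liminf_eq]
  refine liminf_le_liminf (Eventually.of_forall fun k => ?_)
  simp only [Function.comp]
  rw [ibp_field hW.2.2 (hPd k) hφ.1 hφ.2.1, ← integral_neg]
  refine (ENNReal.ofReal_le_ofReal (le_abs_self _)).trans ?_
  rw [← Real.norm_eq_abs, ofReal_norm]
  refine (enorm_integral_le_lintegral_enorm _).trans (lintegral_mono fun x => ?_)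
  have hd : fderiv ℝ (P k) x (φ x) = stepD k (U x - r) * fderiv ℝ U x (φ x) := by
    have h1 := (hU.differentiable (by simp) x).hasFDerivAt.sub_const r
    have h4 := (step_hasDerivAt k (U x - r)).comp_hasFDerivAt x h1
    have h3 : HasFDerivAt (P k) (stepD k (U x - r) • fderiv ℝ U x) x := h4
    rw [h3.fderiv]
    simp
  rw [← ENNReal.ofReal_mul' (stepD_nonneg _ _), ← ofReal_norm]
  refine ENNReal.ofReal_le_ofReal ?_
  rw [norm_neg, hd, norm_mul, norm_mul, Real.norm_eq_abs, Real.norm_eq_abs, Real.norm_eq_abs,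
    abs_of_nonneg (hW.1 x), abs_of_nonneg (stepD_nonneg _ _)]
  have := hB x (φ x) (hφ.2.2.2 x)
  have h1 := hW.1 x
  have h2 := stepD_nonneg k (U x - r)
  calc f x * (stepD k (U x - r) * |fderiv ℝ U x (φ x)|)
      ≤ f x * (stepD k (U x - r) * Bd x) := by gcongr
    _ = _ := by ring

lemma ofReal_integral_le {α : Type*} [MeasurableSpace α] {μ : Measure α} {g : α → ℝ}
    (hg : Integrable g μ) : ENNReal.ofReal (∫ x, g x ∂μ) ≤ ∫⁻ x, ENNReal.ofReal (g x) ∂μ := by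
  have h1 : ∫ x, g x ∂μ ≤ ∫ x, max (g x) 0 ∂μ :=
    integral_mono hg hg.pos_part fun x => le_max_left _ _
  refine (ENNReal.ofReal_le_ofReal h1).trans ?_
  rw [ofReal_integral_eq_lintegral_ofReal hg.pos_part
    (Eventually.of_forall fun x => le_max_right _ _)]
  refine lintegral_mono fun x => ?_
  simp

/-- Integrated over the levels `r`, the first variations of sets `S r` whose perimeter is at
most that of `{r < U}` are bounded by the total variation of `U`. -/
lemma coarea_bound {n : ℕ} {f : En n → ℝ} {f' : En n → En n} (hm : Measurable f) (hW : MemW f f')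
    {U Bd : En n → ℝ} (hU : ContDiff ℝ 1 U)
    (hB : ∀ x u, ‖u‖ ≤ 1 → |fderiv ℝ U x u| ≤ Bd x) (hBm : Continuous Bd)
    (hBi : Integrable (fun x => f x * Bd x))
    {S : Set (En n × ℝ)} (hS : MeasurableSet S)
    (hSE : ∀ r, perim f f' univ {x | (x, r) ∈ S} ≤ perim f f' univ {x | r < U x})
    {φ : En n → En n} (hφ : IsTestField univ φ) (M : ℝ) :
    ∫ x, (∫ r in Ioc (-M) M, S.indicator (fun _ => (1 : ℝ)) (x, r)) *
        (f x * dvg φ x + ⟪φ x, f' x⟫) ≤ ∫ x, f x * Bd x := by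
  have hG : Integrable (fun x => f x * dvg φ x + ⟪φ x, f' x⟫) :=
    (integrable_mul_dvg hW.2.2.1 hφ.1 hφ.2.1).add
      (integrable_inner_field hW.2.2.2.1 hφ.1.continuous hφ.2.1)
  set G := fun x => f x * dvg φ x + ⟪φ x, f' x⟫ with hGdef
  have hi : Integrable (fun q : En n × ℝ => S.indicator (fun _ => (1 : ℝ)) (q.1, q.2) * G q.1)
      (volume.prod (volume.restrict (Ioc (-M) M))) := by
    have h1 := hG.mul_prod
      (integrableOn_const (by simp) : IntegrableOn (fun _ => (1 : ℝ)) (Ioc (-M) M))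
    simp only [mul_one] at h1
    refine h1.bdd_mul (c := 1) ?_ (Eventually.of_forall fun q => ?_)
    · exact (measurable_const.indicator hS).aestronglyMeasurable
    · refine (norm_indicator_le_norm_self _ _).trans (by simp)
  have hB0 : ∀ x, 0 ≤ Bd x := fun x => (abs_nonneg _).trans (hB x 0 (by simp))
  have hfB : ∀ x, 0 ≤ f x * Bd x := fun x => mul_nonneg (hW.1 x) (hB0 x)
  have e1 : ∫ x, (∫ r in Ioc (-M) M, S.indicator (fun _ => (1 : ℝ)) (x, r)) * G x
      = ∫ r in Ioc (-M) M, ∫ x, S.indicator (fun _ => (1 : ℝ)) (x, r) * G x := by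
    rw [← integral_integral_swap (f := fun x r => S.indicator (fun _ => (1 : ℝ)) (x, r) * G x) hi]
    simp only [integral_mul_const]
  rw [e1]
  rw [← ENNReal.ofReal_le_ofReal_iff (integral_nonneg hfB)]
  refine (ofReal_integral_le hi.integral_prod_right).trans ?_
  rw [ofReal_integral_eq_lintegral_ofReal hBi (Eventually.of_forall hfB)]
  set A : ℕ → ℝ → ℝ≥0∞ := fun k r =>
    ∫⁻ x, ENNReal.ofReal (f x * Bd x) * ENNReal.ofReal (stepD k (U x - r)) with hA
  have hmeas : ∀ k, Measurable (fun q : ℝ × En n =>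
      ENNReal.ofReal (f q.2 * Bd q.2) * ENNReal.ofReal (stepD k (U q.2 - q.1))) := by
    intro k
    have h1 := (stepD_continuous k).measurable
    have h2 := hU.continuous.measurable
    have h3 := hBm.measurable
    fun_prop
  have hAm : ∀ k, Measurable (A k) := fun k => (hmeas k).lintegral_prod_right
  calc ∫⁻ r in Ioc (-M) M, ENNReal.ofReal (∫ x, S.indicator (fun _ => (1 : ℝ)) (x, r) * G x)
      ≤ ∫⁻ r in Ioc (-M) M, liminf (fun k => A k r) atTop := by
        refine lintegral_mono fun r => ?_
        refine le_trans ?_ ((hSE r).trans (perim_superlevel_le hW hU hB r))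
        have := le_iSup₂ (f := fun (φ : En n → En n) (_ : IsTestField univ φ) =>
          ENNReal.ofReal (∫ x in univ, ({x | (x, r) ∈ S} : Set (En n)).indicator
            (fun _ => (1 : ℝ)) x * (f x * dvg φ x + ⟪φ x, f' x⟫))) φ hφ
        rw [setIntegral_univ] at this
        exact this
    _ ≤ liminf (fun k => ∫⁻ r in Ioc (-M) M, A k r) atTop := lintegral_liminf_le hAm
    _ ≤ liminf (fun _ : ℕ => ∫⁻ x, ENNReal.ofReal (f x * Bd x)) atTop := by
        refine liminf_le_liminf (Eventually.of_forall fun k => ?_)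
        refine (setLIntegral_le_lintegral _ _).trans ?_
        simp only [hA]
        rw [lintegral_lintegral_swap (hmeas k).aemeasurable]
        refine lintegral_mono fun x => ?_
        rw [lintegral_const_mul' _ _ ENNReal.ofReal_ne_top, lintegral_stepD, mul_one]
    _ = _ := by simp

/-! ### Symmetrized layers of a profile -/

lemma massF_measurable {n : ℕ} {f : En n → ℝ} (hm : Measurable f) (v : En n) {U : En n → ℝ}
    (hU : Measurable U) :
    Measurable (fun q : En n × ℝ => massF f v {x | q.2 < U x} q.1) := by
  have hS : MeasurableSet {p : (En n × ℝ) × ℝ | p.1.2 < U (p.1.1 + p.2 • v)} :=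
    measurableSet_lt (by fun_prop) (hU.comp (by fun_prop))
  have h1 : Measurable (fun p : (En n × ℝ) × ℝ => f (p.1.1 + p.2 • v)) := hm.comp (by fun_prop)
  have : StronglyMeasurable (fun p : (En n × ℝ) × ℝ =>
      ({x | p.1.2 < U x} : Set (En n)).indicator f (p.1.1 + p.2 • v)) :=
    (h1.indicator hS).stronglyMeasurable
  exact this.integral_prod_right.measurable

/-- The indicator that `x` belongs to the `v`-symmetral of `{r < U}`. -/
def symInd {n : ℕ} (f : En n → ℝ) (v : En n) (U : En n → ℝ) (x : En n) (r : ℝ) : ℝ :=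
  ({q : En n × ℝ | tailF f v q.1 ≤ massF f v {x | q.2 < U x} q.1}).indicator
    (fun _ => (1 : ℝ)) (x, r)

lemma symSet_measurable {n : ℕ} {f : En n → ℝ} (hm : Measurable f) (v : En n) {U : En n → ℝ}
    (hU : Measurable U) :
    MeasurableSet {q : En n × ℝ | tailF f v q.1 ≤ massF f v {x | q.2 < U x} q.1} :=
  measurableSet_le ((tailF_measurable hm v).comp measurable_fst) (massF_measurable hm v hU)

lemma symInd_measurable {n : ℕ} {f : En n → ℝ} (hm : Measurable f) (v : En n) {U : En n → ℝ}
    (hU : Measurable U) : Measurable (fun q : En n × ℝ => symInd f v U q.1 q.2) :=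
  measurable_const.indicator (symSet_measurable hm v hU)

lemma symInd_eq {n : ℕ} (f : En n → ℝ) (v : En n) (U : En n → ℝ) (x : En n) (r : ℝ) :
    symInd f v U x r = if tailF f v x ≤ massF f v {x | r < U x} x then 1 else 0 := by
  simp [symInd, indicator]

lemma symInd_nonneg {n : ℕ} (f : En n → ℝ) (v : En n) (U : En n → ℝ) (x : En n) (r : ℝ) :
    0 ≤ symInd f v U x r := by rw [symInd_eq]; split_ifs <;> simp

lemma symInd_le_one {n : ℕ} (f : En n → ℝ) (v : En n) (U : En n → ℝ) (x : En n) (r : ℝ) :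
    symInd f v U x r ≤ 1 := by rw [symInd_eq]; split_ifs <;> simp

/-- The difference between the symmetrized and the original profile, integrated over the
levels of the profile `g`. -/
def dlt {n : ℕ} (f : En n → ℝ) (v : En n) (g : ℝ → ℝ) (x : En n) : ℝ :=
  (∫ σ in Ioc (0 : ℝ) 1, symInd f v (fun x => g ⟪x, v⟫) x σ) - g ⟪x, v⟫

lemma dlt_measurable {n : ℕ} {f : En n → ℝ} (hm : Measurable f) (v : En n) {g : ℝ → ℝ}
    (hg : Continuous g) : Measurable (dlt f v g) := by
  have hgm : Measurable (fun x : En n => g ⟪x, v⟫) := hg.measurable.comp (by fun_prop)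
  have := (symInd_measurable hm v hgm).stronglyMeasurable
  exact (this.integral_prod_right (ν := volume.restrict (Ioc (0 : ℝ) 1))).measurable.sub hgm

/-- Admissible profiles: `C¹` functions running from `0` (for `y ≤ A`) to `1` (for `y ≥ B`). -/
structure Profile (g : ℝ → ℝ) (A B : ℝ) : Prop where
  smooth : ContDiff ℝ 1 g
  nonneg : ∀ y, 0 ≤ g y
  le_one : ∀ y, g y ≤ 1
  low : ∀ y, y ≤ A → g y = 0
  high : ∀ y, B ≤ y → g y = 1

lemma symInd_integrable {n : ℕ} {f : En n → ℝ} (hm : Measurable f) (v : En n) {U : En n → ℝ}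
    (hU : Measurable U) (x : En n) (a b : ℝ) :
    IntegrableOn (symInd f v U x) (Ioc a b) := by
  refine Measure.integrableOn_of_bounded (M := 1) (by simp) ?_ (Eventually.of_forall fun r => ?_)
  · exact ((symInd_measurable hm v hU).comp (measurable_prodMk_left)).aestronglyMeasurable
  · rw [Real.norm_eq_abs, abs_of_nonneg (symInd_nonneg _ _ _ _ _)]
    exact symInd_le_one _ _ _ _ _

lemma dlt_abs_le {n : ℕ} {f : En n → ℝ} (hm : Measurable f) (v : En n) {g : ℝ → ℝ} {A B : ℝ}
    (hg : Profile g A B) (x : En n) : |dlt f v g x| ≤ 1 := by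
  have hgm : Measurable (fun x : En n => g ⟪x, v⟫) :=
    hg.smooth.continuous.measurable.comp (by fun_prop)
  have h1 : 0 ≤ ∫ σ in Ioc (0 : ℝ) 1, symInd f v (fun x => g ⟪x, v⟫) x σ :=
    integral_nonneg fun σ => symInd_nonneg _ _ _ _ _
  have h2 : ∫ σ in Ioc (0 : ℝ) 1, symInd f v (fun x => g ⟪x, v⟫) x σ ≤ 1 := by
    have := integral_mono (μ := volume.restrict (Ioc (0 : ℝ) 1)) (symInd_integrable hm v hgm x 0 1)
      (integrable_const (1 : ℝ)) (fun σ => symInd_le_one _ _ _ _ _)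
    simpa using this
  have h3 := hg.nonneg ⟪x, v⟫
  have h4 := hg.le_one ⟪x, v⟫
  unfold dlt
  rw [abs_le]
  constructor <;> linarith

lemma massF_congr {n : ℕ} {f : En n → ℝ} {v x : En n} {E E' : Set (En n)}
    (h : ∀ u : ℝ, x + u • v ∈ E ↔ x + u • v ∈ E') : massF f v E x = massF f v E' x := by
  unfold massF
  congr 1
  ext u
  by_cases hu : x + u • v ∈ E
  · rw [indicator_of_mem hu, indicator_of_mem ((h u).1 hu)]
  · rw [indicator_of_notMem hu, indicator_of_notMem (mt (h u).2 hu)]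

/-- If the fibre of `E` contains the half-line above `x`, its mass is at least the tail. -/
lemma tailF_le_massF {n : ℕ} {f : En n → ℝ} (h0 : ∀ x, 0 ≤ f x) {v x : En n}
    (hi : Integrable (fun s : ℝ => f (x + s • v))) {E : Set (En n)} (hE : MeasurableSet E)
    (h : ∀ u : ℝ, 0 < u → x + u • v ∈ E) : tailF f v x ≤ massF f v E x := by
  have hA : MeasurableSet {t : ℝ | x + t • v ∈ E} :=
    (by fun_prop : Measurable fun t : ℝ => x + t • v) hE
  have e : massF f v E x = ∫ u in {t : ℝ | x + t • v ∈ E}, f (x + u • v) := by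
    rw [← integral_indicator hA]; rfl
  rw [e]
  exact setIntegral_mono_set hi.integrableOn (Eventually.of_forall fun u => h0 _)
    (LE.le.eventuallyLE fun u hu => h u hu)

/-- If the fibre of `E` lies above `x + h • v`, its mass is at most the tail there. -/
lemma massF_le_tailF {n : ℕ} {f : En n → ℝ} (h0 : ∀ x, 0 ≤ f x) {v x : En n}
    (hi : Integrable (fun s : ℝ => f (x + s • v))) {E : Set (En n)} (hE : MeasurableSet E) (h : ℝ)
    (hh : ∀ u : ℝ, x + u • v ∈ E → h < u) : massF f v E x ≤ tailF f v (x + h • v) := by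
  have hA : MeasurableSet {t : ℝ | x + t • v ∈ E} :=
    (by fun_prop : Measurable fun t : ℝ => x + t • v) hE
  have e : massF f v E x = ∫ u in {t : ℝ | x + t • v ∈ E}, f (x + u • v) := by
    rw [← integral_indicator hA]; rfl
  rw [e, tailF_line]
  exact setIntegral_mono_set hi.integrableOn (Eventually.of_forall fun u => h0 _)
    (LE.le.eventuallyLE fun u hu => hh u hu)

lemma tailF_nonneg {n : ℕ} {f : En n → ℝ} (h0 : ∀ x, 0 ≤ f x) (v x : En n) : 0 ≤ tailF f v x :=
  integral_nonneg fun _ => h0 _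

lemma inner_line {n : ℕ} {v : En n} (hv : ‖v‖ = 1) (x : En n) (u : ℝ) :
    ⟪x + u • v, v⟫ = ⟪x, v⟫ + u := by
  rw [inner_add_left, real_inner_smul_left, real_inner_self_eq_norm_sq, hv]; simp

/-- Off the transition window of the profile, symmetrization changes nothing. -/
lemma dlt_eq_zero {n : ℕ} {f : En n → ℝ} (h0 : ∀ x, 0 ≤ f x) {v : En n}
    (hv : ‖v‖ = 1) {g : ℝ → ℝ} {A B : ℝ} (hg : Profile g A B) {x : En n}
    (hi : Integrable (fun s : ℝ => f (x + s • v)))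
    (hgood : ∀ h : ℝ, 0 < h → tailF f v (x + h • v) < tailF f v x)
    (hx : ⟪x, v⟫ < A ∨ B < ⟪x, v⟫) : dlt f v g x = 0 := by
  have hgm : Measurable (fun x : En n => g ⟪x, v⟫) :=
    hg.smooth.continuous.measurable.comp (by fun_prop)
  have hE : ∀ σ, MeasurableSet {x : En n | σ < g ⟪x, v⟫} := fun σ =>
    measurableSet_lt measurable_const hgm
  rcases hx with hx | hx
  · have : ∀ σ ∈ Ioc (0 : ℝ) 1, symInd f v (fun x => g ⟪x, v⟫) x σ = 0 := by
      intro σ hσ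
      rw [symInd_eq, if_neg]
      rw [not_le]
      refine lt_of_le_of_lt (massF_le_tailF h0 hi (hE σ) (A - ⟪x, v⟫) fun u hu => ?_)
        (hgood _ (by linarith))
      by_contra hcon
      have hu' : σ < g ⟪x + u • v, v⟫ := hu
      rw [inner_line hv, hg.low _ (by linarith)] at hu'
      linarith [hσ.1]
    unfold dlt
    rw [setIntegral_congr_fun measurableSet_Ioc this, hg.low _ hx.le]
    simp
  · have : ∀ σ ∈ Ioo (0 : ℝ) 1, symInd f v (fun x => g ⟪x, v⟫) x σ = 1 := by
      intro σ hσ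
      rw [symInd_eq, if_pos]
      refine tailF_le_massF h0 hi (hE σ) fun u hu => ?_
      show σ < g ⟪x + u • v, v⟫
      rw [inner_line hv, hg.high _ (by linarith)]
      exact hσ.2
    unfold dlt
    rw [integral_Ioc_eq_integral_Ioo, setIntegral_congr_fun measurableSet_Ioo this,
      hg.high _ hx.le]
    simp

/-- Orthogonal projection along the unit vector `v`. -/
def prj {n : ℕ} (v x : En n) : En n := x - ⟪x, v⟫ • v

lemma prj_line {n : ℕ} {v : En n} (hv : ‖v‖ = 1) (x : En n) (u : ℝ) :
    prj v (x + u • v) = prj v x := by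
  unfold prj
  rw [inner_line hv, add_smul]; abel

/-- The perturbed linear function `⟪x, w⟫ + ε θ(πx) g(⟪x, v⟫)`. -/
def Ufun {n : ℕ} (v w : En n) (θ : En n → ℝ) (g : ℝ → ℝ) (ε : ℝ) (x : En n) : ℝ :=
  ⟪x, w⟫ + ε * (θ (prj v x) * g ⟪x, v⟫)

/-- On each fibre the superlevel sets of the perturbed function are superlevel sets of `g`, so
integrating over levels turns symmetrization of the former into `dlt`. -/
lemma bracket {n : ℕ} {f : En n → ℝ} (hm : Measurable f) (h0 : ∀ x, 0 ≤ f x) {v w : En n}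
    (hv : ‖v‖ = 1) (hvw : ⟪v, w⟫ = 0) {g : ℝ → ℝ} {A B : ℝ} (hg : Profile g A B)
    {θ : En n → ℝ} (hθ : Continuous θ) (hθ0 : ∀ x, 0 ≤ θ x) {ε : ℝ} (hε : 0 < ε) {x : En n}
    (hi : Integrable (fun s : ℝ => f (x + s • v)))
    (hgood : ∀ h : ℝ, 0 < h → tailF f v (x + h • v) < tailF f v x) {M : ℝ}
    (hM1 : -M ≤ ⟪x, w⟫) (hM2 : ⟪x, w⟫ + ε * θ (prj v x) ≤ M) :
    (∫ r in Ioc (-M) M, symInd f v (Ufun v w θ g ε) x r) - (Ufun v w θ g ε x + M)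
      = ε * (θ (prj v x) * dlt f v g x) := by
  have hUl : ∀ u : ℝ, Ufun v w θ g ε (x + u • v)
      = ⟪x, w⟫ + ε * (θ (prj v x) * g (⟪x, v⟫ + u)) := by
    intro u
    unfold Ufun
    rw [prj_line hv, inner_line hv, inner_add_left, real_inner_smul_left, hvw]
    simp
  have hUm : Measurable (Ufun v w θ g ε) := by
    unfold Ufun prj
    have := hg.smooth.continuous
    exact Continuous.measurable (by fun_prop)
  have hE : ∀ r, MeasurableSet {x : En n | r < Ufun v w θ g ε x} := fun σ =>
    measurableSet_lt measurable_const hUm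
  set t := ⟪x, w⟫
  set ϑ := θ (prj v x)
  have hϑ : 0 ≤ ϑ := hθ0 _
  have hεϑ : 0 ≤ ε * ϑ := by positivity
  set h := symInd f v (Ufun v w θ g ε) x
  have hInteg : ∀ a b : ℝ, IntervalIntegrable h volume a b := fun a b =>
    ⟨symInd_integrable hm v hUm x a b, symInd_integrable hm v hUm x b a⟩
  have p1 : ∫ r in (-M)..t, h r = t + M := by
    rw [intervalIntegral.integral_congr_ae (g := fun _ => (1 : ℝ))]
    · simp
    · have : ∀ᵐ r : ℝ, r ≠ t := Measure.ae_ne volume t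
      filter_upwards [this] with r hr hr2
      rw [uIoc_of_le hM1] at hr2
      have hlt : r < t := lt_of_le_of_ne hr2.2 hr
      show symInd f v (Ufun v w θ g ε) x r = 1
      rw [symInd_eq, if_pos]
      refine tailF_le_massF h0 hi (hE r) fun u _ => ?_
      show r < Ufun v w θ g ε (x + u • v)
      rw [hUl]
      have := hg.nonneg (⟪x, v⟫ + u)
      have : 0 ≤ ε * (ϑ * g (⟪x, v⟫ + u)) := by positivity
      linarith
  have p3 : ∫ r in (t + ε * ϑ)..M, h r = 0 := by
    rw [intervalIntegral.integral_congr_ae (g := fun _ => (0 : ℝ))]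
    · simp
    · refine Eventually.of_forall fun r hr => ?_
      rw [uIoc_of_le hM2] at hr
      show symInd f v (Ufun v w θ g ε) x r = 0
      rw [symInd_eq, if_neg]
      rw [not_le]
      have e : massF f v {x | r < Ufun v w θ g ε x} x = massF f v ∅ x := by
        refine massF_congr fun u => ?_
        simp only [mem_ofPred_eq, mem_empty_iff_false, iff_false, not_lt]
        rw [hUl]
        have := hg.le_one (⟪x, v⟫ + u)
        have : ε * (ϑ * g (⟪x, v⟫ + u)) ≤ ε * (ϑ * 1) := by gcongr
        linarith [hr.1]
      rw [e]
      have : massF f v ∅ x = 0 := by simp [massF]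
      rw [this]
      exact lt_of_le_of_lt (tailF_nonneg h0 _ _) (hgood 1 one_pos)
  have p2 : ∫ r in t..(t + ε * ϑ), h r
      = ε * ϑ * ∫ σ in Ioc (0 : ℝ) 1, symInd f v (fun x => g ⟪x, v⟫) x σ := by
    rw [← intervalIntegral.integral_of_le zero_le_one]
    have e := intervalIntegral.smul_integral_comp_add_mul (a := 0) (b := 1) h (ε * ϑ) t
    simp only [mul_zero, add_zero, mul_one, smul_eq_mul] at e
    rw [← e]
    rcases eq_or_lt_of_le hεϑ with hz | hpos
    · rw [← hz]; simp
    congr 1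
    refine intervalIntegral.integral_congr fun σ _ => ?_
    show symInd f v (Ufun v w θ g ε) x (t + ε * ϑ * σ) = _
    simp only [symInd_eq]
    congr 2
    refine massF_congr fun u => ?_
    simp only [mem_ofPred_eq]
    rw [hUl, inner_line hv, ← mul_assoc, add_lt_add_iff_left, mul_lt_mul_iff_right₀ hpos]
  rw [← intervalIntegral.integral_of_le (by linarith),
    ← intervalIntegral.integral_add_adjacent_intervals (hInteg (-M) t) (hInteg t M),
    ← intervalIntegral.integral_add_adjacent_intervals (hInteg t (t + ε * ϑ)) (hInteg _ M),
    p1, p2, p3]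
  simp only [Ufun, dlt]
  ring

/-! ### Perturbed linear functions -/

lemma perim_congr_set {n : ℕ} {f : En n → ℝ} {f' : En n → En n} {E E' : Set (En n)}
    (h : E =ᵐ[volume] E') : perim f f' univ E = perim f f' univ E' := by
  unfold perim bvVar
  refine iSup_congr fun φ => iSup_congr fun _ => ?_
  congr 1
  rw [setIntegral_univ, setIntegral_univ]
  refine integral_congr_ae ?_
  filter_upwards [indicator_ae_eq_of_ae_eq_set (f := fun _ => (1 : ℝ)) h] with x hx
  rw [hx]

/-- The projection `prj v` as a continuous linear map. -/
def prjL {n : ℕ} (v : En n) : En n →L[ℝ] En n :=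
  ContinuousLinearMap.id ℝ (En n) - (innerSL ℝ v).smulRight v

lemma prjL_apply {n : ℕ} (v x : En n) : prjL v x = prj v x := by
  simp [prjL, prj, real_inner_comm]

lemma profile_deriv_bounded {g : ℝ → ℝ} {A B : ℝ} (hg : Profile g A B) :
    ∃ C, ∀ y, ‖fderiv ℝ g y‖ ≤ C := by
  have hc : HasCompactSupport (fderiv ℝ g) := by
    refine HasCompactSupport.intro (K := Icc A B) isCompact_Icc fun s hs => ?_
    rw [mem_Icc, not_and_or, not_le, not_le] at hs
    rcases hs with hs | hs
    · have : g =ᶠ[𝓝 s] fun _ => 0 := by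
        filter_upwards [Iio_mem_nhds hs] with u hu
        exact hg.low u (le_of_lt hu)
      rw [this.fderiv_eq]; simp
    · have : g =ᶠ[𝓝 s] fun _ => 1 := by
        filter_upwards [Ioi_mem_nhds hs] with u hu
        exact hg.high u (le_of_lt hu)
      rw [this.fderiv_eq]; simp
  obtain ⟨C, hC⟩ := (hg.smooth.continuous_fderiv (by simp)).norm.bddAbove_range_of_hasCompactSupport
    hc.norm
  exact ⟨C, fun y => hC ⟨y, rfl⟩⟩

lemma theta_contDiff {n : ℕ} (v : En n) {g : ℝ → ℝ} {A B : ℝ} (hg : Profile g A B)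
    {θ : En n → ℝ} (hθ : ContDiff ℝ 1 θ) :
    ContDiff ℝ 1 (fun x => θ (prj v x) * g ⟪x, v⟫) := by
  have h1 : ContDiff ℝ 1 (fun x => θ (prj v x)) := by
    simp only [← prjL_apply]
    exact hθ.comp (prjL v).contDiff
  have h2 : ContDiff ℝ 1 (fun x : En n => g ⟪x, v⟫) := by
    simp only [real_inner_comm v]
    exact hg.smooth.comp (innerSL ℝ v).contDiff
  exact h1.mul h2

lemma theta_bound {n : ℕ} (v : En n) {g : ℝ → ℝ} {A B : ℝ} (hg : Profile g A B)
    {θ : En n → ℝ} (hθ : ContDiff ℝ 1 θ) (hc : HasCompactSupport θ) :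
    ∃ K, 0 ≤ K ∧ ∀ x, ‖fderiv ℝ (fun x => θ (prj v x) * g ⟪x, v⟫) x‖ ≤ K := by
  obtain ⟨C1, h1⟩ := profile_deriv_bounded hg
  obtain ⟨C2, h2⟩ := (hθ.continuous_fderiv (by simp)).norm.bddAbove_range_of_hasCompactSupport
    (hc.fderiv (𝕜 := ℝ)).norm
  obtain ⟨C3, h3⟩ := hθ.continuous.norm.bddAbove_range_of_hasCompactSupport hc.norm
  have key : ∀ x, ‖fderiv ℝ (fun x => θ (prj v x) * g ⟪x, v⟫) x‖
      ≤ C3 * (C1 * ‖innerSL ℝ v‖) + 1 * (C2 * ‖prjL v‖) := by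
    intro x
    have d1 : HasFDerivAt (fun x => θ (prj v x)) ((fderiv ℝ θ (prj v x)).comp (prjL v)) x := by
      have a := (hθ.differentiable (by simp) (prjL v x)).hasFDerivAt.comp x (prjL v).hasFDerivAt
      simp only [prjL_apply] at a
      refine a.congr_of_eventuallyEq (Eventually.of_forall fun y => ?_)
      simp [prjL_apply]
    have d2 : HasFDerivAt (fun x : En n => g ⟪x, v⟫)
        ((fderiv ℝ g ⟪x, v⟫).comp (innerSL ℝ v)) x := by
      have a := (hg.smooth.differentiable (by simp) (innerSL ℝ v x)).hasFDerivAt.comp x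
        (innerSL ℝ v).hasFDerivAt
      simp only [innerSL_apply_apply, real_inner_comm x v] at a
      refine a.congr_of_eventuallyEq (Eventually.of_forall fun y => ?_)
      simp [real_inner_comm]
    have d3 : HasFDerivAt (fun x => θ (prj v x) * g ⟪x, v⟫) _ x := d1.mul d2
    rw [d3.fderiv]
    refine (norm_add_le _ _).trans ?_
    rw [norm_smul, norm_smul]
    have b1 := h1 ⟪x, v⟫
    have b2 : ‖fderiv ℝ θ (prj v x)‖ ≤ C2 := h2 ⟨_, rfl⟩
    have b3 : ‖θ (prj v x)‖ ≤ C3 := h3 ⟨_, rfl⟩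
    have b4 : ‖g ⟪x, v⟫‖ ≤ 1 := by
      rw [Real.norm_eq_abs, abs_of_nonneg (hg.nonneg _)]; exact hg.le_one _
    have n3 : 0 ≤ C3 := (norm_nonneg _).trans b3
    gcongr
    · exact (ContinuousLinearMap.opNorm_comp_le _ _).trans (by gcongr)
    · exact (ContinuousLinearMap.opNorm_comp_le _ _).trans (by gcongr)
  exact ⟨_, (norm_nonneg _).trans (key 0), key⟩

/-- For a unit vector `w` and a small perturbation `p`, the norm of `w + p` exceeds its
`w`-component only to second order. -/
lemma norm_perturb {n : ℕ} {w : En n} (hw : ‖w‖ = 1) (L : En n →L[ℝ] ℝ) {ε K : ℝ} (hε : 0 < ε)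
    (hL : ‖L‖ ≤ K) (hεK : ε * K ≤ 1 / 2) {u : En n} (hu : ‖u‖ ≤ 1) :
    |⟪u, w⟫ + ε * L u| ≤ 1 + ε * L w + ε ^ 2 * K ^ 2 := by
  set p := (InnerProductSpace.toDual ℝ (En n)).symm L with hp
  have hpL : ∀ y, L y = ⟪p, y⟫ := fun y => by
    rw [hp, InnerProductSpace.toDual_symm_apply]
  have hpn : ‖p‖ ≤ K := by rw [hp, LinearIsometryEquiv.norm_map]; exact hL
  have e : ⟪u, w⟫ + ε * L u = ⟪w + ε • p, u⟫ := by
    rw [hpL, inner_add_left, real_inner_smul_left, real_inner_comm w u]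
  rw [e]
  refine (abs_real_inner_le_norm _ _).trans ?_
  have h1 : ‖w + ε • p‖ * ‖u‖ ≤ ‖w + ε • p‖ := mul_le_of_le_one_right (norm_nonneg _) hu
  refine h1.trans ?_
  have hpw : |L w| ≤ K := by
    rw [hpL]
    refine (abs_real_inner_le_norm _ _).trans ?_
    rw [hw, mul_one]; exact hpn
  have hK : 0 ≤ K := (norm_nonneg _).trans hpn
  have hb := abs_le.1 hpw
  have ha : 1 / 2 ≤ 1 + ε * L w := by nlinarith
  refine abs_le_of_sq_le_sq' ?_ (by positivity) |>.2
  have hsq : ‖w + ε • p‖ ^ 2 = 1 + 2 * (ε * L w) + ε ^ 2 * ‖p‖ ^ 2 := by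
    rw [norm_add_sq_real, hw, real_inner_smul_right, norm_smul, hpL, real_inner_comm w p,
      Real.norm_eq_abs, mul_pow, sq_abs]
    ring
  rw [hsq]
  have : ‖p‖ ^ 2 ≤ K ^ 2 := by gcongr
  have h3 : ε ^ 2 * ‖p‖ ^ 2 ≤ ε ^ 2 * K ^ 2 := by gcongr
  have h4 : 0 ≤ ε ^ 2 * K ^ 2 := by positivity
  nlinarith [sq_nonneg (ε * L w)]

lemma exists_tail_small {n : ℕ} {f : En n → ℝ} (hfi : Integrable f) {η : ℝ} (hη : 0 < η) (R : ℝ) :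
    ∃ N : ℝ, R < N ∧ 0 < N ∧ ∫ x in (Metric.ball (0 : En n) N)ᶜ, f x ≤ η := by
  have h : Tendsto (fun N : ℕ => ∫ x in (Metric.ball (0 : En n) N)ᶜ, f x) atTop (𝓝 0) := by
    have := tendsto_setIntegral_of_antitone (μ := volume) (f := f)
      (s := fun N : ℕ => (Metric.ball (0 : En n) N)ᶜ)
      (fun N => Metric.isOpen_ball.measurableSet.compl)
      (fun a b hab => compl_subset_compl.2 (Metric.ball_subset_ball (by exact_mod_cast hab)))
      ⟨0, hfi.integrableOn⟩
    have e : (⋂ N : ℕ, (Metric.ball (0 : En n) N)ᶜ) = ∅ := by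
      rw [← compl_iUnion, Metric.iUnion_ball_nat]; simp
    simpa [e] using this
  have h2 := h.eventually (ge_mem_nhds hη)
  have h3 := (tendsto_natCast_atTop_atTop (R := ℝ)).eventually_gt_atTop (max R 0)
  obtain ⟨N, a, b⟩ := (h2.and h3).exists
  exact ⟨N, (le_max_left _ _).trans_lt b, (le_max_right _ _).trans_lt b, a⟩

/-- The region where the perturbation and its symmetrization can differ is bounded. -/
lemma window_bounded {n : ℕ} {v : En n} (hv : ‖v‖ = 1) {θ : En n → ℝ} (hc : HasCompactSupport θ)
    (A B : ℝ) : ∃ R, ∀ x : En n, θ (prj v x) ≠ 0 → A ≤ ⟪x, v⟫ → ⟪x, v⟫ ≤ B → ‖x‖ ≤ R := by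
  obtain ⟨C, hC⟩ := (show IsCompact (tsupport θ) from hc).isBounded.exists_norm_le
  refine ⟨C + max |A| |B|, fun x h1 h2 h3 => ?_⟩
  have : x = prj v x + ⟪x, v⟫ • v := by simp [prj]
  rw [this]
  refine (norm_add_le _ _).trans ?_
  rw [norm_smul, hv, mul_one]
  exact add_le_add (hC _ (subset_tsupport _ h1)) (abs_le_max_abs_abs h2 h3)

/-! ### The first variation inequality -/

/-- The set of points whose fibre tail is at most the fibre mass of `{r < U}` is, up to null sets,
the symmetrization of `{r < U}`, so its perimeter is controlled. -/
lemma perim_symSet_le {n : ℕ} {f : En n → ℝ} {f' : En n → En n} (hW : MemW f f')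
    (hPS : IsPSMeasure f f') {v : En n} (hv : ‖v‖ = 1) {U : En n → ℝ} (hU : Measurable U) (r : ℝ) :
    perim f f' univ {x | (x, r) ∈ {q : En n × ℝ | tailF f v q.1 ≤ massF f v {x | q.2 < U x} q.1}} ≤
      perim f f' univ {x | r < U x} := by
  have hE : MeasurableSet {x | r < U x} := measurableSet_lt measurable_const hU
  have h := perim_congr_set (f := f) (f' := f') (symm_ae hW.2.1 hW.1 hv hE)
  by_cases ht : perim f f' univ {x | r < U x} < ⊤
  · have := hPS v hv _ hE.nullMeasurableSet ht
    rw [h] at this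
    exact this
  · rw [not_lt_top_iff.1 ht]; exact le_top

/-- The first variation at finite `ε`. The PS inequality is applied to the superlevel sets of
`Ufun v w θ g ε` and integrated over all levels, testing the symmetrized sets with the field `-Ψ w`
for a cutoff `Ψ`. The zeroth order terms cancel by integration by parts, and what remains beyond
the linear term is `O(ε²)`. -/
lemma variation_eps {n : ℕ} {f : En n → ℝ} {f' : En n → En n} (hm : Measurable f)
    (hm' : Measurable f') (hW : MemW f f') (hPS : IsPSMeasure f f') {v w : En n} (hv : ‖v‖ = 1)
    (hw : ‖w‖ = 1) (hvw : ⟪v, w⟫ = 0) {g : ℝ → ℝ} {A B : ℝ} (hg : Profile g A B)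
    {θ : En n → ℝ} (hθ : ContDiff ℝ 1 θ) (hc : HasCompactSupport θ) (hθ0 : ∀ x, 0 ≤ θ x)
    {K : ℝ} (hK : ∀ x, ‖fderiv ℝ (fun x => θ (prj v x) * g ⟪x, v⟫) x‖ ≤ K)
    {ε : ℝ} (hε : 0 < ε) (hεK : ε * K ≤ 1 / 2) :
    -(ε * ∫ x, ⟪w, f' x⟫ * (θ (prj v x) * dlt f v g x)) ≤ ε ^ 2 * (2 + K ^ 2 * ∫ x, f x) := by
  obtain ⟨R, hR⟩ := window_bounded hv hc A B
  obtain ⟨N, hRN, hN0, hN⟩ := exists_tail_small hW.2.1 (show 0 < ε ^ 2 by positivity) R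
  obtain ⟨T, hT⟩ := hθ.continuous.bddAbove_range_of_hasCompactSupport hc
  replace hT : ∀ x, θ x ≤ T := fun x => hT ⟨x, rfl⟩
  have hT0 : 0 ≤ T := (hθ0 0).trans (hT 0)
  let Ψ : ContDiffBump (0 : En n) := ⟨N, N + 1, hN0, by linarith⟩
  have hΨ : ContDiff ℝ 1 Ψ := Ψ.contDiff
  have hΨc : HasCompactSupport Ψ := Ψ.hasCompactSupport
  set M : ℝ := N + 1 + ε * T with hM
  set U := Ufun v w θ g ε with hUdef
  set Θ := fun x : En n => θ (prj v x) * g ⟪x, v⟫ with hΘdef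
  have hΘ : ContDiff ℝ 1 Θ := theta_contDiff v hg hθ
  have hUe : U = fun x => ⟪x, w⟫ + ε * Θ x := rfl
  have hinn : ContDiff ℝ 1 (fun x : En n => ⟪x, w⟫) := contDiff_id.inner ℝ contDiff_const
  have hU : ContDiff ℝ 1 U := by
    rw [hUe]; exact hinn.add (contDiff_const.mul hΘ)
  have hDU : ∀ x u, fderiv ℝ U x u = ⟪u, w⟫ + ε * fderiv ℝ Θ x u := by
    intro x u
    have h1 : HasFDerivAt (fun x : En n => ⟪x, w⟫) (innerSL ℝ w) x := by
      have := (innerSL ℝ w).hasFDerivAt (x := x)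
      refine this.congr_of_eventuallyEq (Eventually.of_forall fun y => ?_)
      simp [real_inner_comm]
    have h2 := h1.add ((hΘ.differentiable (by simp) x).hasFDerivAt.const_mul ε)
    rw [hUe]
    erw [HasFDerivAt.fderiv h2]
    simp [real_inner_comm]
  set Bd := fun x => 1 + ε * fderiv ℝ Θ x w + ε ^ 2 * K ^ 2 with hBd
  have hDΘc : Continuous (fun x => fderiv ℝ Θ x w) :=
    (hΘ.continuous_fderiv (by simp)).clm_apply continuous_const
  have hBdc : Continuous Bd := by fun_prop
  have hDΘb : ∀ x, |fderiv ℝ Θ x w| ≤ K := fun x => by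
    have := (fderiv ℝ Θ x).le_of_opNorm_le (hK x) w
    rwa [hw, mul_one, Real.norm_eq_abs] at this
  have hBb : ∀ x, ‖Bd x‖ ≤ 2 + ε ^ 2 * K ^ 2 := fun x => by
    have h1 := abs_le.1 (hDΘb x)
    have h2 : 0 ≤ ε ^ 2 * K ^ 2 := by positivity
    have h3 : ε * fderiv ℝ Θ x w ≤ ε * K := by gcongr; exact h1.2
    have h4 : ε * (-K) ≤ ε * fderiv ℝ Θ x w := by gcongr; exact h1.1
    rw [Real.norm_eq_abs, abs_le]; constructor <;> simp only [hBd] <;> linarith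
  have hBi : Integrable (fun x => f x * Bd x) := hW.2.1.mul_bdd hBdc.aestronglyMeasurable
    (Eventually.of_forall hBb)
  set φ : En n → En n := fun x => (-Ψ x) • w with hφdef
  have hφ1 : ContDiff ℝ 1 φ := hΨ.neg.smul contDiff_const
  have hφc : HasCompactSupport φ := hΨc.mono fun x hx hx' => hx (by simp [hφdef, hx'])
  have hφ : IsTestField univ φ := by
    refine ⟨hφ1, hφc, subset_univ _, fun x => ?_⟩
    rw [hφdef, norm_smul, hw, mul_one, norm_neg, Real.norm_of_nonneg Ψ.nonneg]
    exact Ψ.le_one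
  have hco := coarea_bound hm hW hU (Bd := Bd)
    (fun x u hu => by rw [hDU]; exact norm_perturb hw _ hε (hK x) hεK hu) hBdc hBi
    (symSet_measurable hm v hU.continuous.measurable)
    (perim_symSet_le hW hPS hv hU.continuous.measurable) hφ M
  change ∫ x, (∫ r in Ioc (-M) M, symInd f v U x r) * (f x * dvg φ x + ⟪φ x, f' x⟫) ≤ _ at hco
  have hib := ibp_field hW.2.2 (hU.add (contDiff_const (c := M))) hφ1 hφc
  have hib2 : - ∫ x, f x * fderiv ℝ (fun x => U x + M) x (φ x) =
      ∫ x, f x * (Ψ x * (1 + ε * fderiv ℝ Θ x w)) := by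
    rw [← integral_neg]
    refine integral_congr_ae (Eventually.of_forall fun x => ?_)
    simp only [fderiv_add_const, hφdef, map_smul, hDU, smul_eq_mul]
    rw [real_inner_smul_left, real_inner_self_eq_norm_sq, hw]; ring
  rw [hib2] at hib
  set G := fun x => f x * dvg φ x + ⟪φ x, f' x⟫ with hGdef
  have hGi : Integrable G := (integrable_mul_dvg hW.2.2.1 hφ1 hφc).add
      (integrable_inner_field hW.2.2.2.1 hφ1.continuous hφc)
  have hGe : ∀ x, G x = -(f x * fderiv ℝ Ψ x w + Ψ x * ⟪w, f' x⟫) := fun x => by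
    simp only [hGdef, hφdef]
    rw [dvg_smul (hΨ.neg.differentiable (by simp) x) (differentiableAt_const _), dvg_const,
      real_inner_smul_left, fderiv_fun_neg]
    simp; ring
  have hG0 : ∀ x, N + 1 < ‖x‖ → G x = 0 := fun x hx => by
    have hx' : x ∉ tsupport Ψ := by
      rw [Ψ.tsupport_eq, Metric.mem_closedBall, dist_zero_right]; exact not_le.2 hx
    rw [hGe, image_eq_zero_of_notMem_tsupport hx']
    have := fun h => hx' (tsupport_fderiv_subset ℝ (f := Ψ) h)
    rw [image_eq_zero_of_notMem_tsupport this]; simp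
  have hG1 : ∀ x, ‖x‖ < N → G x = -⟪w, f' x⟫ := fun x hx => by
    have hx1 : Ψ =ᶠ[𝓝 x] 1 := Ψ.eventuallyEq_one_of_mem_ball (by simpa [Ψ] using hx)
    rw [hGe, hx1.fderiv_eq, hx1.eq_of_nhds]; simp [Pi.one_def]
  have hI1 : Integrable (fun x => (∫ r in Ioc (-M) M, symInd f v U x r) * G x) := by
    refine hGi.bdd_mul (c := M - -M) ?_ (Eventually.of_forall fun x => ?_)
    · exact ((symInd_measurable hm v hU.continuous.measurable).stronglyMeasurable.integral_prod_right
        (ν := volume.restrict (Ioc (-M) M))).aestronglyMeasurable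
    · have := norm_setIntegral_le_of_norm_le_const (μ := volume) (s := Ioc (-M) M) (C := 1)
        (f := symInd f v U x) (by simp)
        (fun r _ => by rw [Real.norm_of_nonneg (symInd_nonneg ..)]; exact symInd_le_one ..)
      have hM0 : 0 ≤ M := by positivity
      simpa [hM0] using this
  have hI2 : Integrable (fun x => (U x + M) * G x) := by
    obtain ⟨C, hC⟩ := (isCompact_closedBall (0 : En n) (N + 1)).exists_bound_of_continuousOn
      (f := fun x => U x + M) (hU.continuous.add continuous_const).continuousOn
    refine (hGi.norm.const_mul C).mono' ((hU.continuous.add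
      continuous_const).aestronglyMeasurable.mul hGi.1) (Eventually.of_forall fun x => ?_)
    by_cases hx : ‖x‖ ≤ N + 1
    · rw [norm_mul]; gcongr; exact hC x (by simpa using hx)
    · rw [hG0 x (not_le.1 hx)]; simp
  have hmain : -(ε * ∫ x, ⟪w, f' x⟫ * (θ (prj v x) * dlt f v g x)) =
      (∫ x, (∫ r in Ioc (-M) M, symInd f v U x r) * G x) - ∫ x, (U x + M) * G x := by
    rw [← integral_sub hI1 hI2, ← integral_const_mul, ← integral_neg]
    refine integral_congr_ae ?_
    filter_upwards [grad_zero_of_zero hm hm' hW w, tailF_good hm hW.2.1 hW.1 hv,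
      integrable_line' hv hW.2.1] with x h1 h2 h3
    rw [← sub_mul]
    by_cases hf : f x = 0
    · rw [hGe, h1 hf, hf]; simp
    · have hgood := h2 hf
      by_cases hx : ‖x‖ ≤ N + 1
      · have hxw : |⟪x, w⟫| ≤ N + 1 := by
          have := abs_real_inner_le_norm x w
          rw [hw, mul_one] at this; linarith
        rw [abs_le] at hxw
        have hεT : ε * θ (prj v x) ≤ ε * T := by gcongr; exact hT _
        have hεT0 : 0 ≤ ε * T := by positivity
        rw [bracket hm hW.1 hv hvw hg hθ.continuous hθ0 hε h3 hgood (M := M)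
          (by linarith) (by linarith)]
        by_cases hz : θ (prj v x) * dlt f v g x = 0
        · rw [hz]; simp
        · have hθx := left_ne_zero_of_mul hz
          have hdx := right_ne_zero_of_mul hz
          have hwin : A ≤ ⟪x, v⟫ ∧ ⟪x, v⟫ ≤ B := by
            by_contra hcon
            rw [not_and_or, not_le, not_le] at hcon
            exact hdx (dlt_eq_zero hW.1 hv hg h3 hgood hcon)
          rw [hG1 x ((hR x hθx hwin.1 hwin.2).trans_lt hRN)]
          ring
      · rw [hG0 x (not_le.1 hx)]
        have hz : θ (prj v x) * dlt f v g x = 0 := by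
          by_contra hz
          have hθx := left_ne_zero_of_mul hz
          have hdx := right_ne_zero_of_mul hz
          have hwin : A ≤ ⟪x, v⟫ ∧ ⟪x, v⟫ ≤ B := by
            by_contra hcon
            rw [not_and_or, not_le, not_le] at hcon
            exact hdx (dlt_eq_zero hW.1 hv hg h3 hgood hcon)
          have := hR x hθx hwin.1 hwin.2
          linarith
        rw [hz]; simp
  rw [hmain, hib]
  -- the remaining error: `f * ((1 - Ψ) * DU(w) + ε² K²)`
  have hI3 : Integrable (fun x => f x * (Ψ x * (1 + ε * fderiv ℝ Θ x w))) := by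
    have hcont : Continuous (fun x => Ψ x * (1 + ε * fderiv ℝ Θ x w)) :=
      hΨ.continuous.mul (by fun_prop)
    obtain ⟨C, hC⟩ := hcont.norm.bddAbove_range_of_hasCompactSupport
      (HasCompactSupport.norm (hΨc.mul_right))
    exact hW.2.1.mul_bdd hcont.aestronglyMeasurable (Eventually.of_forall fun x => hC ⟨x, rfl⟩)
  have hlast : (∫ x, f x * Bd x) - ∫ x, f x * (Ψ x * (1 + ε * fderiv ℝ Θ x w)) ≤
      ∫ x, (2 * (Metric.ball (0 : En n) N)ᶜ.indicator f x + ε ^ 2 * K ^ 2 * f x) := by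
    rw [← integral_sub hBi hI3]
    refine integral_mono (hBi.sub hI3) ?_ fun x => ?_
    · exact ((hW.2.1.indicator Metric.isOpen_ball.measurableSet.compl).const_mul 2).add
        (hW.2.1.const_mul _)
    · have hfx := hW.1 x
      have h1 := abs_le.1 (hDΘb x)
      have h3 : ε * fderiv ℝ Θ x w ≤ ε * K := by gcongr; exact h1.2
      have h4 : ε * (-K) ≤ ε * fderiv ℝ Θ x w := by gcongr; exact h1.1
      simp only [hBd]
      by_cases hx : x ∈ Metric.ball (0 : En n) N
      · have : Ψ x = 1 := Ψ.one_of_mem_closedBall (Metric.ball_subset_closedBall hx)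
        rw [this, indicator_of_notMem (by simpa using hx)]
        apply le_of_eq; ring
      · rw [indicator_of_mem (by simpa using hx)]
        have e1 : (0:ℝ) ≤ Ψ x := Ψ.nonneg
        have e2 : 0 ≤ 1 + ε * fderiv ℝ Θ x w := by linarith
        have e3 : 1 + ε * fderiv ℝ Θ x w ≤ 2 := by linarith
        have e4 : 0 ≤ f x * (Ψ x * (1 + ε * fderiv ℝ Θ x w)) := by positivity
        nlinarith [mul_le_mul_of_nonneg_left e3 hfx]
  rw [integral_add ((hW.2.1.indicator Metric.isOpen_ball.measurableSet.compl).const_mul 2)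
        (hW.2.1.const_mul _), integral_const_mul, integral_const_mul,
    integral_indicator Metric.isOpen_ball.measurableSet.compl] at hlast
  linarith

/-- First variation: the linear term in the symmetrization inequality has a sign. -/
lemma variation_ineq {n : ℕ} {f : En n → ℝ} {f' : En n → En n} (hm : Measurable f)
    (hm' : Measurable f') (hW : MemW f f') (hPS : IsPSMeasure f f') {v w : En n} (hv : ‖v‖ = 1)
    (hw : ‖w‖ = 1) (hvw : ⟪v, w⟫ = 0) {g : ℝ → ℝ} {A B : ℝ} (hg : Profile g A B)
    {θ : En n → ℝ} (hθ : ContDiff ℝ 1 θ) (hc : HasCompactSupport θ) (hθ0 : ∀ x, 0 ≤ θ x) :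
    0 ≤ ∫ x, ⟪w, f' x⟫ * (θ (prj v x) * dlt f v g x) := by
  obtain ⟨K, hK0, hK⟩ := theta_bound v hg hθ hc
  set Q := ∫ x, ⟪w, f' x⟫ * (θ (prj v x) * dlt f v g x)
  set C := 2 + K ^ 2 * ∫ x, f x
  by_contra hQ
  push Not at hQ
  have hC : 0 < C := by
    have : 0 ≤ ∫ x, f x := integral_nonneg hW.1
    positivity
  set ε := min (1 / (2 * (K + 1))) (-Q / (2 * C)) with hεd
  have hε : 0 < ε := lt_min (by positivity) (div_pos (by linarith) (by positivity))
  have h1 : ε * K ≤ 1 / 2 := by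
    have : ε ≤ 1 / (2 * (K + 1)) := min_le_left _ _
    rw [le_div_iff₀ (by positivity)] at this
    nlinarith
  have h2 : ε * (2 * C) ≤ -Q := by
    have : ε ≤ -Q / (2 * C) := min_le_right _ _
    rwa [le_div_iff₀ (by positivity)] at this
  have h := variation_eps hm hm' hW hPS hv hw hvw hg hθ hc hθ0 hK hε h1
  have h3 : -Q ≤ ε * C := by
    have : ε * (-Q) ≤ ε * (ε * C) := by nlinarith
    exact le_of_mul_le_mul_left this hε
  nlinarith

/-! ### The first variation on fibres -/

/-- A density supported in a slab which is orthogonal to all functions of the projection to `v^⊥`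
integrates to zero along almost every line in direction `v`. -/
lemma fibre_zero {n : ℕ} {v : En n} (hv : ‖v‖ = 1) {h : En n → ℝ} (hm : Measurable h)
    (hh : LocallyIntegrable h) {A B : ℝ} (hwin : ∀ x, (⟪x, v⟫ < A ∨ B < ⟪x, v⟫) → h x = 0)
    (H : ∀ θ : En n → ℝ, ContDiff ℝ 1 θ → HasCompactSupport θ → ∫ x, h x * θ (prj v x) = 0) :
    ∀ᵐ z : En n, ∫ s : ℝ, h (z + s • v) = 0 := by
  set L0 := max |A| |B| with hL0
  have hinn : ∀ x : En n, |⟪x, v⟫| ≤ ‖x‖ := fun x => by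
    have := abs_real_inner_le_norm x v
    rwa [hv, mul_one] at this
  have hsv : ∀ s : ℝ, ‖s • v‖ = |s| := fun s => by rw [norm_smul, hv, mul_one, Real.norm_eq_abs]
  have hwin' : ∀ x, h x ≠ 0 → |⟪x, v⟫| ≤ L0 := fun x hx => by
    by_contra hc
    push Not at hc
    have h1 := (le_max_left |A| |B|).trans_lt hc
    have h2 := (le_max_right |A| |B|).trans_lt hc
    apply hx
    apply hwin
    rcases le_or_gt 0 ⟪x, v⟫ with h0 | h0
    · right; rw [abs_of_nonneg h0] at h2; exact (le_abs_self _).trans_lt h2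
    · left; rw [abs_of_neg h0] at h1; linarith [neg_abs_le A]
  -- truncations in space and along the fibre
  let g : ℝ → En n → ℝ := fun L => (Metric.closedBall (0 : En n) L).indicator h
  let χ : ℝ → ℝ → ℝ := fun L => (Icc (-L) L).indicator (fun _ => (1 : ℝ))
  have hg : ∀ L, Integrable (g L) := fun L => by
    rw [integrable_indicator_iff Metric.isClosed_closedBall.measurableSet]
    exact hh.integrableOn_isCompact (isCompact_closedBall _ _)
  have hχ : ∀ L, Integrable (χ L) := fun L => by
    rw [integrable_indicator_iff measurableSet_Icc]
    exact integrableOn_const (by simp)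
  have hχ1 : ∀ L s, |s| ≤ L → χ L s = 1 := fun L s hs => by
    simp only [χ]; rw [indicator_of_mem]; exact abs_le.1 hs
  have hg1 : ∀ L x, ‖x‖ ≤ L → g L x = h x := fun L x hx => by
    simp only [g]; rw [indicator_of_mem]; simpa using hx
  have hmeas2 : Measurable (fun q : En n × ℝ => h (q.1 + q.2 • v)) := hm.comp (by fun_prop)
  have hA : ∀ R (x : En n), ‖x‖ ≤ R → ∀ s, h (x + s • v) = χ (2 * R + L0) s * g (2 * R + L0) (x + s • v) := by
    intro R x hx s
    by_cases h0 : h (x + s • v) = 0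
    · rw [h0]; simp only [g]
      by_cases hb : x + s • v ∈ Metric.closedBall (0 : En n) (2 * R + L0)
      · rw [indicator_of_mem hb, h0, mul_zero]
      · rw [indicator_of_notMem hb, mul_zero]
    · have h1 := hwin' _ h0
      rw [inner_line hv] at h1
      have h2 := hinn x
      have h3 : |s| ≤ R + L0 := by
        have : s = (⟪x, v⟫ + s) - ⟪x, v⟫ := by ring
        rw [this]; exact (abs_sub _ _).trans (by linarith)
      have hR0 : 0 ≤ R := (norm_nonneg _).trans hx
      rw [hχ1 _ _ (by linarith), hg1, one_mul]
      refine (norm_add_le _ _).trans ?_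
      rw [hsv]; linarith
  have hJ : LocallyIntegrable (fun z : En n => ∫ s : ℝ, h (z + s • v)) := by
    rw [locallyIntegrable_iff]
    intro k hk
    obtain ⟨R, hR⟩ := hk.isBounded.exists_norm_le
    have := (integrable_line v (hg (2 * R + L0)) (hχ (2 * R + L0))).integral_prod_left
    refine (this.integrableOn (s := k)).congr_fun (fun z hz => ?_) hk.measurableSet
    exact integral_congr_ae (Eventually.of_forall fun s => (hA R z (hR z hz) s).symm)
  refine ae_eq_zero_of_integral_contDiff_smul_eq_zero hJ fun Ξ hΞ' hΞc => ?_
  have hΞ : ContDiff ℝ 1 Ξ := hΞ'.of_le (by exact_mod_cast le_top)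
  obtain ⟨R, hR⟩ := (show IsCompact (tsupport Ξ) from hΞc).isBounded.exists_norm_le
  replace hR : ∀ x, Ξ x ≠ 0 → ‖x‖ ≤ R := fun x hx => hR x (subset_tsupport _ hx)
  obtain ⟨C, hC⟩ := hΞ.continuous.norm.bddAbove_range_of_hasCompactSupport hΞc.norm
  replace hC : ∀ x, |Ξ x| ≤ C := fun x => hC ⟨x, rfl⟩
  have hC0 : 0 ≤ C := (abs_nonneg _).trans (hC 0)
  set L := 2 * R + L0 with hL
  have hbase := (((hg L).norm.mul_prod (hχ L)).const_mul C)
  have IA : Integrable (fun q : En n × ℝ => Ξ q.1 * h (q.1 + q.2 • v)) (volume.prod volume) := by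
    refine ((integrable_line v (hg L) (hχ L)).norm.const_mul C).mono' ?_
      (Eventually.of_forall fun q => ?_)
    · exact ((hΞ.continuous.measurable.comp measurable_fst).mul hmeas2).aestronglyMeasurable
    · by_cases h0 : Ξ q.1 = 0
      · rw [h0]; simp only [zero_mul, norm_zero]; positivity
      · rw [norm_mul, ← hA R q.1 (hR _ h0)]
        gcongr; exact hC _
  have hBC : ∀ (a : ℝ) (z : En n) (s : ℝ), |a| ≤ C →
      (a ≠ 0 → h z ≠ 0 → |s| ≤ L ∧ ‖z‖ ≤ L) → ‖a * h z‖ ≤ C * (‖g L z‖ * χ L s) := by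
    intro a z s ha h1
    have hχ0 : 0 ≤ χ L s := indicator_nonneg (fun _ _ => zero_le_one) _
    by_cases ha0 : a = 0
    · rw [ha0]; simp only [zero_mul, norm_zero]; positivity
    by_cases hz0 : h z = 0
    · rw [hz0]; simp only [mul_zero, norm_zero]; positivity
    rw [hχ1 _ _ (h1 ha0 hz0).1, hg1 _ _ (h1 ha0 hz0).2, norm_mul, mul_one]
    gcongr; exact ha
  have IB : Integrable (fun q : En n × ℝ => Ξ (q.1 - q.2 • v) * h q.1) (volume.prod volume) := by
    refine hbase.mono' ?_ (Eventually.of_forall fun q => ?_)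
    · exact ((hΞ.continuous.measurable.comp (by fun_prop)).mul
        (hm.comp measurable_fst)).aestronglyMeasurable
    · refine hBC _ _ _ (hC _) fun h1 h2 => ?_
      have e1 := hR _ h1
      have e2 := hwin' _ h2
      have e3 := (hinn _).trans e1
      have e4 : ⟪q.1 - q.2 • v, v⟫ = ⟪q.1, v⟫ - q.2 := by
        have := inner_line hv q.1 (-q.2)
        rw [neg_smul, ← sub_eq_add_neg] at this; linarith
      rw [e4] at e3
      have hR0 : 0 ≤ R := (norm_nonneg _).trans e1
      have e5 : |q.2| ≤ R + L0 := by
        have : q.2 = ⟪q.1, v⟫ - (⟪q.1, v⟫ - q.2) := by ring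
        rw [this]; exact (abs_sub _ _).trans (by linarith)
      refine ⟨by linarith, ?_⟩
      have : q.1 = (q.1 - q.2 • v) + q.2 • v := by simp
      rw [this]; refine (norm_add_le _ _).trans ?_
      rw [hsv]; linarith
  have IC : Integrable (fun q : En n × ℝ => Ξ (prj v q.1 + q.2 • v) * h q.1)
      (volume.prod volume) := by
    refine hbase.mono' ?_ (Eventually.of_forall fun q => ?_)
    · refine ((hΞ.continuous.measurable.comp ?_).mul
        (hm.comp measurable_fst)).aestronglyMeasurable
      unfold prj; fun_prop
    · refine hBC _ _ _ (hC _) fun h1 h2 => ?_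
      have e1 := hR _ h1
      have e2 := hwin' _ h2
      have e3 := (hinn _).trans e1
      have e0 : ⟪prj v q.1, v⟫ = 0 := by
        unfold prj
        rw [inner_sub_left, real_inner_smul_left, real_inner_self_eq_norm_sq, hv]; ring
      rw [inner_line hv, e0, zero_add] at e3
      have hR0 : 0 ≤ R := (norm_nonneg _).trans e1
      have hL00 : 0 ≤ L0 := (abs_nonneg _).trans e2
      refine ⟨by linarith, ?_⟩
      have : q.1 = (prj v q.1 + q.2 • v) - q.2 • v + ⟪q.1, v⟫ • v := by simp [prj]
      rw [this]
      refine (norm_add_le _ _).trans ?_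
      refine (add_le_add_left (norm_sub_le _ _) _).trans ?_
      rw [hsv, hsv]; linarith
  calc ∫ z, Ξ z • ∫ s : ℝ, h (z + s • v)
      = ∫ z, ∫ s : ℝ, Ξ z * h (z + s • v) := by
        refine integral_congr_ae (Eventually.of_forall fun z => ?_)
        simp only [smul_eq_mul, integral_const_mul]
    _ = ∫ s : ℝ, ∫ z, Ξ z * h (z + s • v) := integral_integral_swap IA
    _ = ∫ s : ℝ, ∫ z, Ξ (z - s • v) * h z := by
        refine integral_congr_ae (Eventually.of_forall fun s => ?_)
        simp only
        rw [← integral_add_right_eq_self (fun z => Ξ (z - s • v) * h z) (s • v)]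
        simp
    _ = ∫ z, ∫ s : ℝ, Ξ (z - s • v) * h z := (integral_integral_swap IB).symm
    _ = ∫ z, ∫ s : ℝ, Ξ (prj v z + s • v) * h z := by
        refine integral_congr_ae (Eventually.of_forall fun z => ?_)
        simp only
        rw [← integral_sub_left_eq_self (fun s => Ξ (prj v z + s • v) * h z) volume ⟪z, v⟫]
        refine integral_congr_ae (Eventually.of_forall fun s => ?_)
        simp only [prj, sub_smul]
        congr 2; abel
    _ = ∫ s : ℝ, ∫ z, Ξ (prj v z + s • v) * h z := integral_integral_swap IC
    _ = ∫ s : ℝ, 0 := by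
        refine integral_congr_ae (Eventually.of_forall fun s => ?_)
        have := H (fun x => Ξ (x + s • v)) (hΞ.comp (contDiff_id.add contDiff_const))
          (hΞc.comp_homeomorph (Homeomorph.addRight (s • v)))
        simp only [mul_comm (h _)] at this
        exact this
    _ = 0 := integral_zero _ _

/-- The first variation in direction `w` vanishes, by applying the inequality to `w` and `-w`. -/
lemma variation_nonneg_eq {n : ℕ} {f : En n → ℝ} {f' : En n → En n} (hm : Measurable f)
    (hm' : Measurable f') (hW : MemW f f') (hPS : IsPSMeasure f f') {v w : En n} (hv : ‖v‖ = 1)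
    (hw : ‖w‖ = 1) (hvw : ⟪v, w⟫ = 0) {g : ℝ → ℝ} {A B : ℝ} (hg : Profile g A B)
    {θ : En n → ℝ} (hθ : ContDiff ℝ 1 θ) (hc : HasCompactSupport θ) (hθ0 : ∀ x, 0 ≤ θ x) :
    ∫ x, ⟪w, f' x⟫ * (θ (prj v x) * dlt f v g x) = 0 := by
  have h1 := variation_ineq hm hm' hW hPS hv hw hvw hg hθ hc hθ0
  have h2 := variation_ineq hm hm' hW hPS (w := -w) hv (by rwa [norm_neg])
    (by rw [inner_neg_right, hvw, neg_zero]) hg hθ hc hθ0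
  simp only [inner_neg_left, neg_mul, integral_neg] at h2
  linarith

/-- Along almost every line in direction `v`, the derivative of `f` in an orthogonal direction is
orthogonal to the change produced by symmetrizing the profile `g`. -/
lemma fibre_variation {n : ℕ} {f : En n → ℝ} {f' : En n → En n} (hm : Measurable f)
    (hm' : Measurable f') (hW : MemW f f') (hPS : IsPSMeasure f f') {v w : En n} (hv : ‖v‖ = 1)
    (hw : ‖w‖ = 1) (hvw : ⟪v, w⟫ = 0) {g : ℝ → ℝ} {A B : ℝ} (hg : Profile g A B) :
    ∀ᵐ z : En n, ∫ s : ℝ, ⟪w, f' (z + s • v)⟫ * dlt f v g (z + s • v) = 0 := by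
  set S := {x : En n | A ≤ ⟪x, v⟫ ∧ ⟪x, v⟫ ≤ B} with hS
  have hSm : MeasurableSet S := by
    have hi : Measurable (fun x : En n => ⟪x, v⟫) := by fun_prop
    exact (measurableSet_le measurable_const hi).inter (measurableSet_le hi measurable_const)
  set h0 : En n → ℝ := fun x => ⟪w, f' x⟫ * dlt f v g x with hh0
  have hd := dlt_measurable hm v hg.smooth.continuous
  have hwm : Measurable (fun x => ⟪w, f' x⟫) := measurable_const.inner hm'
  set h : En n → ℝ := S.indicator h0 with hh
  have hhm : Measurable h := (hwm.mul hd).indicator hSm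
  have hwl : LocallyIntegrable (fun x => ⟪w, f' x⟫) := by
    rw [locallyIntegrable_iff]
    intro k hk
    exact (hW.2.2.2.1.integrableOn_isCompact hk).const_inner w
  have hhb : ∀ x, ‖h x‖ ≤ ‖⟪w, f' x⟫‖ := fun x => by
    refine (norm_indicator_le_norm_self _ _).trans ?_
    rw [hh0, norm_mul]
    exact mul_le_of_le_one_right (norm_nonneg _) (dlt_abs_le hm v hg x)
  have hhl : LocallyIntegrable h := hwl.mono hhm.aestronglyMeasurable (Eventually.of_forall hhb)
  have hae : ∀ᵐ x, h x = h0 x := by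
    filter_upwards [grad_zero_of_zero hm hm' hW w, tailF_good hm hW.2.1 hW.1 hv,
      integrable_line' hv hW.2.1] with x h1 h2 h3
    by_cases hx : x ∈ S
    · rw [hh, indicator_of_mem hx]
    · rw [hh, indicator_of_notMem hx, hh0]
      by_cases hf : f x = 0
      · simp [h1 hf]
      · have hx' : ⟪x, v⟫ < A ∨ B < ⟪x, v⟫ := by
          rw [hS, mem_ofPred_eq, not_and_or, not_le, not_le] at hx; exact hx
        simp [dlt_eq_zero hW.1 hv hg h3 (h2 hf) hx']
  have hInteg : ∀ θ : En n → ℝ, Continuous θ → HasCompactSupport θ →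
      Integrable (fun x => h x * θ (prj v x)) := by
    intro θ hθ hc
    obtain ⟨R, hR⟩ := window_bounded hv hc A B
    obtain ⟨C, hC⟩ := hθ.norm.bddAbove_range_of_hasCompactSupport hc.norm
    have hi : Integrable ((Metric.closedBall (0 : En n) R).indicator h) := by
      rw [integrable_indicator_iff Metric.isClosed_closedBall.measurableSet]
      exact hhl.integrableOn_isCompact (isCompact_closedBall _ _)
    have hpc : Continuous (prj v) := by unfold prj; fun_prop
    have h2 := hi.mul_bdd (hθ.comp hpc).aestronglyMeasurable
      (Eventually.of_forall fun x => hC ⟨prj v x, rfl⟩)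
    refine h2.congr (Eventually.of_forall fun x => ?_)
    simp only [Function.comp]
    by_cases hx : x ∈ Metric.closedBall (0 : En n) R
    · rw [indicator_of_mem hx]
    · rw [indicator_of_notMem hx, zero_mul]
      by_contra hne
      have e1 := right_ne_zero_of_mul (Ne.symm hne)
      have e2 : x ∈ S := by
        by_contra hxS
        exact left_ne_zero_of_mul (Ne.symm hne) (indicator_of_notMem hxS _)
      exact hx (by simpa using hR x e1 e2.1 e2.2)
  have hnn : ∀ θ : En n → ℝ, ContDiff ℝ 1 θ → HasCompactSupport θ → (∀ x, 0 ≤ θ x) →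
      ∫ x, h x * θ (prj v x) = 0 := by
    intro θ hθ hc h0'
    rw [← variation_nonneg_eq hm hm' hW hPS hv hw hvw hg hθ hc h0']
    refine integral_congr_ae ?_
    filter_upwards [hae] with x hx
    rw [hx, hh0]; ring
  have hall : ∀ θ : En n → ℝ, ContDiff ℝ 1 θ → HasCompactSupport θ →
      ∫ x, h x * θ (prj v x) = 0 := by
    intro θ hθ hc
    obtain ⟨R, hR⟩ := (show IsCompact (tsupport θ) from hc).isBounded.exists_norm_le
    obtain ⟨C, hC⟩ := hθ.continuous.norm.bddAbove_range_of_hasCompactSupport hc.norm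
    replace hC : ∀ x, |θ x| ≤ C := fun x => hC ⟨x, rfl⟩
    have hC0 : 0 ≤ C := (abs_nonneg _).trans (hC 0)
    let β : ContDiffBump (0 : En n) := ⟨|R| + 1, |R| + 2, by positivity, by linarith⟩
    have hβ : ContDiff ℝ 1 β := β.contDiff
    have hCβ : ContDiff ℝ 1 (fun x => C * β x) := contDiff_const.mul hβ
    have hCβc : HasCompactSupport (fun x => C * β x) := β.hasCompactSupport.mul_left
    have e1 := hnn (fun x => C * β x) hCβ hCβc fun x => mul_nonneg hC0 β.nonneg
    have e2 := hnn (fun x => θ x + C * β x) (hθ.add hCβ) (hc.add hCβc) fun x => by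
      by_cases hx : θ x = 0
      · rw [hx, zero_add]; exact mul_nonneg hC0 β.nonneg
      · have : β x = 1 := by
          apply β.one_of_mem_closedBall
          have := hR x (subset_tsupport _ hx)
          simp only [Metric.mem_closedBall, dist_zero_right, β]
          linarith [le_abs_self R]
        rw [this]; linarith [(abs_le.1 (hC x)).1]
    simp only [mul_add] at e2
    have i2 := hInteg _ hCβ.continuous hCβc
    rw [integral_add (hInteg θ hθ.continuous hc) i2] at e2
    linarith
  have hfz := fibre_zero hv hhm hhl (A := A) (B := B)
    (fun x hx => indicator_of_notMem (by
      rw [hS, mem_ofPred_eq, not_and_or, not_le, not_le]; exact hx) _) hall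
  filter_upwards [hfz, ae_line v hae] with z h1 h2
  rw [← h1]
  exact integral_congr_ae (h2.mono fun s hs => by simp only [hs, hh0])

/-! ### Mass transport on a single fibre -/

/-- A smooth approximation (as `k → ∞`) of the indicator of `(a, b) ∪ (d, ∞)`. -/
def bump3 (a b d : ℝ) (k : ℕ) (y : ℝ) : ℝ :=
  Real.smoothTransition (((k : ℝ) + 1) * (y - a)) * Real.smoothTransition (((k : ℝ) + 1) * (b - y)) +
    Real.smoothTransition (((k : ℝ) + 1) * (y - d))

lemma bump3_profile {a b d : ℝ} (hab : a < b) (hbd : b < d) (k : ℕ) :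
    Profile (bump3 a b d k) a (d + 1) := by
  have hk : (0 : ℝ) < (k : ℝ) + 1 := by positivity
  have hz : ∀ x : ℝ, x ≤ 0 → Real.smoothTransition (((k : ℝ) + 1) * x) = 0 := fun x hx =>
    Real.smoothTransition.zero_of_nonpos (mul_nonpos_of_nonneg_of_nonpos hk.le hx)
  have h0 := Real.smoothTransition.nonneg
  have h1 := Real.smoothTransition.le_one
  have hs : ContDiff ℝ 1 Real.smoothTransition := Real.smoothTransition.contDiff
  refine ⟨?_, fun y => ?_, fun y => ?_, fun y hy => ?_, fun y hy => ?_⟩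
  · unfold bump3
    exact ((hs.comp (by fun_prop)).mul (hs.comp (by fun_prop))).add (hs.comp (by fun_prop))
  · exact add_nonneg (mul_nonneg (h0 _) (h0 _)) (h0 _)
  · unfold bump3
    rcases le_total y d with h | h
    · rw [hz (y - d) (by linarith), add_zero]
      exact mul_le_one₀ (h1 _) (h0 _) (h1 _)
    · rw [hz (b - y) (by linarith), mul_zero, zero_add]; exact h1 _
  · unfold bump3
    rw [hz (y - a) (by linarith), hz (y - d) (by linarith)]; simp
  · unfold bump3
    rw [hz (b - y) (by linarith), mul_zero, zero_add]
    exact Real.smoothTransition.one_of_one_le (by nlinarith [Nat.cast_nonneg (α := ℝ) k])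

lemma step_lim {x : ℝ} {u : ℕ → ℝ} (hu : Tendsto u atTop (𝓝 x)) (hx : x ≠ 0) :
    ∀ᶠ k : ℕ in atTop, Real.smoothTransition (((k : ℝ) + 1) * u k) = if 0 < x then 1 else 0 := by
  split_ifs with h
  · have : Tendsto (fun k : ℕ => ((k : ℝ) + 1) * u k) atTop atTop :=
      (tendsto_atTop_add_const_right _ _ tendsto_natCast_atTop_atTop).atTop_mul_pos h hu
    filter_upwards [this.eventually_ge_atTop 1] with k hk
    exact Real.smoothTransition.one_of_one_le hk
  · have hx' : x < 0 := lt_of_le_of_ne (not_lt.1 h) hx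
    filter_upwards [hu.eventually_lt_const hx'] with k hk
    exact Real.smoothTransition.zero_of_nonpos
      (mul_nonpos_of_nonneg_of_nonpos (by positivity) hk.le)

lemma bump3_lim {a b d y : ℝ} {ak bk dk : ℕ → ℝ} (ha : Tendsto ak atTop (𝓝 a))
    (hb : Tendsto bk atTop (𝓝 b)) (hd : Tendsto dk atTop (𝓝 d)) (hbd : b < d)
    (h1 : y ≠ a) (h2 : y ≠ b) (h3 : y ≠ d) :
    ∀ᶠ k in atTop, bump3 (ak k) (bk k) (dk k) k y =
      (Ioo a b ∪ Ioi d).indicator (fun _ => (1 : ℝ)) y := by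
  filter_upwards [step_lim (tendsto_const_nhds.sub ha) (sub_ne_zero.2 h1),
    step_lim (hb.sub tendsto_const_nhds) (sub_ne_zero.2 h2.symm),
    step_lim (tendsto_const_nhds.sub hd) (sub_ne_zero.2 h3)] with k e1 e2 e3
  unfold bump3
  rw [e1, e2, e3]
  simp only [sub_pos, indicator, mem_union, mem_Ioo, mem_Ioi]
  by_cases p : a < y <;> by_cases q : y < b <;> by_cases r : d < y <;> simp [p, q, r]
  linarith

/-- The change of the profile `G(c + ·)` on a line with density `φ` under symmetrization. -/
def D1 (φ : ℝ → ℝ) (c : ℝ) (G : ℝ → ℝ) (s : ℝ) : ℝ :=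
  (∫ σ in Ioc (0 : ℝ) 1, if tail φ s ≤ ∫ u, {u | σ < G (c + u)}.indicator φ u then (1 : ℝ) else 0)
    - G (c + s)

lemma dlt_line {n : ℕ} {f : En n → ℝ} {v : En n} (hv : ‖v‖ = 1) (g : ℝ → ℝ) (z : En n) (s : ℝ) :
    dlt f v g (z + s • v) = D1 (fun u => f (z + u • v)) ⟪z, v⟫ g s := by
  unfold dlt D1
  simp only [symInd_eq, tailF_line, massF_line, inner_line hv]
  unfold massF
  have : ∀ r u, ({x : En n | r < g ⟪x, v⟫}.indicator f (z + u • v)) =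
      ({u | r < g (⟪z, v⟫ + u)}.indicator (fun u => f (z + u • v)) u) := by
    intro r u
    simp only [indicator, mem_ofPred_eq, inner_line hv]
  simp only [this]

lemma tail_union {φ : ℝ → ℝ} (hφ : Integrable φ) {a b d : ℝ} (hab : a < b) (hbd : b < d) :
    ∫ u, (Ioo a b ∪ Ioi d).indicator φ u = tail φ a - tail φ b + tail φ d := by
  rw [integral_indicator (measurableSet_Ioo.union measurableSet_Ioi),
    setIntegral_union _ measurableSet_Ioi hφ.integrableOn hφ.integrableOn, tail_sub hφ,
    intervalIntegral.integral_of_le hab.le, integral_Ioc_eq_integral_Ioo]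
  · rfl
  · rw [Set.disjoint_left]; intro x hx hx'
    exact absurd (hx.2.trans hbd) (not_lt.2 (le_of_lt hx'))

lemma exists_rat_seq (x : ℝ) : ∃ q : ℕ → ℚ, Tendsto (fun k => (q k : ℝ)) atTop (𝓝 x) := by
  have : ∀ k : ℕ, ∃ q : ℚ, x < q ∧ (q : ℝ) < x + 1 / ((k : ℝ) + 1) := fun k =>
    exists_rat_btwn (by linarith [show (0:ℝ) < 1 / ((k : ℝ) + 1) by positivity])
  choose q h1 h2 using this
  refine ⟨q, tendsto_of_tendsto_of_tendsto_of_le_of_le tendsto_const_nhds ?_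
    (fun k => (h1 k).le) (fun k => (h2 k).le)⟩
  simpa using (tendsto_one_div_add_atTop_nhds_zero_nat (𝕜 := ℝ)).const_add x

/-- Passing to the limit from smooth profiles to the sharp set `(a, b) ∪ (d, ∞)`. -/
lemma sharp_identity {φ ψ : ℝ → ℝ} (hφ : Integrable φ) (h0 : ∀ s, 0 ≤ φ s)
    (hψ : LocallyIntegrable ψ) (hz : ∀ᵐ s, φ s = 0 → ψ s = 0) (c : ℝ)
    (H : ∀ a b d : ℚ, a < b → b < d → ∀ k : ℕ,
      Measurable (D1 φ c (bump3 a b d k)) ∧ (∀ s, |D1 φ c (bump3 a b d k) s| ≤ 1) ∧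
      (∀ᵐ s, (c + s < a ∨ (d : ℝ) + 1 < c + s) → ψ s * D1 φ c (bump3 a b d k) s = 0) ∧
      ∫ s, ψ s * D1 φ c (bump3 a b d k) s = 0) {a b d : ℝ} (hab : a < b) (hbd : b < d) :
    ∫ s, ψ s * ((if tail φ s ≤ tail φ a - tail φ b + tail φ d then (1 : ℝ) else 0) -
      (Ioo a b ∪ Ioi d).indicator (fun _ => (1 : ℝ)) s) = 0 := by
  set m := tail φ a - tail φ b + tail φ d with hm
  obtain ⟨ak, hak⟩ := exists_rat_seq (c + a)
  obtain ⟨bk, hbk⟩ := exists_rat_seq (c + b)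
  obtain ⟨dk, hdk⟩ := exists_rat_seq (c + d)
  set G : ℕ → ℝ → ℝ := fun k => bump3 (ak k) (bk k) (dk k) k with hG
  have hind : ∀ s, (Ioo (c + a) (c + b) ∪ Ioi (c + d)).indicator (fun _ => (1 : ℝ)) (c + s) =
      (Ioo a b ∪ Ioi d).indicator (fun _ => (1 : ℝ)) s := fun s => by simp [indicator]
  have hne : ∀ x : ℝ, ∀ᵐ s : ℝ, s ≠ x := fun x => by simp [ae_iff]
  have hGlim : ∀ s, s ≠ a → s ≠ b → s ≠ d → ∀ᶠ k in atTop,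
      G k (c + s) = (Ioo a b ∪ Ioi d).indicator (fun _ => (1 : ℝ)) s := by
    intro s h1 h2 h3
    rw [← hind]
    exact bump3_lim hak hbk hdk (by linarith) (by simpa using h1) (by simpa using h2)
      (by simpa using h3)
  have hord : ∀ᶠ k in atTop, ak k < bk k ∧ bk k < dk k := by
    filter_upwards [hak.eventually_lt hbk (by linarith), hbk.eventually_lt hdk (by linarith)]
      with k h1 h2
    exact ⟨by exact_mod_cast h1, by exact_mod_cast h2⟩
  have hGm : ∀ k, Measurable (fun u => G k (c + u)) := fun k => by
    have : Continuous (G k) := by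
      simp only [hG]; unfold bump3
      have hs : Continuous Real.smoothTransition := Real.smoothTransition.continuous
      fun_prop
    exact (this.comp (by fun_prop)).measurable
  have hmass : ∀ σ ∈ Ioo (0 : ℝ) 1,
      Tendsto (fun k => ∫ u, {u | σ < G k (c + u)}.indicator φ u) atTop (𝓝 m) := by
    intro σ hσ
    rw [hm, ← tail_union hφ hab hbd]
    refine tendsto_integral_of_dominated_convergence (fun u => ‖φ u‖) (fun k => ?_) hφ.norm
      (fun k => Eventually.of_forall fun u => norm_indicator_le_norm_self _ _) ?_
    · exact hφ.1.indicator (measurableSet_lt measurable_const (hGm k))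
    · filter_upwards [hne a, hne b, hne d] with u h1 h2 h3
      refine tendsto_const_nhds.congr' ?_
      filter_upwards [hGlim u h1 h2 h3] with k hk
      simp only [indicator, mem_ofPred_eq, hk]
      by_cases hu : u ∈ Ioo a b ∪ Ioi d
      · simp [hu, hσ.2]
      · simp [hu, not_lt.2 hσ.1.le]
  have hDlim : ∀ s, s ≠ a → s ≠ b → s ≠ d → tail φ s ≠ m →
      Tendsto (fun k => D1 φ c (G k) s) atTop
        (𝓝 ((if tail φ s ≤ m then (1 : ℝ) else 0) -
          (Ioo a b ∪ Ioi d).indicator (fun _ => (1 : ℝ)) s)) := by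
    intro s h1 h2 h3 h4
    unfold D1
    refine Tendsto.sub ?_ (tendsto_const_nhds.congr' ((hGlim s h1 h2 h3).mono fun k hk => hk.symm))
    have : (if tail φ s ≤ m then (1 : ℝ) else 0) =
        ∫ σ in Ioc (0 : ℝ) 1, (if tail φ s ≤ m then (1 : ℝ) else 0) := by simp
    rw [this]
    refine tendsto_integral_of_dominated_convergence (fun _ => 1) (fun k => ?_) (by simp)
      (fun k => Eventually.of_forall fun σ => by split_ifs <;> simp) ?_
    · have hanti : Antitone (fun σ => ∫ u, {u | σ < G k (c + u)}.indicator φ u) := by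
        intro σ τ hστ
        refine integral_mono (hφ.indicator (measurableSet_lt measurable_const (hGm k)))
          (hφ.indicator (measurableSet_lt measurable_const (hGm k))) fun u => ?_
        exact indicator_le_indicator_of_subset (fun u hu => lt_of_le_of_lt hστ hu) h0 u
      exact (Measurable.ite (measurableSet_le measurable_const hanti.measurable)
        measurable_const measurable_const).aestronglyMeasurable
    · rw [ae_restrict_iff' measurableSet_Ioc]
      filter_upwards [hne 1] with σ hσ1 hσ
      have hl := hmass σ ⟨hσ.1, lt_of_le_of_ne hσ.2 hσ1⟩
      refine tendsto_const_nhds.congr' ?_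
      rcases lt_or_gt_of_ne h4 with h | h
      · filter_upwards [hl.eventually_const_lt h] with k hk
        rw [if_pos h.le, if_pos hk.le]
      · filter_upwards [hl.eventually_lt_const h] with k hk
        rw [if_neg (not_le.2 h), if_neg (not_le.2 hk)]
  -- a level set of the tail carries no mass of `ψ`
  have hlev : ∀ᵐ s, tail φ s = m → ψ s = 0 := by
    by_cases hex : ∃ s0, tail φ s0 = m ∧ ∀ h : ℝ, 0 < h → tail φ (s0 + h) < tail φ s0
    · obtain ⟨s0, hs0, hs0'⟩ := hex
      filter_upwards [hz, tail_good hφ h0, hne s0] with s hs hgood hsne hsm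
      by_contra hψs
      have hg := hgood fun hh => hψs (hs hh)
      rcases lt_or_gt_of_ne hsne with h | h
      · have := hg (s0 - s) (by linarith)
        rw [add_sub_cancel, hs0, hsm] at this; exact lt_irrefl _ this
      · have := hs0' (s - s0) (by linarith)
        rw [add_sub_cancel, hs0, hsm] at this; exact lt_irrefl _ this
    · filter_upwards [hz, tail_good hφ h0] with s hs hgood hsm
      by_contra hψs
      exact hex ⟨s, hsm, hgood fun hh => hψs (hs hh)⟩
  have hlim : Tendsto (fun k => ∫ s, ψ s * D1 φ c (G k) s) atTop
      (𝓝 (∫ s, ψ s * ((if tail φ s ≤ m then (1 : ℝ) else 0) -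
        (Ioo a b ∪ Ioi d).indicator (fun _ => (1 : ℝ)) s))) := by
    refine tendsto_integral_filter_of_dominated_convergence
      (fun s => (Icc (a - 1) (d + 2)).indicator (fun s => ‖ψ s‖) s) ?_ ?_ ?_ ?_
    · filter_upwards [hord] with k hk
      exact hψ.aestronglyMeasurable.mul (H _ _ _ hk.1 hk.2 k).1.aestronglyMeasurable
    · filter_upwards [hord, hak.eventually_const_lt (show c + a - 1 < c + a by linarith),
        hdk.eventually_lt_const (show c + d < c + d + 1 by linarith)] with k hk h1 h2
      obtain ⟨-, e2, e3, -⟩ := H _ _ _ hk.1 hk.2 k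
      filter_upwards [e3] with s hs
      by_cases hsI : s ∈ Icc (a - 1) (d + 2)
      · rw [indicator_of_mem hsI, norm_mul]
        exact mul_le_of_le_one_right (norm_nonneg _) (e2 s)
      · rw [indicator_of_notMem hsI]
        rw [mem_Icc, not_and_or, not_le, not_le] at hsI
        simp only [hG]
        rw [hs (by rcases hsI with h | h; · left; linarith
                   · right; linarith)]
        simp
    · rw [integrable_indicator_iff measurableSet_Icc]
      exact (hψ.integrableOn_isCompact isCompact_Icc).norm
    · filter_upwards [hne a, hne b, hne d, hlev] with s h1 h2 h3 h4
      by_cases hs : tail φ s = m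
      · rw [h4 hs]; simp
      · exact (hDlim s h1 h2 h3 hs).const_mul _
  refine tendsto_nhds_unique hlim (tendsto_const_nhds.congr' ?_)
  filter_upwards [hord] with k hk
  exact (H _ _ _ hk.1 hk.2 k).2.2.2.symm

/-- Moving the mass of `(a, b)` to `(c, d)` does not change the integral of `ψ`. -/
lemma transport {φ ψ : ℝ → ℝ} (hφ : Integrable φ) (h0 : ∀ s, 0 ≤ φ s)
    (hψ : LocallyIntegrable ψ) (hz : ∀ᵐ s, φ s = 0 → ψ s = 0) {a b d : ℝ} (hab : a < b)
    (hbd : b < d)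
    (H : ∫ s, ψ s * ((if tail φ s ≤ tail φ a - tail φ b + tail φ d then (1 : ℝ) else 0) -
      (Ioo a b ∪ Ioi d).indicator (fun _ => (1 : ℝ)) s) = 0) :
    ∃ c ∈ Icc a d, tail φ c - tail φ d = tail φ a - tail φ b ∧
      ∫ s in c..d, ψ s = ∫ s in a..b, ψ s := by
  have hanti := tail_antitone hφ h0
  obtain ⟨c, hc, hcm⟩ := intermediate_value_Icc' (by linarith : a ≤ d)
    (tail_continuous hφ).continuousOn (show tail φ a - tail φ b + tail φ d ∈ Icc (tail φ d) (tail φ a) from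
      ⟨by linarith [hanti hab.le], by linarith [hanti hbd.le]⟩)
  refine ⟨c, hc, by linarith, ?_⟩
  have hne : ∀ x : ℝ, ∀ᵐ s : ℝ, s ≠ x := fun x => by simp [ae_iff]
  have e : ∫ s, ψ s * ((if tail φ s ≤ tail φ a - tail φ b + tail φ d then (1 : ℝ) else 0) -
      (Ioo a b ∪ Ioi d).indicator (fun _ => (1 : ℝ)) s) =
      ∫ s, ((Ioc c d).indicator ψ s - (Ioc a b).indicator ψ s) := by
    refine integral_congr_ae ?_
    filter_upwards [hz, tail_good hφ h0, hne b, hne c] with s hs hgood hsb hsc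
    rw [← hcm]
    have h1 : ψ s * (if tail φ s ≤ tail φ c then (1 : ℝ) else 0) =
        (Ioi c).indicator ψ s := by
      rcases lt_or_gt_of_ne hsc with h | h
      · rw [indicator_of_notMem (by simp [h.le])]
        by_contra hcon
        have hle : tail φ s ≤ tail φ c := by
          by_contra hh; simp [hh] at hcon
        have hψ0 := left_ne_zero_of_mul hcon
        have := hgood (fun hh => hψ0 (hs hh)) (c - s) (by linarith)
        rw [add_sub_cancel] at this
        linarith
      · rw [indicator_of_mem (show s ∈ Ioi c from h), if_pos (hanti h.le), mul_one]
    rw [mul_sub, h1]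
    simp only [indicator, mem_union, mem_Ioo, mem_Ioi, mem_Ioc]
    have hcd := hc.2
    rcases lt_or_gt_of_ne hsb with h | h
    · have hd : ¬ d < s := by linarith
      have hd' : s ≤ d := by linarith
      simp only [h, hd, hd', h.le, and_true, or_false]
      by_cases p : c < s <;> by_cases q : a < s <;> simp [p, q]
    · have e1 : ¬ s < b := by linarith
      have e2 : ¬ s ≤ b := by linarith
      simp only [e1, e2, and_false, false_or]
      by_cases q : d < s
      · have : c < s := by linarith
        have q2 : ¬ s ≤ d := by linarith
        simp [q, this, q2]
      · have q2 : s ≤ d := by linarith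
        simp [q, q2]
  rw [e, integral_sub, integral_indicator measurableSet_Ioc, integral_indicator measurableSet_Ioc,
    ← intervalIntegral.integral_of_le hc.2, ← intervalIntegral.integral_of_le hab.le] at H
  · linarith
  · rw [integrable_indicator_iff measurableSet_Ioc]
    exact (hψ.integrableOn_isCompact isCompact_Icc).mono_set Ioc_subset_Icc_self
  · rw [integrable_indicator_iff measurableSet_Ioc]
    exact (hψ.integrableOn_isCompact isCompact_Icc).mono_set Ioc_subset_Icc_self

/-- If `F'(d) ≠ 0`, the increments of `c` are controlled by those of `F ∘ c`. -/
lemma o2_aux {F : ℝ → ℝ} {F' d : ℝ} (hF : HasDerivAt F F' d) (hne : F' ≠ 0) {l : Filter ℝ}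
    {c : ℝ → ℝ} (hc : Tendsto c l (𝓝 d)) : (fun h => c h - d) =O[l] fun h => F (c h) - F d := by
  have h1 := (hasDerivAt_iff_isLittleO.1 hF).comp_tendsto hc
  have h2 : (fun h => c h - d) =O[l] fun h => (c h - d) • F' := by
    have := (Asymptotics.isBigO_refl (fun h => (c h - d) * F') l).const_mul_left F'⁻¹
    refine this.congr_left fun h => ?_
    field_simp
  have h3 := (h1.trans_isBigO h2).right_isBigO_add
  refine h2.trans (h3.congr_right fun h => ?_)
  simp

/-- Differentiating the transport identity at Lebesgue points. -/
lemma transport_deriv {φ ψ : ℝ → ℝ} (hφ : Integrable φ) (h0 : ∀ s, 0 ≤ φ s)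
    (hψ : LocallyIntegrable ψ)
    (H : ∀ a b d : ℝ, a < b → b < d → ∃ c ∈ Icc a d, tail φ c - tail φ d = tail φ a - tail φ b ∧
      ∫ s in c..d, ψ s = ∫ s in a..b, ψ s) {a d : ℝ} (had : a < d)
    (hFa : HasDerivAt (tail φ) (-φ a) a) (hFd : HasDerivAt (tail φ) (-φ d) d)
    (hPa : HasDerivAt (fun s => ∫ u in (0 : ℝ)..s, ψ u) (ψ a) a)
    (hPd : HasDerivAt (fun s => ∫ u in (0 : ℝ)..s, ψ u) (ψ d) d) (hzd : φ d = 0 → ψ d = 0) :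
    φ a * ψ d = φ d * ψ a := by
  by_cases hd0 : φ d = 0
  · rw [hd0, hzd hd0]; simp
  have hdpos : 0 < φ d := lt_of_le_of_ne (h0 d) (Ne.symm hd0)
  have hanti := tail_antitone hφ h0
  have hii : ∀ x y, IntervalIntegrable ψ volume x y := fun x y =>
    (hψ.integrableOn_isCompact isCompact_uIcc).intervalIntegrable
  set P := fun s => ∫ u in (0 : ℝ)..s, ψ u with hP
  have hPsub : ∀ x y, ∫ u in x..y, ψ u = P y - P x := fun x y => by
    simp only [hP]
    rw [intervalIntegral.integral_interval_sub_left (hii _ _) (hii _ _)]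
  -- the combination of the two primitives whose derivative vanishes at `d`
  set G := fun s => φ d * P s + ψ d * tail φ s with hG
  have hGd : HasDerivAt G 0 d := by
    have := (hPd.const_mul (φ d)).add (hFd.const_mul (ψ d))
    rwa [show φ d * ψ d + ψ d * -φ d = 0 by ring] at this
  have hGa : HasDerivAt G (φ d * ψ a + ψ d * (-φ a)) a :=
    (hPa.const_mul (φ d)).add (hFa.const_mul (ψ d))
  have hev : ∀ᶠ h in 𝓝[>] (0 : ℝ), a + h < d := by
    have : Tendsto (fun h : ℝ => a + h) (𝓝[>] 0) (𝓝 a) := by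
      have := (continuous_const_add a).tendsto (0 : ℝ)
      rw [add_zero] at this; exact this.mono_left nhdsWithin_le_nhds
    exact this.eventually_lt_const had
  have hch : ∀ h : ℝ, ∃ c, 0 < h → a + h < d → c ∈ Icc a d ∧
      tail φ c - tail φ d = tail φ a - tail φ (a + h) ∧
      ∫ s in c..d, ψ s = ∫ s in a..(a + h), ψ s := fun h => by
    by_cases hh : 0 < h ∧ a + h < d
    · obtain ⟨c, h1, h2⟩ := H a (a + h) d (by linarith) hh.2
      exact ⟨c, fun _ _ => ⟨h1, h2⟩⟩
    · exact ⟨0, fun h1 h2 => absurd ⟨h1, h2⟩ hh⟩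
  choose c hc using hch
  have hpos : ∀ᶠ h in 𝓝[>] (0 : ℝ), 0 < h := eventually_mem_nhdsWithin
  have hah : Tendsto (fun h : ℝ => a + h) (𝓝[>] 0) (𝓝 a) := by
    have := (continuous_const_add a).tendsto (0 : ℝ)
    rw [add_zero] at this; exact this.mono_left nhdsWithin_le_nhds
  -- strict decrease of the tail to the left of `d`
  have hstrict : ∀ x, x < d → tail φ d < tail φ x := by
    intro x hx
    by_contra hcon
    have hconst : ∀ y ∈ Icc x d, tail φ y = tail φ d := fun y hy =>
      le_antisymm ((hanti hy.1).trans (not_lt.1 hcon)) (hanti hy.2)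
    have h1 : HasDerivWithinAt (tail φ) (-φ d) (Icc x d) d := hFd.hasDerivWithinAt
    have h2 : HasDerivWithinAt (tail φ) 0 (Icc x d) d :=
      (hasDerivWithinAt_const d (Icc x d) (tail φ d)).congr hconst rfl
    have := (uniqueDiffOn_Icc hx d (right_mem_Icc.2 hx.le)).eq_deriv _ h1 h2
    linarith
  have hclim : Tendsto c (𝓝[>] 0) (𝓝 d) := by
    rw [tendsto_order]
    constructor
    · intro x hx
      have hFt : Tendsto (fun h => tail φ a - tail φ (a + h) + tail φ d) (𝓝[>] 0) (𝓝 (tail φ d)) := by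
        have := (((tail_continuous hφ).tendsto a).comp hah)
        have := (tendsto_const_nhds (x := tail φ a)).sub this |>.add_const (tail φ d)
        simpa using this
      filter_upwards [hev, hpos, hFt.eventually_lt_const (hstrict x hx)] with h h1 h2 h3
      obtain ⟨-, e2, -⟩ := hc h h2 h1
      by_contra hcon
      have := hanti (not_lt.1 hcon)
      linarith
    · intro x hx
      filter_upwards [hev, hpos] with h h1 h2
      exact (hc h h2 h1).1.2.trans_lt hx
  have o1 : (fun h => G (c h) - G d) =o[𝓝[>] 0] fun h => c h - d := by
    have := hasDerivAt_iff_isLittleO.1 hGd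
    simp only [smul_zero, sub_zero] at this
    exact this.comp_tendsto hclim
  have o2 : (fun h => c h - d) =O[𝓝[>] 0] fun h => tail φ (c h) - tail φ d :=
    o2_aux hFd (by linarith) hclim
  have o3 : (fun h => tail φ (a + h) - tail φ a) =O[𝓝[>] 0] fun h => (a + h) - a :=
    hFa.isBigO_sub.comp_tendsto hah
  have o4 : (fun h => tail φ (c h) - tail φ d) =O[𝓝[>] 0] fun h => (a + h) - a := by
    refine Asymptotics.IsBigO.congr' o3.neg_left ?_ EventuallyEq.rfl
    filter_upwards [hev, hpos] with h h1 h2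
    rw [(hc h h2 h1).2.1]; ring
  have o5 : (fun h => G (a + h) - G a) =o[𝓝[>] 0] fun h => (a + h) - a := by
    refine Asymptotics.IsLittleO.congr' ((o1.trans_isBigO (o2.trans o4)).neg_left) ?_ EventuallyEq.rfl
    filter_upwards [hev, hpos] with h h1 h2
    obtain ⟨-, e2, e3⟩ := hc h h2 h1
    rw [hPsub, hPsub] at e3
    simp only [hG]
    linear_combination (φ d) * e3 - ψ d * e2
  have o7 : (fun h : ℝ => (φ d * ψ a + ψ d * (-φ a)) * h) =o[𝓝[>] 0] fun h : ℝ => h := by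
    have := o5.sub ((hasDerivAt_iff_isLittleO.1 hGa).comp_tendsto hah)
    refine this.congr (fun h => ?_) (fun h => by ring)
    simp only [Function.comp, smul_eq_mul]; ring
  have hzero : φ d * ψ a + ψ d * (-φ a) = 0 := by
    have := o7.tendsto_div_nhds_zero
    refine tendsto_nhds_unique (tendsto_const_nhds.congr' ?_) this
    filter_upwards [hpos] with h hh
    rw [mul_div_cancel_right₀ _ hh.ne']
  linarith

/-- One-dimensional conclusion on a single fibre: `ψ` is a constant multiple of `φ`. -/
lemma fibre_proportional {φ ψ : ℝ → ℝ} (hφ : Integrable φ) (h0 : ∀ s, 0 ≤ φ s)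
    (hψ : LocallyIntegrable ψ) (hz : ∀ᵐ s, φ s = 0 → ψ s = 0) (c : ℝ)
    (H : ∀ a b d : ℚ, a < b → b < d → ∀ k : ℕ,
      Measurable (D1 φ c (bump3 a b d k)) ∧ (∀ s, |D1 φ c (bump3 a b d k) s| ≤ 1) ∧
      (∀ᵐ s, (c + s < a ∨ (d : ℝ) + 1 < c + s) → ψ s * D1 φ c (bump3 a b d k) s = 0) ∧
      ∫ s, ψ s * D1 φ c (bump3 a b d k) s = 0) :
    ∀ᵐ a, ∀ᵐ d, φ a * ψ d = φ d * ψ a := by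
  have hT : ∀ a b d : ℝ, a < b → b < d → ∃ c ∈ Icc a d,
      tail φ c - tail φ d = tail φ a - tail φ b ∧ ∫ s in c..d, ψ s = ∫ s in a..b, ψ s :=
    fun a b d hab hbd => transport hφ h0 hψ hz hab hbd (sharp_identity hφ h0 hψ hz c H hab hbd)
  have hF : ∀ᵐ s, HasDerivAt (tail φ) (-φ s) s := by
    filter_upwards [LocallyIntegrable.ae_hasDerivAt_integral hφ.locallyIntegrable] with s hs
    have : tail φ = fun s => tail φ 0 - ∫ u in (0:ℝ)..s, φ u := by
      ext s; have := tail_sub hφ 0 s; linarith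
    rw [this]
    simpa using (hs 0).const_sub (tail φ 0)
  have hP := LocallyIntegrable.ae_hasDerivAt_integral hψ
  filter_upwards [hF, hP, hz] with a f1 p1 z1
  filter_upwards [hF, hP, hz] with d f2 p2 z2
  rcases lt_trichotomy a d with h | h | h
  · exact transport_deriv hφ h0 hψ hT h f1 f2 (p1 0) (p2 0) z2
  · rw [h]
  · exact (transport_deriv hφ h0 hψ hT h f2 f1 (p2 0) (p1 0) z1).symm

/-! ### The logarithmic gradient is affine -/

lemma measurableSet_ae {α β : Type*} [MeasurableSpace α] [MeasurableSpace β] {ν : Measure β}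
    [SFinite ν] {s : Set (α × β)} (hs : MeasurableSet s) :
    MeasurableSet {x | ∀ᵐ y ∂ν, (x, y) ∈ s} := by
  have := measurable_measure_prodMk_left (ν := ν) hs.compl
  exact this (measurableSet_singleton 0)

/-- On almost every line in direction `v`, the derivative of `f` in an orthogonal direction `w`
is a constant multiple of `f`. -/
lemma pair_relation {n : ℕ} {f : En n → ℝ} {f' : En n → En n} (hm : Measurable f)
    (hm' : Measurable f') (hW : MemW f f') (hPS : IsPSMeasure f f') {v w : En n} (hv : ‖v‖ = 1)
    (hw : ‖w‖ = 1) (hvw : ⟪v, w⟫ = 0) :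
    ∀ᵐ x : En n, ∀ᵐ s : ℝ, f x * ⟪w, f' (x + s • v)⟫ = f (x + s • v) * ⟪w, f' x⟫ := by
  have hwm : Measurable (fun x => ⟪w, f' x⟫) := measurable_const.inner hm'
  have hwl : LocallyIntegrable (fun x => ⟪w, f' x⟫) := by
    rw [locallyIntegrable_iff]
    intro k hk
    exact (hW.2.2.2.1.integrableOn_isCompact hk).const_inner w
  have hline : Measurable (fun q : En n × ℝ => q.1 + q.2 • v) := by fun_prop
  refine ae_of_line v ?_ ?_
  · refine measurableSet_ae (ν := (volume : Measure ℝ)) (s := {q : En n × ℝ |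
      f q.1 * ⟪w, f' (q.1 + q.2 • v)⟫ = f (q.1 + q.2 • v) * ⟪w, f' q.1⟫}) ?_
    exact measurableSet_eq_fun ((hm.comp measurable_fst).mul (hwm.comp hline))
      ((hm.comp hline).mul (hwm.comp measurable_fst))
  · have hvar : ∀ᵐ z : En n, ∀ a b d : ℚ, a < b → b < d → ∀ k : ℕ,
        ∫ s : ℝ, ⟪w, f' (z + s • v)⟫ * dlt f v (bump3 a b d k) (z + s • v) = 0 := by
      simp only [ae_all_iff]
      intro a b d hab hbd k
      exact fibre_variation hm hm' hW hPS hv hw hvw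
        (bump3_profile (by exact_mod_cast hab) (by exact_mod_cast hbd) k)
    have hgood := ae_line v (tailF_good hm hW.2.1 hW.1 hv)
    have hInteg2 := ae_line v (integrable_line' hv hW.2.1)
    filter_upwards [hvar, integrable_line' hv hW.2.1, locallyIntegrable_line v hwl,
      ae_line v (grad_zero_of_zero hm hm' hW w), hgood, hInteg2] with z h1 h2 h3 h4 h5 h6
    have := fibre_proportional (φ := fun s => f (z + s • v)) (ψ := fun s => ⟪w, f' (z + s • v)⟫)
      h2 (fun s => hW.1 _) h3 h4 ⟪z, v⟫ (by
        intro a b d hab hbd k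
        have hpr : Profile (bump3 a b d k) a (d + 1) :=
          bump3_profile (by exact_mod_cast hab) (by exact_mod_cast hbd) k
        have hD : D1 (fun s => f (z + s • v)) ⟪z, v⟫ (bump3 a b d k) =
            fun s => dlt f v (bump3 a b d k) (z + s • v) :=
          funext fun s => (dlt_line hv _ z s).symm
        rw [hD]
        refine ⟨(dlt_measurable hm v hpr.smooth.continuous).comp (by fun_prop),
          fun s => dlt_abs_le hm v hpr _, ?_, h1 a b d hab hbd k⟩
        filter_upwards [h4, h5, h6] with s g4 g5 g6 hs
        by_cases hf : f (z + s • v) = 0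
        · rw [g4 hf, zero_mul]
        · rw [dlt_eq_zero hW.1 hv hpr g6 (g5 hf) (by rw [inner_line hv]; exact hs), mul_zero])
    filter_upwards [this] with a ha
    have htr := (measurePreserving_add_left (volume : Measure ℝ) a).quasiMeasurePreserving.ae ha
    filter_upwards [htr] with s hs
    simpa only [add_smul, add_assoc] using hs

/-- `z` and `u` are parallel in the sense that `u` equals its projection to the line of `z`
(no condition if `z = 0`). -/
def Par {n : ℕ} (z u : En n) : Prop := ⟪z, z⟫ • u = ⟪z, u⟫ • z

lemma par_smul {n : ℕ} {z u : En n} (h : Par z u) (s : ℝ) : Par (s • z) u := by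
  unfold Par at *
  simp only [real_inner_smul_left, real_inner_smul_right]
  rw [show s * (s * ⟪z, z⟫) = (s * s) * ⟪z, z⟫ by ring, mul_smul, h, smul_smul, smul_smul]
  congr 1; ring

/-- The `2 × 2` minor measuring the variation of `f' / f` between `x` and `y`. -/
def minor {n : ℕ} (f : En n → ℝ) (f' : En n → En n) (x y : En n) : En n := f x • f' y - f y • f' x

/-- The minor between points of a `v`-line is parallel to `v`: by `pair_relation` it is orthogonal to
an orthonormal basis of `v^⊥`. -/
lemma dir_relation {n : ℕ} {f : En n → ℝ} {f' : En n → En n} (hm : Measurable f)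
    (hm' : Measurable f') (hW : MemW f f') (hPS : IsPSMeasure f f') {v : En n} (hv : ‖v‖ = 1) :
    ∀ᵐ x : En n, ∀ᵐ s : ℝ, Par v (minor f f' x (x + s • v)) := by
  let K := (Submodule.span ℝ {v})ᗮ
  let B := stdOrthonormalBasis ℝ K
  have h : ∀ᵐ x : En n, ∀ i, ∀ᵐ s : ℝ,
      f x * ⟪(B i : En n), f' (x + s • v)⟫ = f (x + s • v) * ⟪(B i : En n), f' x⟫ := by
    rw [ae_all_iff]
    intro i
    refine pair_relation hm hm' hW hPS hv (show ‖B i‖ = 1 from B.norm_eq_one i) ?_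
    exact (Submodule.mem_orthogonal_singleton_iff_inner_right).1 (B i).2
  filter_upwards [h] with x hx
  filter_upwards [ae_all_iff.2 hx] with s hs
  set u := minor f f' x (x + s • v) with hu
  have hperp : u ∈ Kᗮ := by
    rw [Submodule.mem_orthogonal]
    intro y hy
    have e := B.sum_repr ⟨y, hy⟩
    have e' : y = ∑ i, B.repr ⟨y, hy⟩ i • (B i : En n) := by
      have := congrArg (Subtype.val) e
      simpa using this.symm
    rw [e', sum_inner]
    refine Finset.sum_eq_zero fun i _ => ?_
    rw [real_inner_smul_left, hu, minor, inner_sub_right, real_inner_smul_right,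
      real_inner_smul_right, hs i]; simp
  rw [Submodule.orthogonal_orthogonal] at hperp
  obtain ⟨t, ht⟩ := Submodule.mem_span_singleton.1 hperp
  unfold Par
  rw [← ht, real_inner_smul_right, smul_smul, mul_comm]

lemma ae_scale {c : ℝ} (hc : c ≠ 0) {P : ℝ → Prop} (h : ∀ᵐ s, P s) : ∀ᵐ s, P (s * c) := by
  have : Measure.QuasiMeasurePreserving (fun s : ℝ => s * c) volume volume := by
    refine ⟨by fun_prop, ?_⟩
    rw [Real.map_volume_mul_right hc]
    exact Measure.smul_absolutelyContinuous
  exact this.ae h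

/-- Any two generic points are related along the line joining them. -/
lemma two_point {n : ℕ} {f : En n → ℝ} {f' : En n → En n} (hm : Measurable f)
    (hm' : Measurable f') (hW : MemW f f') (hPS : IsPSMeasure f f') :
    ∀ᵐ x : En n, ∀ᵐ y : En n, Par (y - x) (minor f f' x y) := by
  have hS : MeasurableSet {q : En n × En n | Par q.2 (minor f f' q.1 (q.1 + q.2))} := by
    have ha : Measurable (fun q : En n × En n => q.1 + q.2) := by fun_prop
    have h1 : Measurable (fun q : En n × En n => minor f f' q.1 (q.1 + q.2)) :=
      ((hm.comp measurable_fst).smul (hm'.comp ha)).sub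
        ((hm.comp ha).smul (hm'.comp measurable_fst))
    have h2 : Measurable (fun q : En n × En n => ⟪q.2, q.2⟫) := measurable_snd.inner measurable_snd
    have h3 : Measurable (fun q : En n × En n => ⟪q.2, minor f f' q.1 (q.1 + q.2)⟫) :=
      measurable_snd.inner h1
    exact measurableSet_eq_fun (h2.smul h1) (h3.smul measurable_snd)
  have hz : ∀ z : En n, z ≠ 0 → ∀ᵐ x : En n, ∀ᵐ s : ℝ, Par (s • z) (minor f f' x (x + s • z)) := by
    intro z hz
    have hn : ‖z‖ ≠ 0 := norm_ne_zero_iff.2 hz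
    filter_upwards [dir_relation hm hm' hW hPS (v := ‖z‖⁻¹ • z) (by
      rw [norm_smul, norm_inv, norm_norm, inv_mul_cancel₀ hn])] with x hx
    filter_upwards [ae_scale hn hx] with s hs
    have e : (s * ‖z‖) • ‖z‖⁻¹ • z = s • z := by
      rw [smul_smul, mul_assoc, mul_inv_cancel₀ hn, mul_one]
    rw [e] at hs
    have := par_smul hs (s * ‖z‖)
    rwa [e] at this
  -- increments `z` for which the relation holds at almost every base point
  set Q : En n → Prop := fun z => ∀ᵐ x : En n, Par z (minor f f' x (x + z)) with hQ
  have hQm : MeasurableSet {z | Q z} := measurableSet_ae (ν := (volume : Measure (En n)))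
    (s := {q : En n × En n | Par q.1 (minor f f' q.2 (q.2 + q.1))}) (measurable_swap hS)
  have h1 : ∀ z : En n, ∀ᵐ s : ℝ, Q (s • z) := by
    intro z
    by_cases hz0 : z = 0
    · refine Eventually.of_forall fun s => Eventually.of_forall fun x => ?_
      simp [hz0, Par]
    · refine (Measure.ae_ae_comm (μ := (volume : Measure (En n))) (ν := (volume : Measure ℝ))
        (p := fun x s => Par (s • z) (minor f f' x (x + s • z))) ?_).1 (hz z hz0)
      have : Measurable (fun q : En n × ℝ => (q.1, q.2 • z)) := by fun_prop
      exact this hS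
  have h2 : ∀ᵐ s : ℝ, ∀ᵐ z : En n, Q (s • z) := by
    refine (Measure.ae_ae_comm (μ := (volume : Measure (En n))) (ν := (volume : Measure ℝ))
      (p := fun z s => Q (s • z)) ?_).1 (Eventually.of_forall h1)
    have : Measurable (fun q : En n × ℝ => q.2 • q.1) := by fun_prop
    exact this hQm
  have hne : ∀ᵐ s : ℝ, s ≠ 0 := by simp [ae_iff]
  obtain ⟨s, hs, hs0⟩ := (h2.and hne).exists
  have h3 : ∀ᵐ z : En n, Q z := by
    have hq : Measure.QuasiMeasurePreserving (fun z : En n => s⁻¹ • z) volume volume := by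
      refine ⟨by fun_prop, ?_⟩
      rw [Measure.map_addHaar_smul _ (inv_ne_zero hs0)]
      exact Measure.smul_absolutelyContinuous
    filter_upwards [hq.ae hs] with z hz
    rwa [smul_smul, mul_inv_cancel₀ hs0, one_smul] at hz
  have h4 : ∀ᵐ x : En n, ∀ᵐ z : En n, Par z (minor f f' x (x + z)) :=
    (Measure.ae_ae_comm (μ := (volume : Measure (En n))) (ν := (volume : Measure (En n)))
      (p := fun z x => Par z (minor f f' x (x + z))) (measurable_swap hS)).1 h3
  filter_upwards [h4] with x hx
  have hq := (measurePreserving_add_right (volume : Measure (En n)) (-x)).quasiMeasurePreserving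
  filter_upwards [hq.ae hx] with y hy
  rw [← sub_eq_add_neg] at hy
  simpa using hy

lemma par_exists {n : ℕ} {z u : En n} (hz : z ≠ 0) (h : Par z u) : ∃ t : ℝ, u = t • z := by
  refine ⟨⟪z, z⟫⁻¹ * ⟪z, u⟫, ?_⟩
  have hzz : ⟪z, z⟫ ≠ 0 := inner_self_ne_zero.2 hz
  unfold Par at h
  rw [mul_smul, ← h, smul_smul, inv_mul_cancel₀ hzz, one_smul]

/-- The logarithmic gradient of `f` is an affine field `x ↦ κ x + b`. -/
lemma log_grad_affine {n : ℕ} (hn : 2 ≤ n) {f : En n → ℝ} {f' : En n → En n} (hm : Measurable f)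
    (hm' : Measurable f') (hW : MemW f f') (hPS : IsPSMeasure f f') (hf : ¬ f =ᵐ[volume] 0) :
    ∃ (κ : ℝ) (b : En n), ∀ᵐ y, f' y = f y • (κ • y + b) := by
  have htp := two_point hm hm' hW hPS
  have hfin : Module.finrank ℝ (En n) = n := by simp
  have hnt : Nontrivial (En n) := Module.nontrivial_of_finrank_pos (R := ℝ) (by omega)
  have hfr : ∃ᶠ x in ae (volume : Measure (En n)), f x ≠ 0 := by
    intro hcon
    exact hf (hcon.mono fun x hx => not_not.1 hx)
  obtain ⟨x0, hx0, h0⟩ := (hfr.and_eventually htp).exists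
  have hne : ∀ᵐ x : En n, x ≠ x0 := by simp [ae_iff]
  obtain ⟨x1, hx1, h1, h01, h10⟩ := (hfr.and_eventually (htp.and (h0.and hne))).exists
  set e := x1 - x0 with he
  have he0 : e ≠ 0 := sub_ne_zero.2 h10
  obtain ⟨γ, hγ⟩ := par_exists he0 h01
  set p0 := (f x0)⁻¹ • f' x0 with hp0
  set κ := γ / (f x0 * f x1) with hκ
  have hp1 : f' x1 = f x1 • (p0 + κ • e) := by
    have : f' x1 = (f x0)⁻¹ • (f x1 • f' x0 + γ • e) := by
      rw [← hγ, minor, add_sub_cancel, smul_smul, inv_mul_cancel₀ hx0, one_smul]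
    rw [this, hp0, hκ]
    simp only [smul_add, smul_smul]
    congr 2 <;> field_simp
  have hline : ∀ᵐ y : En n, y - x0 ∉ Submodule.span ℝ {e} := by
    have hnull : volume ((Submodule.span ℝ {e} : Submodule ℝ (En n)) : Set (En n)) = 0 := by
      refine Measure.addHaar_submodule _ _ fun htop => ?_
      have h1 := finrank_span_singleton (K := ℝ) he0
      rw [htop, finrank_top, hfin] at h1
      omega
    have hq := (measurePreserving_sub_right (volume : Measure (En n)) x0).quasiMeasurePreserving
    have : ∀ᵐ y : En n, y ∉ Submodule.span ℝ {e} := by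
      rw [ae_iff]; simpa using hnull
    exact hq.ae this
  refine ⟨κ, p0 - κ • x0, ?_⟩
  filter_upwards [h0, h1, hline] with y e0 e1 hy
  have hy0 : y - x0 ≠ 0 := fun h => hy (by rw [h]; exact Submodule.zero_mem _)
  have hy1 : y - x1 ≠ 0 := fun h => hy (by
    rw [show y - x0 = e by rw [he, ← sub_eq_zero.1 h]]; exact Submodule.mem_span_singleton_self e)
  obtain ⟨α, hα⟩ := par_exists hy0 e0
  obtain ⟨β, hβ⟩ := par_exists hy1 e1
  have g0 : f' y = f y • p0 + ((f x0)⁻¹ * α) • (y - x0) := by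
    rw [mul_smul, ← hα, minor, smul_sub (f x0)⁻¹, inv_smul_smul₀ hx0, smul_comm (f x0)⁻¹,
      ← hp0]; abel
  have g1 : f' y = f y • (p0 + κ • e) + ((f x1)⁻¹ * β) • (y - x1) := by
    rw [mul_smul, ← hβ, minor, smul_sub (f x1)⁻¹, inv_smul_smul₀ hx1, smul_comm (f x1)⁻¹, hp1,
      inv_smul_smul₀ hx1]; abel
  set α' := (f x0)⁻¹ * α
  set β' := (f x1)⁻¹ * β
  have hye : y - x1 = (y - x0) - e := by rw [he]; abel
  rw [hye] at g1
  have hrel : (f y * κ - β') • e = (α' - β') • (y - x0) := by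
    have : f y • p0 + α' • (y - x0) = f y • (p0 + κ • e) + β' • ((y - x0) - e) := g0.symm.trans g1
    rw [← sub_eq_zero] at this ⊢
    rw [← neg_eq_zero, ← this]
    module
  have hαβ : α' = β' := by
    by_contra hcon
    have hs : α' - β' ≠ 0 := sub_ne_zero.2 hcon
    apply hy
    rw [Submodule.mem_span_singleton]
    refine ⟨(α' - β')⁻¹ * (f y * κ - β'), ?_⟩
    rw [mul_smul, hrel, smul_smul, inv_mul_cancel₀ hs, one_smul]
  have hβκ : f y * κ = β' := by
    rw [hαβ, sub_self, zero_smul] at hrel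
    exact sub_eq_zero.1 ((smul_eq_zero.1 hrel).resolve_right he0)
  rw [g0, hαβ, ← hβκ]
  simp only [smul_add, smul_sub, smul_smul]
  abel

/-! ### Densities with affine logarithmic gradient -/

/-- The quadratic exponent `κ|x|²/2 + ⟨b, x⟩` of the density. -/
def quad {n : ℕ} (κ : ℝ) (b x : En n) : ℝ := κ / 2 * ⟪x, x⟫ + ⟪b, x⟫

lemma contDiff_quad {n : ℕ} (κ : ℝ) (b : En n) {m : WithTop ℕ∞} : ContDiff ℝ m (quad κ b) := by
  exact (contDiff_const.mul (contDiff_id.inner ℝ contDiff_id)).add (contDiff_const.inner ℝ contDiff_id)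

lemma fderiv_exp_quad {n : ℕ} (κ : ℝ) (b x w : En n) :
    fderiv ℝ (fun y => Real.exp (-quad κ b y)) x w =
      -(Real.exp (-quad κ b x) * ⟪w, κ • x + b⟫) := by
  have hl : HasDerivAt (fun t : ℝ => x + t • w) w 0 := by
    simpa using ((hasDerivAt_id (0 : ℝ)).smul_const w).const_add x
  have hd : DifferentiableAt ℝ (fun y => Real.exp (-quad κ b y)) x :=
    ((contDiff_quad κ b (m := 1)).neg.exp).differentiable (by simp) x
  have h1 : HasDerivAt (fun t : ℝ => Real.exp (-quad κ b (x + t • w)))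
      (fderiv ℝ (fun y => Real.exp (-quad κ b y)) x w) 0 := by
    have h0 : HasFDerivAt (fun y => Real.exp (-quad κ b y))
        (fderiv ℝ (fun y => Real.exp (-quad κ b y)) x) (x + (0 : ℝ) • w) := by
      simpa using hd.hasFDerivAt
    exact h0.comp_hasDerivAt (0 : ℝ) hl
  have hq : HasDerivAt (fun t : ℝ => quad κ b (x + t • w)) ⟪w, κ • x + b⟫ 0 := by
    have := ((hl.inner ℝ hl).const_mul (κ / 2)).add ((hasDerivAt_const (0 : ℝ) b).inner ℝ hl)
    refine this.congr_deriv ?_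
    simp only [zero_smul, add_zero, inner_zero_left, inner_add_right, real_inner_smul_right,
      real_inner_comm x w, real_inner_comm b w]
    ring
  have h2 := hq.neg.exp
  have := h1.unique h2
  rw [this]; simp

/-- A density with affine logarithmic gradient is the exponential of a quadratic polynomial. -/
lemma eq_exp_quad {n : ℕ} {f : En n → ℝ} {f' : En n → En n} (hm : Measurable f)
    (hW : MemW f f') (hf : ¬ f =ᵐ[volume] 0) {κ : ℝ} {b : En n}
    (hlog : ∀ᵐ y, f' y = f y • (κ • y + b)) :
    ∃ C : ℝ, 0 < C ∧ ∀ᵐ x, f x = C * Real.exp (quad κ b x) := by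
  set E : En n → ℝ := fun y => Real.exp (-quad κ b y) with hE
  have hEs : ContDiff ℝ 1 E := (contDiff_quad κ b).neg.exp
  have hfl : LocallyIntegrable f := hW.2.1.locallyIntegrable
  set g : En n → ℝ := fun x => f x * E x with hg
  have hgm : Measurable g := hm.mul hEs.continuous.measurable
  have hgl : LocallyIntegrable g := by
    rw [locallyIntegrable_iff]
    intro k hk
    exact (hfl.integrableOn_isCompact hk).mul_continuousOn hEs.continuous.continuousOn hk
  have hweak : ∀ w : En n, ∀ ψ : En n → ℝ, ContDiff ℝ 1 ψ → HasCompactSupport ψ →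
      ∫ x, g x * fderiv ℝ ψ x w = - ∫ x, ψ x * (0 : ℝ) := by
    intro w ψ hψ hc
    have hi := ibp_dir hW.2.2 w (hψ.mul hEs) hc.mul_right
    have e1 : ∀ x, f x * fderiv ℝ (fun y => ψ y * E y) x w =
        g x * fderiv ℝ ψ x w - ψ x * E x * (f x * ⟪w, κ • x + b⟫) := by
      intro x
      rw [fderiv_fun_mul (hψ.differentiable (by simp) x) (hEs.differentiable (by simp) x)]
      simp only [add_apply, smul_apply, smul_eq_mul, hE,
        fderiv_exp_quad, hg]
      ring
    have e2 : ∫ x, ψ x * E x * ⟪w, f' x⟫ = ∫ x, ψ x * E x * (f x * ⟪w, κ • x + b⟫) := by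
      refine integral_congr_ae ?_
      filter_upwards [hlog] with x hx
      rw [hx, real_inner_smul_right]
    have i1 : Integrable (fun x => g x * fderiv ℝ ψ x w) := by
      have := hgl.integrable_smul_right_of_hasCompactSupport (g := fun x => fderiv ℝ ψ x w)
        ((hψ.continuous_fderiv (by simp)).clm_apply continuous_const)
        (hc.fderiv_apply (𝕜 := ℝ) w)
      simpa only [smul_eq_mul] using this
    have i2 : Integrable (fun x => ψ x * E x * (f x * ⟪w, κ • x + b⟫)) := by
      have := hfl.integrable_smul_right_of_hasCompactSupport
        (g := fun x => ψ x * (E x * ⟪w, κ • x + b⟫))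
        (hψ.continuous.mul (hEs.continuous.mul (by fun_prop))) hc.mul_right
      refine this.congr (Eventually.of_forall fun x => ?_)
      simp only [smul_eq_mul]; ring
    have hi' : ∫ x, f x * fderiv ℝ (fun y => ψ y * E y) x w =
      - ∫ x, ψ x * E x * ⟪w, f' x⟫ := hi
    simp only [e1] at hi'
    rw [integral_sub i1 i2, e2] at hi'
    simp only [mul_zero, integral_zero, neg_zero]
    linarith
  have htr : ∀ z : En n, ∀ᵐ x, g (x + z) = g x := by
    intro z
    have := weak_translation z hgl (gw := fun _ => (0 : ℝ)) (locallyIntegrable_const 0) (hweak z)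
      zero_le_one
    filter_upwards [this] with x hx
    simpa [sub_eq_zero] using hx
  have hfub : ∀ᵐ x : En n, ∀ᵐ z : En n, g (x + z) = g x := by
    refine (Measure.ae_ae_comm (μ := (volume : Measure (En n))) (ν := (volume : Measure (En n)))
      (p := fun z x => g (x + z) = g x) ?_).1 (Eventually.of_forall htr)
    exact measurableSet_eq_fun (hgm.comp (by fun_prop : Measurable
      (fun q : En n × En n => q.2 + q.1))) (hgm.comp measurable_snd)
  have hfr : ∃ᶠ x in ae (volume : Measure (En n)), f x ≠ 0 := by
    intro hcon
    exact hf (hcon.mono fun x hx => not_not.1 hx)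
  obtain ⟨x0, hx0, h0⟩ := (hfr.and_eventually hfub).exists
  refine ⟨g x0, mul_pos (lt_of_le_of_ne (hW.1 x0) hx0.symm) (Real.exp_pos _), ?_⟩
  have hq := (measurePreserving_add_right (volume : Measure (En n)) (-x0)).quasiMeasurePreserving
  filter_upwards [hq.ae h0] with y hy
  have hy' : g y = g x0 := by rw [← hy]; congr 1; abel
  rw [← hy', hg]
  simp only [hE]
  rw [mul_assoc, ← Real.exp_add, neg_add_cancel, Real.exp_zero, mul_one]

/-! ### Representatives and conclusion -/

lemma perim_congr_dens {n : ℕ} {f g : En n → ℝ} {f' g' : En n → En n} (h : f =ᵐ[volume] g)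
    (h' : f' =ᵐ[volume] g') (E : Set (En n)) : perim f f' univ E = perim g g' univ E := by
  unfold perim bvVar
  refine iSup_congr fun φ => iSup_congr fun _ => ?_
  congr 1
  rw [setIntegral_univ, setIntegral_univ]
  refine integral_congr_ae ?_
  filter_upwards [h, h'] with x hx hx'
  rw [hx, hx']

/-- The symmetral depends, up to null sets, only on the a.e. class of the density. -/
lemma ehrhardSymm_congr_dens {n : ℕ} {f g : En n → ℝ} (h : f =ᵐ[volume] g) (v : En n)
    (E : Set (En n)) : ehrhardSymm f v E =ᵐ[volume] ehrhardSymm g v E := by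
  filter_upwards [ae_line v h] with x hx
  refine propext ?_
  have : fiberMeasure f (x - ⟪x, v⟫ • v) v = fiberMeasure g (x - ⟪x, v⟫ • v) v := by
    refine withDensity_congr_ae ?_
    have hq := (measurePreserving_add_left (volume : Measure ℝ) (-⟪x, v⟫)).quasiMeasurePreserving
    filter_upwards [hq.ae hx] with t ht
    have e : x - ⟪x, v⟫ • v + t • v = x + (-⟪x, v⟫ + t) • v := by module
    rw [e, ht]
  change _ ∈ ehrhard1D _ _ _ ↔ _ ∈ ehrhard1D _ _ _
  rw [this]

lemma memW_congr {n : ℕ} {f g : En n → ℝ} {f' g' : En n → En n} (h : f =ᵐ[volume] g)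
    (h' : f' =ᵐ[volume] g') (h0 : ∀ x, 0 ≤ g x) (hW : MemW f f') : MemW g g' := by
  refine ⟨h0, hW.2.1.congr h, ?_, ?_, ?_⟩
  · exact (hW.2.1.congr h).locallyIntegrable
  · rw [locallyIntegrable_iff]
    intro k hk
    exact (hW.2.2.2.1.integrableOn_isCompact hk).congr (ae_restrict_of_ae h')
  · intro φ hφ hc
    have e1 : ∫ x, g x * dvg φ x = ∫ x, f x * dvg φ x :=
      integral_congr_ae (h.mono fun x hx => by simp only [hx])
    have e2 : ∫ x, ⟪φ x, g' x⟫ = ∫ x, ⟪φ x, f' x⟫ :=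
      integral_congr_ae (h'.mono fun x hx => by simp only [hx])
    rw [e1, e2, hW.2.2.2.2 φ hφ hc]

/-- Being a PS measure depends only on the a.e. classes of the density and its gradient. -/
lemma isPS_congr {n : ℕ} {f g : En n → ℝ} {f' g' : En n → En n} (h : f =ᵐ[volume] g)
    (h' : f' =ᵐ[volume] g') (hPS : IsPSMeasure f f') : IsPSMeasure g g' := by
  intro v hv E hE hfin
  rw [← perim_congr_dens h h'] at hfin
  have := hPS v hv E hE hfin
  rwa [perim_congr_set (ehrhardSymm_congr_dens h v E), perim_congr_dens h h',
    perim_congr_dens h h'] at this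

lemma integrable_exp_quad {κ : ℝ} (hκ : κ < 0) (β : ℝ) :
    Integrable (fun t : ℝ => Real.exp (κ / 2 * t ^ 2 + β * t)) := by
  have h1 := ((integrable_exp_neg_mul_sq (b := -κ / 2) (by linarith)).comp_add_right
    (β / κ)).const_mul (Real.exp (-β ^ 2 / (2 * κ)))
  refine h1.congr (Eventually.of_forall fun t => ?_)
  simp only [← Real.exp_add]
  congr 1
  have := hκ.ne
  field_simp
  ring

lemma hasWeakDeriv_of_contDiff {g : ℝ → ℝ} (hg : ContDiff ℝ 1 g) : HasWeakDeriv g (deriv g) := by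
  have hd : Continuous (deriv g) := hg.continuous_deriv (by simp)
  refine ⟨hg.continuous.locallyIntegrable, hd.locallyIntegrable, fun φ hφ hc => ?_⟩
  have hφd : Continuous (deriv φ) := hφ.continuous_deriv (by simp)
  have := integral_mul_deriv_eq_deriv_mul_of_integrable (u := g) (v := φ) (u' := deriv g)
    (v' := deriv φ) (fun x _ => (hg.differentiable (by simp) x).hasDerivAt)
    (fun x _ => (hφ.differentiable (by simp) x).hasDerivAt)
    ((hg.continuous.mul hφd).integrable_of_hasCompactSupport hc.deriv.mul_left)
    ((hd.mul hφ.continuous).integrable_of_hasCompactSupport hc.mul_left)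
    ((hg.continuous.mul hφ.continuous).integrable_of_hasCompactSupport hc.mul_left)
  rw [this]
  simp only [mul_comm]

/-- If `κ ≥ 0` then `f(x) + f(-x)` is bounded below by a positive constant, hence not integrable. -/
lemma kappa_neg {n : ℕ} (hn : 2 ≤ n) {f : En n → ℝ} (hfi : Integrable f) {C κ : ℝ} {b : En n}
    (hC : 0 < C) (h : ∀ᵐ x, f x = C * Real.exp (quad κ b x)) : κ < 0 := by
  by_contra hκ
  push Not at hκ
  have hnt : Nontrivial (En n) := Module.nontrivial_of_finrank_pos (R := ℝ) (by simp; omega)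
  have hi : Integrable (fun x => f x + f (-x)) := hfi.add hfi.comp_neg
  have hneg : ∀ᵐ x : En n, f (-x) = C * Real.exp (quad κ b (-x)) :=
    (Measure.measurePreserving_neg (volume : Measure (En n))).quasiMeasurePreserving.ae h
  have hc : Integrable (fun _ : En n => C) := by
    refine hi.mono' aestronglyMeasurable_const ?_
    filter_upwards [h, hneg] with x hx hx'
    rw [Real.norm_eq_abs, abs_of_pos hC, hx, hx', ← mul_add]
    -- one of the two values `±⟨b, x⟩` is nonnegative
    have hq : 0 ≤ κ / 2 * ⟪x, x⟫ := mul_nonneg (by linarith) real_inner_self_nonneg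
    have e1 : 1 ≤ Real.exp (quad κ b x) + Real.exp (quad κ b (-x)) := by
      rcases le_total 0 ⟪b, x⟫ with hb | hb
      · have : 1 ≤ Real.exp (quad κ b x) := Real.one_le_exp (by unfold quad; linarith)
        have := Real.exp_pos (quad κ b (-x))
        linarith
      · have : 1 ≤ Real.exp (quad κ b (-x)) := Real.one_le_exp (by
          unfold quad; rw [inner_neg_neg, inner_neg_right]; linarith)
        have := Real.exp_pos (quad κ b x)
        linarith
    nlinarith
  rw [integrable_const_iff] at hc
  rcases hc with hc | hc
  · exact hC.ne' hc
  · have := hc.measure_univ_lt_top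
    simp at this

/-- A Gaussian density splits in every orthonormal basis; the constant is shared evenly among the
factors. -/
lemma gaussian_conclusion {n : ℕ} (hn : 2 ≤ n) {f : En n → ℝ} (hfi : Integrable f) {C κ : ℝ}
    {β : En n} (hC : 0 < C) (h : ∀ᵐ x, f x = C * Real.exp (quad κ β x)) :
    (∀ b : OrthonormalBasis (Fin n) ℝ (En n), ∃ F : Fin n → ℝ → ℝ,
          (∀ i, Integrable (F i) volume ∧ (∃ Fd : ℝ → ℝ, HasWeakDeriv (F i) Fd) ∧
            ∀ t : ℝ, 0 < F i t) ∧
          ∀ᵐ x ∂(volume : Measure (En n)), f x = ∏ i, F i ⟪x, b i⟫) ∧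
        ∃ g : En n → ℝ, Continuous g ∧ (∀ x, 0 < g x) ∧ f =ᵐ[(volume : Measure (En n))] g := by
  have hκ := kappa_neg hn hfi hC h
  refine ⟨fun b => ?_, fun x => C * Real.exp (quad κ β x),
    continuous_const.mul (contDiff_quad κ β (m := 1)).continuous.rexp,
    fun x => mul_pos hC (Real.exp_pos _), h⟩
  refine ⟨fun i t => C ^ ((n : ℝ)⁻¹) * Real.exp (κ / 2 * t ^ 2 + ⟪β, b i⟫ * t), fun i => ⟨?_, ?_, ?_⟩,
    ?_⟩
  · exact (integrable_exp_quad hκ _).const_mul _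
  · exact ⟨_, hasWeakDeriv_of_contDiff (by fun_prop)⟩
  · exact fun t => mul_pos (Real.rpow_pos_of_pos hC _) (Real.exp_pos _)
  · filter_upwards [h] with x hx
    rw [hx, Finset.prod_mul_distrib, ← Real.exp_sum, Finset.sum_add_distrib, ← Finset.mul_sum,
      Finset.prod_const, Finset.card_univ, Fintype.card_fin, ← Real.rpow_natCast,
      ← Real.rpow_mul hC.le, inv_mul_cancel₀ (by positivity), Real.rpow_one]
    congr 2
    unfold quad
    congr 1
    · rw [← b.sum_inner_mul_inner x x]
      congr 1
      exact Finset.sum_congr rfl fun i _ => by rw [real_inner_comm x (b i)]; ring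
    · rw [← b.sum_inner_mul_inner β x]
      exact Finset.sum_congr rfl fun i _ => by rw [real_inner_comm x (b i)]

/-- **Product structure in all directions.** A PS measure `μ = f·Lⁿ ∈ 𝒲(ℝⁿ)`, `n ≥ 2`,
either has vanishing density or, in every orthonormal frame, its density splits as a
product of positive one-dimensional `L¹ ∩ W^{1,1}_loc` factors; in particular some
continuous strictly positive function represents `f` a.e. -/
theorem product_structure_all_directions {n : ℕ} (hn : 2 ≤ n)
    (f : En n → ℝ) (f' : En n → En n) (hW : MemW f f') (hPS : IsPSMeasure f f') :
    (f =ᵐ[(volume : Measure (En n))] 0) ∨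
      ((∀ b : OrthonormalBasis (Fin n) ℝ (En n), ∃ F : Fin n → ℝ → ℝ,
          (∀ i, Integrable (F i) volume ∧ (∃ Fd : ℝ → ℝ, HasWeakDeriv (F i) Fd) ∧
            ∀ t : ℝ, 0 < F i t) ∧
          ∀ᵐ x ∂(volume : Measure (En n)), f x = ∏ i, F i ⟪x, b i⟫) ∧
        ∃ g : En n → ℝ, Continuous g ∧ (∀ x, 0 < g x) ∧ f =ᵐ[(volume : Measure (En n))] g) := by
  refine or_iff_not_imp_left.2 fun hf => ?_
  -- pass to Borel measurable representatives of `f` and `f'`, keeping nonnegativity everywhere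
  have hfm : AEMeasurable f volume := hW.2.1.aestronglyMeasurable.aemeasurable
  have hfm' : AEMeasurable f' volume := hW.2.2.2.1.aestronglyMeasurable.aemeasurable
  set g : En n → ℝ := fun x => max (hfm.mk f x) 0 with hg
  have hgf : f =ᵐ[volume] g := by
    filter_upwards [hfm.ae_eq_mk] with x hx
    rw [hg]
    simp only [← hx]
    exact (max_eq_left (hW.1 x)).symm
  have hgm : Measurable g := hfm.measurable_mk.max measurable_const
  have hWg : MemW g (hfm'.mk f') := memW_congr hgf hfm'.ae_eq_mk (fun x => le_max_right _ _) hW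
  have hPSg : IsPSMeasure g (hfm'.mk f') := isPS_congr hgf hfm'.ae_eq_mk hPS
  have hg0 : ¬ g =ᵐ[volume] 0 := fun h => hf (hgf.trans h)
  obtain ⟨κ, b, hlog⟩ := log_grad_affine hn hgm hfm'.measurable_mk hWg hPSg hg0
  obtain ⟨C, hC, hexp⟩ := eq_exp_quad hgm hWg hg0 hlog
  refine gaussian_conclusion hn hW.2.1 hC (κ := κ) (β := b) ?_
  filter_upwards [hgf, hexp] with x h1 h2
  rw [h1, h2]


end
end

section
/- Let μ = f·L¹ on ℝ with the standard logistic density f(x) = 1/(e^{x/2} + e^{−x/2})². Then μ is a PS measure: for every v ∈ {−1, +1} and every measurable set E ⊆ ℝ of finite μ-perimeter, Per_μ(S_v(E)) ≤ Per_μ(E). Moreover, f is not of Gaussian form: there are no constants C ≥ 0, c > 0 and a ∈ ℝ with f(x) = C·e^{−c(x−a)²} for all x ∈ ℝ. -/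
/-!
Let `σ = Real.sigmoid` be the logistic distribution function. The density is `f = σ' = σ (1 - σ)`,
so a half-line of measure `M` has perimeter at most `f(c) = M (1 - M)`, where `c` is its endpoint
(`perim_ehrhard_le`). The PS property therefore reduces to the isoperimetric inequality
`Per(E) ≥ M (1 - M)` for every set `E` of measure `M` (`isoperimetric`).

For this inequality, the optimal test function is explicit: `φ = P / f` with
`P(x) = ∫_{-∞}^x (χ_E - M) f`. If `a`, `b` denote the measures of `E` to the left and to the right
of `x`, then `P(x) = a (1 - σ(x)) - b σ(x)` with `0 ≤ a ≤ σ(x)` and `0 ≤ b ≤ 1 - σ(x)`; hence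
`|P| ≤ σ (1 - σ) = f`, that is, `|φ| ≤ 1`. Moreover `∫_E (f φ)' = ∫_E (χ_E - M) f = M - M²`.
Since `φ` has to be `C¹` with compact support, `χ_E` is replaced by a continuous function with
values in `[0, 1]` that is close to it in `L¹(f)` (`exists_approx`), and `φ` is multiplied by wide
cutoffs (`centred_integral_le`).
-/

open MeasureTheory Set Filter
open scoped ENNReal Topology

noncomputable section

/-- The weighted variation `‖g‖_{BV_ν(ℝ)}` for `ν = f·L¹` with weak derivative `f'`. -/
noncomputable def bvVar1 (f f' : ℝ → ℝ) (g : ℝ → ℝ) : ℝ≥0∞ :=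
  ⨆ (φ : ℝ → ℝ) (_ : ContDiff ℝ 1 φ ∧ HasCompactSupport φ ∧ ∀ x, |φ x| ≤ 1),
    ENNReal.ofReal (∫ x, g x * (f x * deriv φ x + φ x * f' x))

/-- The weighted perimeter `Per_ν(E)`. -/
noncomputable def perim1 (f f' : ℝ → ℝ) (E : Set ℝ) : ℝ≥0∞ :=
  bvVar1 f f' (E.indicator fun _ => (1 : ℝ))

/-- The measure `ν = f·L¹`. -/
noncomputable def mu1 (f : ℝ → ℝ) : Measure ℝ :=
  volume.withDensity fun x => ENNReal.ofReal (f x)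

/-- `ν = f·L¹` is a perimeter symmetrization (PS) measure on `ℝ`. -/
def IsPS1 (f f' : ℝ → ℝ) : Prop :=
  ∀ v : ℝ, (v = 1 ∨ v = -1) → ∀ E : Set ℝ, NullMeasurableSet E volume →
    perim1 f f' E < ⊤ →
      perim1 f f' (ehrhard1D (mu1 f) v E) ≤ perim1 f f' E

/-! ### The logistic density -/

/-- The logistic density, written through the logistic distribution function `σ = Real.sigmoid`
as `σ (1 - σ)`; this is `σ'`. -/
def logisticDensity (x : ℝ) : ℝ := Real.sigmoid x * (1 - Real.sigmoid x)

lemma logisticDensity_eq :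
    (fun x : ℝ => 1 / (Real.exp (x / 2) + Real.exp (-(x / 2))) ^ 2) = logisticDensity := by
  funext x
  have h1 : Real.exp (-x) = Real.exp (-(x / 2)) ^ 2 := by
    rw [← Real.exp_nat_mul]; congr 1; push_cast; ring
  have h2 : Real.exp (x / 2) * Real.exp (-(x / 2)) = 1 := by
    rw [← Real.exp_add]; simp
  have hu := Real.exp_pos (-(x / 2))
  have hw := Real.exp_pos (x / 2)
  rw [logisticDensity, Real.sigmoid_def, h1]
  generalize Real.exp (-(x / 2)) = u at *
  generalize Real.exp (x / 2) = w at *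
  have h3 : w = 1 / u := by field_simp; linarith
  subst h3
  field_simp
  ring

lemma logisticDensity_pos (x : ℝ) : 0 < logisticDensity x :=
  mul_pos (Real.sigmoid_pos x) (by linarith [Real.sigmoid_lt_one x])

lemma hasDerivAt_sigmoid_logisticDensity (x : ℝ) :
    HasDerivAt Real.sigmoid (logisticDensity x) x := Real.hasDerivAt_sigmoid x

lemma contDiff_logisticDensity : ContDiff ℝ 1 logisticDensity := by
  have h : ContDiff ℝ 1 Real.sigmoid := contDiff_sigmoid.of_le (by simp)
  exact h.mul (contDiff_const.sub h)

lemma continuous_logisticDensity : Continuous logisticDensity :=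
  contDiff_logisticDensity.continuous

lemma integrable_logisticDensity : Integrable logisticDensity := by
  have h1 : IntegrableOn logisticDensity (Ioi 0) :=
    integrableOn_Ioi_deriv_of_nonneg' (fun x _ => hasDerivAt_sigmoid_logisticDensity x)
      (fun x _ => (logisticDensity_pos x).le) Real.tendsto_sigmoid_atTop
  have h2 : IntegrableOn logisticDensity (Iic 0) := by
    have hev : (fun x => logisticDensity (-x)) = logisticDensity := by
      funext x
      simp only [logisticDensity, Real.sigmoid_neg]
      ring
    have h3 : IntegrableOn logisticDensity (Ici 0) := by
      rwa [integrableOn_Ici_iff_integrableOn_Ioi]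
    have h4 := ((Measure.measurePreserving_neg (volume : Measure ℝ)).integrableOn_comp_preimage
      (Homeomorph.neg ℝ).measurableEmbedding).2 h3
    have h5 : logisticDensity ∘ Neg.neg = logisticDensity := hev
    simpa [h5] using h4
  have := h2.union h1
  rwa [Iic_union_Ioi, integrableOn_univ] at this

lemma integral_Iic_logisticDensity (x : ℝ) :
    ∫ t in Iic x, logisticDensity t = Real.sigmoid x := by
  have := integral_Iic_of_hasDerivAt_of_tendsto' (a := x)
    (fun t _ => hasDerivAt_sigmoid_logisticDensity t)
    integrable_logisticDensity.integrableOn Real.tendsto_sigmoid_atBot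
  simpa using this

lemma integral_Ioi_logisticDensity (x : ℝ) :
    ∫ t in Ioi x, logisticDensity t = 1 - Real.sigmoid x :=
  integral_Ioi_of_hasDerivAt_of_tendsto' (a := x)
    (fun t _ => hasDerivAt_sigmoid_logisticDensity t)
    integrable_logisticDensity.integrableOn Real.tendsto_sigmoid_atTop

lemma integral_logisticDensity : ∫ t, logisticDensity t = 1 := by
  have := integral_of_hasDerivAt_of_tendsto
    (fun t => hasDerivAt_sigmoid_logisticDensity t)
    integrable_logisticDensity Real.tendsto_sigmoid_atBot Real.tendsto_sigmoid_atTop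
  simpa using this

lemma integrable_mul_logisticDensity {h : ℝ → ℝ} (hm : AEStronglyMeasurable h volume)
    (C : ℝ) (hb : ∀ x, |h x| ≤ C) : Integrable fun x => h x * logisticDensity x :=
  integrable_logisticDensity.bdd_mul hm (c := C) (Eventually.of_forall hb)

lemma indicator_aesm {E : Set ℝ} (hE : NullMeasurableSet E volume) :
    AEStronglyMeasurable (E.indicator fun _ => (1 : ℝ)) volume :=
  aestronglyMeasurable_const.indicator₀ hE

lemma indicator_mem (E : Set ℝ) (x : ℝ) :
    0 ≤ E.indicator (fun _ => (1 : ℝ)) x ∧ E.indicator (fun _ => (1 : ℝ)) x ≤ 1 := by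
  by_cases hx : x ∈ E <;> simp [hx]

/-- The logistic measure of `E` as a real integral. -/
lemma mu1_logistic {E : Set ℝ} (hE : NullMeasurableSet E volume) :
    mu1 logisticDensity E
      = ENNReal.ofReal (∫ x, E.indicator (fun _ => (1 : ℝ)) x * logisticDensity x) := by
  have h1 : ∀ x, E.indicator (fun _ => (1 : ℝ)) x * logisticDensity x
      = E.indicator logisticDensity x := fun x => by
    by_cases hx : x ∈ E <;> simp [hx]
  simp_rw [h1]
  rw [mu1, withDensity_apply₀ _ hE, integral_indicator₀ hE,
    ofReal_integral_eq_lintegral_ofReal integrable_logisticDensity.integrableOn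
      (Eventually.of_forall fun x => (logisticDensity_pos x).le)]

/-! ### The isoperimetric inequality -/

/-- The primitive `x ↦ ∫_{-∞}^x (h - ∫ h dμ) dμ`, where `μ` is the logistic measure. -/
def centredPrimitive (h : ℝ → ℝ) (x : ℝ) : ℝ :=
  ∫ t in Iic x, (h t - ∫ s, h s * logisticDensity s) * logisticDensity t


lemma integrable_unit_mul {h : ℝ → ℝ} (hm : AEStronglyMeasurable h volume)
    (h01 : ∀ x, 0 ≤ h x ∧ h x ≤ 1) : Integrable fun x => h x * logisticDensity x :=
  integrable_mul_logisticDensity hm 1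
    fun x => abs_le.2 ⟨by linarith [(h01 x).1], (h01 x).2⟩

lemma mean_mem {h : ℝ → ℝ} (hm : AEStronglyMeasurable h volume)
    (h01 : ∀ x, 0 ≤ h x ∧ h x ≤ 1) :
    0 ≤ ∫ x, h x * logisticDensity x ∧ ∫ x, h x * logisticDensity x ≤ 1 := by
  refine ⟨integral_nonneg fun x => mul_nonneg (h01 x).1 (logisticDensity_pos x).le, ?_⟩
  rw [← integral_logisticDensity]
  exact integral_mono (integrable_unit_mul hm h01) integrable_logisticDensity
    fun x => mul_le_of_le_one_left (logisticDensity_pos x).le (h01 x).2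

lemma integrable_centred {h : ℝ → ℝ} (hc : Continuous h) (h01 : ∀ x, 0 ≤ h x ∧ h x ≤ 1)
    (m : ℝ) : Integrable fun t => (h t - m) * logisticDensity t := by
  simp_rw [sub_mul]
  exact (integrable_unit_mul hc.aestronglyMeasurable h01).sub
    (integrable_logisticDensity.const_mul m)

/-- With `a`, `b` the masses of `h` to the left and right of `x`, the primitive equals
`a (1 - σ x) - b σ x`, where `0 ≤ a ≤ σ x` and `0 ≤ b ≤ 1 - σ x`. This is why the density
`σ (1 - σ)` dominates it. -/
lemma abs_centredPrimitive_le {h : ℝ → ℝ} (hc : Continuous h) (h01 : ∀ x, 0 ≤ h x ∧ h x ≤ 1)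
    (x : ℝ) : |centredPrimitive h x| ≤ logisticDensity x := by
  have hi := integrable_unit_mul hc.aestronglyMeasurable h01
  have hsplit : (∫ t in Iic x, h t * logisticDensity t) + ∫ t in Ioi x, h t * logisticDensity t
      = ∫ t, h t * logisticDensity t := by
    have := integral_add_compl (measurableSet_Iic (a := x)) hi
    rwa [compl_Iic] at this
  have ha0 : 0 ≤ ∫ t in Iic x, h t * logisticDensity t :=
    integral_nonneg fun t => mul_nonneg (h01 t).1 (logisticDensity_pos t).le
  have hb0 : 0 ≤ ∫ t in Ioi x, h t * logisticDensity t :=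
    integral_nonneg fun t => mul_nonneg (h01 t).1 (logisticDensity_pos t).le
  have ha1 : ∫ t in Iic x, h t * logisticDensity t ≤ Real.sigmoid x := by
    rw [← integral_Iic_logisticDensity]
    exact integral_mono hi.integrableOn integrable_logisticDensity.integrableOn
      fun t => mul_le_of_le_one_left (logisticDensity_pos t).le (h01 t).2
  have hb1 : ∫ t in Ioi x, h t * logisticDensity t ≤ 1 - Real.sigmoid x := by
    rw [← integral_Ioi_logisticDensity]
    exact integral_mono hi.integrableOn integrable_logisticDensity.integrableOn
      fun t => mul_le_of_le_one_left (logisticDensity_pos t).le (h01 t).2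
  have hP : centredPrimitive h x = (∫ t in Iic x, h t * logisticDensity t)
      - (∫ t, h t * logisticDensity t) * Real.sigmoid x := by
    rw [centredPrimitive]
    simp_rw [sub_mul]
    rw [integral_sub hi.integrableOn (integrable_logisticDensity.const_mul _).integrableOn,
      integral_const_mul, integral_Iic_logisticDensity]
  rw [hP, ← hsplit, logisticDensity]
  generalize (∫ t in Iic x, h t * logisticDensity t) = a at *
  generalize (∫ t in Ioi x, h t * logisticDensity t) = b at *
  have hs0 := Real.sigmoid_pos x
  have hs1 := Real.sigmoid_lt_one x
  generalize Real.sigmoid x = s at *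
  rw [abs_le]
  constructor <;> nlinarith

lemma hasDerivAt_centredPrimitive {h : ℝ → ℝ} (hc : Continuous h)
    (h01 : ∀ x, 0 ≤ h x ∧ h x ≤ 1) (x : ℝ) :
    HasDerivAt (centredPrimitive h)
      ((h x - ∫ s, h s * logisticDensity s) * logisticDensity x) x := by
  set m := ∫ s, h s * logisticDensity s with hm
  have hi := integrable_centred hc h01 m
  have hcont : Continuous fun t => (h t - m) * logisticDensity t :=
    (hc.sub continuous_const).mul continuous_logisticDensity
  have heq : centredPrimitive h = fun y => (∫ t in Iic 0, (h t - m) * logisticDensity t)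
      + ∫ t in (0 : ℝ)..y, (h t - m) * logisticDensity t := by
    funext y
    rw [← intervalIntegral.integral_Iic_sub_Iic hi.integrableOn hi.integrableOn]
    simp [centredPrimitive, hm]
  rw [heq]
  exact (hcont.integral_hasStrictDerivAt 0 x).hasDerivAt.const_add _

lemma contDiff_centredPrimitive {h : ℝ → ℝ} (hc : Continuous h)
    (h01 : ∀ x, 0 ≤ h x ∧ h x ≤ 1) : ContDiff ℝ 1 (centredPrimitive h) := by
  have hd := hasDerivAt_centredPrimitive hc h01
  rw [contDiff_one_iff_deriv]
  refine ⟨fun x => (hd x).differentiableAt, ?_⟩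
  rw [funext fun x => (hd x).deriv]
  exact (hc.sub continuous_const).mul continuous_logisticDensity

/-- The lower bound on the perimeter obtained by testing with
`φ = centredPrimitive h / logisticDensity`. This `φ` is `C¹` with `|φ| ≤ 1`, but not compactly
supported, so it is multiplied by the cutoffs `η (x / (n + 1))` and `n → ∞`. -/
lemma centred_integral_le {E : Set ℝ} (hE : NullMeasurableSet E volume) {p : ℝ}
    (hp : ∀ φ : ℝ → ℝ, ContDiff ℝ 1 φ → HasCompactSupport φ → (∀ x, |φ x| ≤ 1) →
      ∫ x, E.indicator (fun _ => (1 : ℝ)) x *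
        (logisticDensity x * deriv φ x + φ x * deriv logisticDensity x) ≤ p)
    {h : ℝ → ℝ} (hc : Continuous h) (h01 : ∀ x, 0 ≤ h x ∧ h x ≤ 1) :
    ∫ x, E.indicator (fun _ => (1 : ℝ)) x *
      ((h x - ∫ s, h s * logisticDensity s) * logisticDensity x) ≤ p := by
  set m := ∫ s, h s * logisticDensity s with hm
  have hm01 := mean_mem hc.aestronglyMeasurable h01
  rw [← hm] at hm01
  set P := centredPrimitive h with hP
  have hPd : ∀ x, HasDerivAt P ((h x - m) * logisticDensity x) x :=
    hasDerivAt_centredPrimitive hc h01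
  have hPb : ∀ x, |P x| ≤ logisticDensity x := abs_centredPrimitive_le hc h01
  have hPc : ContDiff ℝ 1 P := contDiff_centredPrimitive hc h01
  let η : ContDiffBump (0 : ℝ) := ⟨1, 2, one_pos, one_lt_two⟩
  have hηc : ContDiff ℝ 1 η := η.contDiff
  have hηd : Continuous (deriv η) := hηc.continuous_deriv le_rfl
  obtain ⟨C, hC⟩ := η.hasCompactSupport.deriv.exists_bound_of_continuous hηd
  have hC0 : 0 ≤ C := (norm_nonneg _).trans (hC 0)
  let k : ℕ → ℝ := fun n => 1 / ((n : ℝ) + 1)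
  have hk0 : ∀ n, 0 < k n := fun n => by positivity
  have hk1 : ∀ n, k n ≤ 1 := fun n => by
    simp only [k]
    rw [div_le_one (by positivity)]
    linarith [(Nat.cast_nonneg n : (0 : ℝ) ≤ n)]
  have hkt : Tendsto k atTop (𝓝 0) := tendsto_one_div_add_atTop_nhds_zero_nat
  have hkx : ∀ x, Tendsto (fun n => k n * x) atTop (𝓝 0) := fun x => by
    simpa using hkt.mul_const x
  have hηnd : ∀ n x, HasDerivAt (fun y => η (k n * y)) (deriv η (k n * x) * k n) x := by
    intro n x
    have h1 : HasDerivAt (fun y => k n * y) (k n) x := by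
      simpa using (hasDerivAt_id x).const_mul (k n)
    exact ((hηc.differentiable one_ne_zero (k n * x)).hasDerivAt).comp x h1
  let φ : ℕ → ℝ → ℝ := fun n x => η (k n * x) * (P x / logisticDensity x)
  have hφc : ∀ n, ContDiff ℝ 1 (φ n) := fun n =>
    (hηc.comp (contDiff_const.mul contDiff_id)).mul
      (hPc.div contDiff_logisticDensity fun x => (logisticDensity_pos x).ne')
  have hφs : ∀ n, HasCompactSupport (φ n) := fun n =>
    (η.hasCompactSupport.comp_homeomorph (Homeomorph.mulLeft₀ (k n) (hk0 n).ne')).mul_right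
  have hφb : ∀ n x, |φ n x| ≤ 1 := by
    intro n x
    rw [abs_mul, abs_div, abs_of_pos (logisticDensity_pos x), abs_of_nonneg η.nonneg]
    exact mul_le_one₀ η.le_one (by have := logisticDensity_pos x; positivity)
      ((div_le_one (logisticDensity_pos x)).2 (hPb x))
  -- Leibniz' rule read backwards: the test integrand is the derivative of `η_n * P`.
  have hφd : ∀ n x, logisticDensity x * deriv (φ n) x + φ n x * deriv logisticDensity x
      = deriv η (k n * x) * k n * P x
        + η (k n * x) * ((h x - m) * logisticDensity x) := by
    intro n x
    have h1 := ((contDiff_logisticDensity.differentiable one_ne_zero x).hasDerivAt).mul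
      (((hφc n).differentiable one_ne_zero x).hasDerivAt)
    have h2 : logisticDensity * φ n = fun y => η (k n * y) * P y := by
      funext y
      have := (logisticDensity_pos y).ne'
      simp only [Pi.mul_apply, φ]
      field_simp
    rw [h2] at h1
    have h3 := h1.unique ((hηnd n x).mul (hPd x))
    linarith
  have hlim : Tendsto (fun n => ∫ x, E.indicator (fun _ => (1 : ℝ)) x *
        (logisticDensity x * deriv (φ n) x + φ n x * deriv logisticDensity x)) atTop
      (𝓝 (∫ x, E.indicator (fun _ => (1 : ℝ)) x * ((h x - m) * logisticDensity x))) := by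
    simp_rw [hφd]
    refine tendsto_integral_of_dominated_convergence
      (fun x => (C + 1) * logisticDensity x) ?_ (integrable_logisticDensity.const_mul _) ?_ ?_
    · intro n
      refine (indicator_aesm hE).mul (Continuous.aestronglyMeasurable ?_)
      have := hPc.continuous
      have := η.continuous
      have := continuous_logisticDensity
      fun_prop
    · intro n
      refine Eventually.of_forall fun x => ?_
      have hf := logisticDensity_pos x
      have h1 : |deriv η (k n * x) * k n * P x| ≤ C * logisticDensity x := by
        rw [abs_mul, abs_mul, abs_of_pos (hk0 n)]
        have h5 : |deriv η (k n * x)| * k n ≤ C :=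
          (mul_le_of_le_one_right (abs_nonneg _) (hk1 n)).trans (hC _)
        exact mul_le_mul h5 (hPb x) (abs_nonneg _) hC0
      have h2 : |η (k n * x) * ((h x - m) * logisticDensity x)| ≤ logisticDensity x := by
        rw [abs_mul, abs_mul, abs_of_pos hf, abs_of_nonneg η.nonneg]
        have h6 : |h x - m| ≤ 1 := by
          have := h01 x
          rw [abs_le]; constructor <;> linarith
        calc η (k n * x) * (|h x - m| * logisticDensity x)
            ≤ 1 * (1 * logisticDensity x) := by
              gcongr
              exact η.le_one
          _ = _ := by ring
      rw [Real.norm_eq_abs, abs_mul, abs_of_nonneg (indicator_mem E x).1]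
      calc _ ≤ 1 * |deriv η (k n * x) * k n * P x
                + η (k n * x) * ((h x - m) * logisticDensity x)| := by
              gcongr
              exact (indicator_mem E x).2
        _ ≤ C * logisticDensity x + logisticDensity x := by
              rw [one_mul]
              exact (abs_add_le _ _).trans (add_le_add h1 h2)
        _ = _ := by ring
    · refine Eventually.of_forall fun x => ?_
      have h1 : Tendsto (fun n => η (k n * x)) atTop (𝓝 1) := by
        have h3 : η (0 : ℝ) = 1 :=
          η.one_of_mem_closedBall (Metric.mem_closedBall_self zero_le_one)
        rw [← h3]
        exact (η.continuous.tendsto 0).comp (hkx x)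
      have h2 : Tendsto (fun n => deriv η (k n * x) * k n) atTop (𝓝 0) := by
        have := ((hηd.tendsto 0).comp (hkx x)).mul hkt
        simpa using this
      have := ((h2.mul_const (P x)).add
        (h1.mul_const ((h x - m) * logisticDensity x))).const_mul
          (E.indicator (fun _ => (1 : ℝ)) x)
      simpa using this
  exact le_of_tendsto' hlim fun n => hp (φ n) (hφc n) (hφs n) (hφb n)

/-- Continuous functions with values in `[0, 1]` approximate indicators in `L¹` of the logistic
measure: clamp `g / f` to `[0, 1]`, where `g` approximates `χ_E f` in `L¹` of Lebesgue measure. -/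
lemma exists_approx {E : Set ℝ} (hE : NullMeasurableSet E volume) {ε : ℝ} (hε : 0 < ε) :
    ∃ h : ℝ → ℝ, Continuous h ∧ (∀ x, 0 ≤ h x ∧ h x ≤ 1) ∧
      ∫ x, |E.indicator (fun _ => (1 : ℝ)) x - h x| * logisticDensity x ≤ ε := by
  have hi := integrable_unit_mul (indicator_aesm hE) (indicator_mem E)
  obtain ⟨g, -, hg, hgc, hgi⟩ := hi.exists_hasCompactSupport_integral_sub_le hε
  refine ⟨fun x => max 0 (min 1 (g x / logisticDensity x)), ?_, ?_, ?_⟩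
  · exact continuous_const.max (continuous_const.min
      (hgc.div continuous_logisticDensity fun x => (logisticDensity_pos x).ne'))
  · intro x
    exact ⟨le_max_left _ _, max_le zero_le_one (min_le_left _ _)⟩
  · refine le_trans (integral_mono_of_nonneg (Eventually.of_forall fun x =>
      mul_nonneg (abs_nonneg _) (logisticDensity_pos x).le) (hi.sub hgi).norm
      (Eventually.of_forall fun x => ?_)) hg
    have hf := logisticDensity_pos x
    have h1 : |E.indicator (fun _ => (1 : ℝ)) x - max 0 (min 1 (g x / logisticDensity x))|
        ≤ |E.indicator (fun _ => (1 : ℝ)) x - g x / logisticDensity x| := by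
      obtain ⟨h0, h1⟩ := indicator_mem E x
      generalize E.indicator (fun _ => (1 : ℝ)) x = i at *
      generalize g x / logisticDensity x = q at *
      rcases le_total 1 q with hq | hq <;> rcases le_total q 0 with hq' | hq' <;>
        simp only [hq, hq', min_eq_left, min_eq_right, max_eq_left, max_eq_right, zero_le_one] <;>
        rw [abs_le'] <;> constructor <;> cases abs_cases (i - q) <;> linarith
    calc _ ≤ |E.indicator (fun _ => (1 : ℝ)) x - g x / logisticDensity x| * logisticDensity x := by
          dsimp only
          gcongr
      _ = |(E.indicator (fun _ => (1 : ℝ)) x - g x / logisticDensity x) * logisticDensity x| := by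
          rw [abs_mul, abs_of_pos hf]
      _ = ‖E.indicator (fun _ => (1 : ℝ)) x * logisticDensity x - g x‖ := by
          rw [Real.norm_eq_abs]
          congr 1
          field_simp

/-- The isoperimetric inequality for the logistic measure. -/
lemma isoperimetric {E : Set ℝ} (hE : NullMeasurableSet E volume)
    (hfin : perim1 logisticDensity (deriv logisticDensity) E < ⊤) :
    ENNReal.ofReal ((∫ x, E.indicator (fun _ => (1 : ℝ)) x * logisticDensity x) *
        (1 - ∫ x, E.indicator (fun _ => (1 : ℝ)) x * logisticDensity x))
      ≤ perim1 logisticDensity (deriv logisticDensity) E := by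
  have hχ := indicator_aesm hE
  have hi := integrable_unit_mul hχ (indicator_mem E)
  have hM := mean_mem hχ (indicator_mem E)
  set M := ∫ x, E.indicator (fun _ => (1 : ℝ)) x * logisticDensity x with hMdef
  rw [ENNReal.ofReal_le_iff_le_toReal hfin.ne]
  set p := (perim1 logisticDensity (deriv logisticDensity) E).toReal with hpdef
  have hp : ∀ φ : ℝ → ℝ, ContDiff ℝ 1 φ → HasCompactSupport φ → (∀ x, |φ x| ≤ 1) →
      ∫ x, E.indicator (fun _ => (1 : ℝ)) x *
        (logisticDensity x * deriv φ x + φ x * deriv logisticDensity x) ≤ p := by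
    intro φ h1 h2 h3
    rw [hpdef, ← ENNReal.ofReal_le_iff_le_toReal hfin.ne]
    exact le_iSup₂_of_le (f := fun (φ : ℝ → ℝ)
      (_ : ContDiff ℝ 1 φ ∧ HasCompactSupport φ ∧ ∀ x, |φ x| ≤ 1) =>
        ENNReal.ofReal (∫ x, E.indicator (fun _ => (1 : ℝ)) x *
          (logisticDensity x * deriv φ x + φ x * deriv logisticDensity x))) φ ⟨h1, h2, h3⟩ le_rfl
  refine le_of_forall_pos_le_add fun ε hε => ?_
  obtain ⟨h, hc, h01, happ⟩ := exists_approx hE (half_pos hε)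
  have hmain := centred_integral_le hE hp hc h01
  have hhi := integrable_unit_mul hc.aestronglyMeasurable h01
  set m := ∫ s, h s * logisticDensity s with hm
  have hDi : Integrable fun x => |E.indicator (fun _ => (1 : ℝ)) x - h x| * logisticDensity x := by
    refine integrable_mul_logisticDensity ((hχ.sub hc.aestronglyMeasurable).norm) 1 fun x => ?_
    have h1 := indicator_mem E x
    have h2 := h01 x
    rw [abs_abs, abs_le]
    constructor <;> linarith
  have hMm : m - M ≤ ε / 2 := by
    rw [hMdef, hm, ← integral_sub hhi hi]
    refine (integral_mono (hhi.sub hi) hDi fun x => ?_).trans happ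
    simp only [Pi.sub_apply]
    rw [← sub_mul, abs_sub_comm]
    exact mul_le_mul_of_nonneg_right (le_abs_self _) (logisticDensity_pos x).le
  have hχc : Integrable fun x => E.indicator (fun _ => (1 : ℝ)) x *
      ((h x - m) * logisticDensity x) :=
    (integrable_centred hc h01 m).bdd_mul hχ (c := 1) (Eventually.of_forall fun x => by
      rw [Real.norm_eq_abs, abs_of_nonneg (indicator_mem E x).1]
      exact (indicator_mem E x).2)
  have hlow : M * (1 - m) - ε / 2 ≤ ∫ x, E.indicator (fun _ => (1 : ℝ)) x *
      ((h x - m) * logisticDensity x) := by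
    have h1 : M * (1 - m) - ∫ x, E.indicator (fun _ => (1 : ℝ)) x *
        ((h x - m) * logisticDensity x) ≤ ε / 2 := by
      rw [hMdef, ← integral_mul_const, ← integral_sub (hi.mul_const _) hχc]
      refine (integral_mono ((hi.mul_const _).sub hχc) hDi fun x => ?_).trans happ
      have hf := logisticDensity_pos x
      by_cases hx : x ∈ E
      · simp only [Pi.sub_apply, hx, indicator_of_mem]
        nlinarith [le_abs_self (1 - h x)]
      · simp only [Pi.sub_apply, hx, not_false_eq_true, indicator_of_notMem]
        have := mul_nonneg (abs_nonneg (0 - h x)) hf.le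
        linarith
    linarith
  have hprod : M * (m - M) ≤ ε / 2 := by nlinarith
  linarith

/-! ### Half-lines -/

lemma sigmoid_surj {m : ℝ} (h0 : 0 < m) (h1 : m < 1) : ∃ c, Real.sigmoid c = m := by
  have : m ∈ range Real.sigmoid := by rw [Real.range_sigmoid]; exact ⟨h0, h1⟩
  exact this

lemma halfline_eq {v : ℝ} (hv : v = 1 ∨ v = -1) (c : ℝ) :
    {y : ℝ | c ≤ v * y} = if v = 1 then Ici c else Iic (-c) := by
  rcases hv with rfl | rfl
  · ext y; simp
  · rw [if_neg (by norm_num)]; ext y; simp [le_neg]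

lemma measurableSet_halfline (v c : ℝ) : MeasurableSet {y : ℝ | c ≤ v * y} :=
  measurableSet_le measurable_const (measurable_const.mul measurable_id)

lemma integral_indicator_mul {E : Set ℝ} (hE : MeasurableSet E) (u : ℝ → ℝ) :
    ∫ x, E.indicator (fun _ => (1 : ℝ)) x * u x = ∫ x in E, u x := by
  rw [← integral_indicator hE]
  congr 1
  funext x
  by_cases hx : x ∈ E <;> simp [hx]

lemma mass_halfline {v : ℝ} (hv : v = 1 ∨ v = -1) (c : ℝ) :
    mu1 logisticDensity {y | c ≤ v * y} = ENNReal.ofReal (1 - Real.sigmoid c) := by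
  rw [mu1_logistic (measurableSet_halfline v c).nullMeasurableSet,
    integral_indicator_mul (measurableSet_halfline v c), halfline_eq hv]
  split_ifs
  · rw [integral_Ici_eq_integral_Ioi, integral_Ioi_logisticDensity]
  · rw [integral_Iic_logisticDensity, Real.sigmoid_neg]

lemma test_integrand (φ : ℝ → ℝ) (hφ : ContDiff ℝ 1 φ) (x : ℝ) :
    logisticDensity x * deriv φ x + φ x * deriv logisticDensity x
      = deriv (logisticDensity * φ) x := by
  rw [deriv_mul (contDiff_logisticDensity.differentiable one_ne_zero x)
    (hφ.differentiable one_ne_zero x)]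
  ring

lemma perim_halfline_le {v : ℝ} (hv : v = 1 ∨ v = -1) (c : ℝ) :
    perim1 logisticDensity (deriv logisticDensity) {y | c ≤ v * y}
      ≤ ENNReal.ofReal (logisticDensity c) := by
  refine iSup₂_le fun φ hφ => ENNReal.ofReal_le_ofReal ?_
  obtain ⟨h1, h2, h3⟩ := hφ
  have hc1 : ContDiff ℝ 1 (logisticDensity * φ) := contDiff_logisticDensity.mul h1
  have hs : HasCompactSupport (logisticDensity * φ) := h2.mul_left
  rw [integral_indicator_mul (measurableSet_halfline v c), halfline_eq hv]
  simp_rw [test_integrand φ h1]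
  split_ifs
  · rw [integral_Ici_eq_integral_Ioi, hs.integral_Ioi_deriv_eq hc1, Pi.mul_apply]
    nlinarith [(abs_le.1 (h3 c)).1, logisticDensity_pos c]
  · rw [hs.integral_Iic_deriv_eq hc1, Pi.mul_apply]
    have : logisticDensity (-c) = logisticDensity c := by
      simp only [logisticDensity, Real.sigmoid_neg]; ring
    rw [this]
    nlinarith [(abs_le.1 (h3 (-c))).2, logisticDensity_pos c]

lemma perim_empty : perim1 logisticDensity (deriv logisticDensity) ∅ = 0 := by
  simp [perim1, bvVar1]

lemma perim_univ : perim1 logisticDensity (deriv logisticDensity) univ = 0 := by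
  refine le_antisymm (iSup₂_le fun φ hφ => ?_) (zero_le)
  obtain ⟨h1, h2, h3⟩ := hφ
  have hc1 : ContDiff ℝ 1 (logisticDensity * φ) := contDiff_logisticDensity.mul h1
  have hs : HasCompactSupport (logisticDensity * φ) := h2.mul_left
  simp_rw [test_integrand φ h1]
  have h0 : ∫ x, deriv (logisticDensity * φ) x = 0 :=
    integral_eq_zero_of_hasDerivAt_of_integrable
      (fun x => (hc1.differentiable one_ne_zero x).hasDerivAt)
      ((hc1.continuous_deriv le_rfl).integrable_of_hasCompactSupport hs.deriv)
      (hc1.continuous.integrable_of_hasCompactSupport hs)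
  simp [h0]

/-- The symmetrization of a set of logistic measure `M` is empty, the line, or a half-line whose
boundary point has density `M (1 - M)`. -/
lemma perim_ehrhard_le {v : ℝ} (hv : v = 1 ∨ v = -1) {E : Set ℝ} {M : ℝ}
    (hM : mu1 logisticDensity E = ENNReal.ofReal M) (h0 : 0 ≤ M) (h1 : M ≤ 1) :
    perim1 logisticDensity (deriv logisticDensity) (ehrhard1D (mu1 logisticDensity) v E)
      ≤ ENNReal.ofReal (M * (1 - M)) := by
  have hiff : ∀ c : ℝ, mu1 logisticDensity {y | c ≤ v * y} ≤ mu1 logisticDensity E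
      ↔ 1 - Real.sigmoid c ≤ M := fun c => by
    rw [mass_halfline hv, hM, ENNReal.ofReal_le_ofReal_iff h0]
  simp only [ehrhard1D, hiff]
  rcases h0.eq_or_lt with rfl | h0'
  · have : {t : ℝ | ∀ b : ℝ, (∀ c : ℝ, 1 - Real.sigmoid c ≤ 0 → b ≤ c) → b ≤ v * t} = ∅ := by
      refine eq_empty_of_forall_notMem fun t ht => ?_
      have := ht (v * t + 1) fun c hc => by linarith [Real.sigmoid_lt_one c]
      linarith
    rw [this, perim_empty]
    exact zero_le
  rcases h1.eq_or_lt with rfl | h1'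
  · have : {t : ℝ | ∀ b : ℝ, (∀ c : ℝ, 1 - Real.sigmoid c ≤ 1 → b ≤ c) → b ≤ v * t} = univ := by
      refine eq_univ_of_forall fun t b hb => ?_
      have := hb (b - 1) (by linarith [Real.sigmoid_pos (b - 1)])
      linarith
    rw [this, perim_univ]
    exact zero_le
  obtain ⟨c₀, hc₀⟩ := sigmoid_surj (m := 1 - M) (by linarith) (by linarith)
  have : {t : ℝ | ∀ b : ℝ, (∀ c : ℝ, 1 - Real.sigmoid c ≤ M → b ≤ c) → b ≤ v * t}
      = {t | c₀ ≤ v * t} := by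
    ext t
    constructor
    · intro ht
      exact ht c₀ fun c hc => Real.sigmoid_le_iff.1 (by linarith)
    · intro ht b hb
      exact (hb c₀ (by linarith)).trans ht
  rw [this]
  refine (perim_halfline_le hv c₀).trans (le_of_eq ?_)
  rw [logisticDensity, hc₀]
  congr 1
  ring

/-! ### Non-Gaussianity -/

/-- Evenness of the density forces `a = 0`, the value at `0` forces `C = 1 / 4`, and then Gaussian
decay at `x = 2 / c` contradicts the lower bound `exp (-|x|) / 4`. -/
lemma not_gaussian : ¬∃ C c a : ℝ, 0 ≤ C ∧ 0 < c ∧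
      ∀ x : ℝ, 1 / (Real.exp (x / 2) + Real.exp (-(x / 2))) ^ 2
        = C * Real.exp (-c * (x - a) ^ 2) := by
  rintro ⟨C, c, a, hC, hc, h⟩
  have h0 := h 0
  have hC' : C ≠ 0 := by
    rintro rfl
    norm_num at h0
  have ha : a = 0 := by
    have e1 := h 1
    have e2 := h (-1)
    have e3 : C * Real.exp (-c * (1 - a) ^ 2) = C * Real.exp (-c * (-1 - a) ^ 2) := by
      rw [← e1, ← e2, neg_div, neg_neg, add_comm]
    have e4 := Real.exp_injective (mul_left_cancel₀ hC' e3)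
    have e5 : c * a = 0 := by linarith
    exact (mul_eq_zero.1 e5).resolve_left hc.ne'
  subst ha
  have hC4 : C = 1 / 4 := by
    norm_num at h0
    linarith
  subst hC4
  have hx := h (2 / c)
  have e1 : Real.exp (2 / c / 2) + Real.exp (-(2 / c / 2)) ≤ 2 * Real.exp (1 / c) := by
    have e2 : 2 / c / 2 = 1 / c := by ring
    have e3 : Real.exp (-(1 / c)) ≤ Real.exp (1 / c) := by
      apply Real.exp_le_exp.2
      have : 0 < 1 / c := by positivity
      linarith
    rw [e2]
    linarith
  have e4 : Real.exp (-c * (2 / c - 0) ^ 2) = (Real.exp (1 / c) ^ 4)⁻¹ := by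
    rw [← Real.exp_nat_mul, ← Real.exp_neg]
    congr 1
    field_simp
    norm_num
  have e5 : 1 < Real.exp (1 / c) := Real.one_lt_exp_iff.2 (by positivity)
  have e6 : 0 < Real.exp (2 / c / 2) + Real.exp (-(2 / c / 2)) := by positivity
  rw [e4] at hx
  generalize Real.exp (2 / c / 2) + Real.exp (-(2 / c / 2)) = q at *
  generalize Real.exp (1 / c) = w at *
  have e7 : 4 * w ^ 4 = q ^ 2 := by
    field_simp at hx
    linarith
  have e8 : q ^ 2 ≤ (2 * w) ^ 2 := by gcongr
  have e9 : 1 < w ^ 2 := by nlinarith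
  nlinarith

/-- The standard logistic distribution `f(x) = (e^{x/2} + e^{-x/2})^{-2}` is a PS measure
on `ℝ`, yet it is not of Gaussian form. -/
theorem logistic_is_PS_not_Gaussian :
    IsPS1 (fun x : ℝ => 1 / (Real.exp (x / 2) + Real.exp (-(x / 2))) ^ 2)
      (deriv fun x : ℝ => 1 / (Real.exp (x / 2) + Real.exp (-(x / 2))) ^ 2) ∧
    ¬∃ C c a : ℝ, 0 ≤ C ∧ 0 < c ∧
      ∀ x : ℝ, 1 / (Real.exp (x / 2) + Real.exp (-(x / 2))) ^ 2
        = C * Real.exp (-c * (x - a) ^ 2) := by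
  rw [logisticDensity_eq]
  refine ⟨fun v hv E hE hfin => ?_, not_gaussian⟩
  obtain ⟨h0, h1⟩ := mean_mem (indicator_aesm hE) (indicator_mem E)
  exact (perim_ehrhard_le hv (mu1_logistic hE) h0 h1).trans (isoperimetric hE hfin)

end
end
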